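/- arXiv:1606.00272 — 2 statements merged into one kernel-verified Lean document; each statement's English description precedes it below -/
import Mathlib

section
/- Let R be a commutative ring and n ≥ 4 an integer. Then K₂(n,R) := ker(φ : St(n,R) → GL(n,R)) is contained in the center of St(n,R). (This is the centrality of K₂ for the simply-laced root system A_{n−1} of rank ≥ 3.) -/
open scoped commutatorElement

/-- Generators of the Steinberg group: triples (i,j,r) with i ≠ j. -/
abbrev StGen (n : ℕ) (R : Type) : Type := {p : Fin n × Fin n // p.1 ≠ p.2} × R

/-- The Steinberg relations. -/
inductive StRels (n : ℕ) (R : Type) [CommRing R] : FreeGroup (StGen n R) → Prop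
  | add (i j : Fin n) (hij : i ≠ j) (r s : R) :
      StRels n R (FreeGroup.of (⟨(i, j), hij⟩, r) * FreeGroup.of (⟨(i, j), hij⟩, s) *
        (FreeGroup.of (⟨(i, j), hij⟩, r + s))⁻¹)
  | commZero (i j h k : Fin n) (hij : i ≠ j) (hhk : h ≠ k) (hjh : j ≠ h) (hik : i ≠ k) (r s : R) :
      StRels n R ⁅(FreeGroup.of (⟨(i, j), hij⟩, r) : FreeGroup (StGen n R)), FreeGroup.of (⟨(h, k), hhk⟩, s)⁆
  | commAdd (i j k : Fin n) (hij : i ≠ j) (hjk : j ≠ k) (hik : i ≠ k) (r s : R) :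
      StRels n R (⁅(FreeGroup.of (⟨(i, j), hij⟩, r) : FreeGroup (StGen n R)), FreeGroup.of (⟨(j, k), hjk⟩, s)⁆ *
        (FreeGroup.of (⟨(i, k), hik⟩, r * s))⁻¹)

/-- The Steinberg group `St(n, R)`. -/
abbrev SteinbergGroup (n : ℕ) (R : Type) [CommRing R] : Type :=
  PresentedGroup {w | StRels n R w}

/-- The generator `x_{ij}(r)` of the Steinberg group. -/
def stx (n : ℕ) (R : Type) [CommRing R] (i j : Fin n) (hij : i ≠ j) (r : R) :
    SteinbergGroup n R :=
  PresentedGroup.of (⟨(i, j), hij⟩, r)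

open MulAut (conj)
open scoped Matrix

/-!
For `v ⬝ᵥ u = 0` and an index `m` with `v m = 0`, the transvection `1 + u vᵀ` lifts to the
Steinberg group as `X(u, v) = ⁅∏ᵢ x_{im}(uᵢ), ∏ⱼ x_{mj}(vⱼ)⁆ * ∏ⱼ x_{mj}(uₘ vⱼ)`. A Weyl element
argument shows that the lift does not depend on `m`. Choosing `m` suitably, one finds that
`x_{pq}(r)` conjugates `X(u, v)` to `X(t u, v t⁻¹)` with `t = 1 + r e_{pq}`, and that `X(u, v)` is
additive in `v`, as long as the vectors `v` have enough zero coordinates. With at least four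
indices, the Koszul vectors `uⱼ eᵢ - uᵢ eⱼ` and the relevant sums of two of them do. Hence
conjugation by `g` carries `x_{kj}(r) = X(e_k, r e_j)` to a product of lifts that depends only on
`φ(g)`, and an element `g` of the kernel commutes with every generator.
-/

section Group

variable {G : Type*} [Group G] {g a a' b : G}

theorem conj_eq_self_iff : conj g a = a ↔ Commute g a := by
  rw [MulAut.conj_apply, mul_inv_eq_iff_eq_mul]
  exact Iff.rfl

theorem commutatorElement_mul_left_of_commute (h : Commute a' b) : ⁅a * a', b⁆ = ⁅a, b⁆ := by
  rw [commutatorElement_mul_left_eq_conj_mul, commutatorElement_eq_one_iff_commute.2 h]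
  group

theorem commutatorElement_inv_inv_of_commute (ha : Commute ⁅a, b⁆ a) (hb : Commute ⁅a, b⁆ b) :
    ⁅a⁻¹, b⁻¹⁆ = ⁅a, b⁆ :=
  calc ⁅a⁻¹, b⁻¹⁆ = (b * a)⁻¹ * (⁅a, b⁆ * (b * a)) := by simp only [commutatorElement_def]; group
    _ = (b * a)⁻¹ * (b * a * ⁅a, b⁆) := by rw [(hb.mul_right ha).eq]
    _ = ⁅a, b⁆ := by group

end Group

theorem exists_ne_ne_ne {ι : Type*} [Fintype ι] (hι : 4 ≤ Fintype.card ι) (a b c : ι) :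
    ∃ m, m ≠ a ∧ m ≠ b ∧ m ≠ c := by
  classical
  have hcard : ({a, b, c} : Finset ι).card < (Finset.univ : Finset ι).card :=
    Finset.card_le_three.trans_lt hι
  obtain ⟨m, -, hm⟩ := Finset.exists_mem_notMem_of_card_lt_card hcard
  exact ⟨m, by simpa using hm⟩

section Vectors

variable {ι R : Type*} [CommRing R]

/-- The submodule of vectors `u : ι → R` whose coordinates in `s` are zero. -/
def vanishingOn (R : Type*) [CommRing R] (s : Set ι) : Submodule R (ι → R) :=
  Submodule.pi s fun _ => ⊥

theorem mem_vanishingOn {s : Set ι} {u : ι → R} : u ∈ vanishingOn R s ↔ ∀ i ∈ s, u i = 0 :=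
  Iff.rfl

theorem mem_vanishingOn_pair {m q : ι} {u : ι → R} :
    u ∈ vanishingOn R {m, q} ↔ u m = 0 ∧ u q = 0 := by
  simp [mem_vanishingOn]

variable [DecidableEq ι]

theorem single_mem_vanishingOn {s : Set ι} {i : ι} (hi : i ∉ s) (c : R) :
    Pi.single i c ∈ vanishingOn R s := by
  intro j hj
  simp [ne_of_mem_of_not_mem hj hi]

theorem vanishingOn_induction [Finite ι] {s : Set ι}
    {motive : (u : ι → R) → u ∈ vanishingOn R s → Prop}
    (zero : motive 0 (zero_mem _))
    (single : ∀ i (hi : i ∉ s) (c : R), motive (Pi.single i c) (single_mem_vanishingOn hi c))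
    (add : ∀ u v hu hv, motive u hu → motive v hv → motive (u + v) (add_mem hu hv))
    {u : ι → R} (hu : u ∈ vanishingOn R s) : motive u hu := by
  cases nonempty_fintype ι
  suffices h : ∃ hs : ∑ i, Pi.single i (u i) ∈ vanishingOn R s, motive _ hs by
    simpa only [Finset.univ_sum_single] using h.2
  refine Finset.sum_induction _ (fun v => ∃ hv : v ∈ vanishingOn R s, motive v hv) ?_ ⟨_, zero⟩ ?_
  · rintro v w ⟨hv, ihv⟩ ⟨hw, ihw⟩
    exact ⟨_, add v w hv hw ihv ihw⟩
  · intro i _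
    by_cases hi : i ∈ s
    · simpa only [mem_vanishingOn.1 hu i hi, Pi.single_zero] using ⟨zero_mem _, zero⟩
    · exact ⟨_, single i hi (u i)⟩

theorem exists_eq_add_single_add_single {m q : ι} (hmq : m ≠ q) (u : ι → R) :
    ∃ u₀ ∈ vanishingOn R {m, q}, ∃ a b, u = u₀ + Pi.single m a + Pi.single q b := by
  refine ⟨u - Pi.single m (u m) - Pi.single q (u q), ?_, u m, u q, by abel⟩
  simp [mem_vanishingOn_pair, hmq, hmq.symm]

/-- The Koszul vector `c (uⱼ eᵢ - uᵢ eⱼ)`, which is orthogonal to `u` and has at most two nonzero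
coordinates. -/
def koszul (u : ι → R) (i j : ι) (c : R) : ι → R :=
  Pi.single i (c * u j) - Pi.single j (c * u i)

theorem koszul_apply_of_ne (u : ι → R) {i j m : ι} (c : R) (hi : m ≠ i) (hj : m ≠ j) :
    koszul u i j c m = 0 := by
  simp [koszul, hi, hj]

theorem koszul_self (u : ι → R) (i : ι) (c : R) : koszul u i i c = 0 := sub_self _

theorem koszul_swap (u : ι → R) (i j : ι) (c : R) : koszul u i j c = koszul u j i (-c) := by
  simp only [koszul, neg_mul, Pi.single_neg]
  abel

theorem koszul_single_one {p q : ι} (hpq : p ≠ q) (r : R) :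
    koszul (Pi.single p 1) q p r = Pi.single q r := by
  simp [koszul, hpq.symm]

theorem koszul_add_single_of_ne (u : ι → R) {i j p : ι} (hi : p ≠ i) (hj : p ≠ j) (a c : R) :
    koszul (u + Pi.single p a) i j c = koszul u i j c := by
  simp [koszul, hi.symm, hj.symm]

theorem koszul_add_single_self (u : ι → R) {j p : ι} (hj : p ≠ j) (a c : R) :
    koszul (u + Pi.single p a) p j c = koszul u p j c - Pi.single j (c * a) := by
  simp [koszul, hj.symm, mul_add, Pi.single_add, sub_sub]

theorem koszul_add_single_self_add_single (u : ι → R) {j p : ι} (hj : p ≠ j) (q : ι) (r c : R) :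
    koszul (u + Pi.single p (r * u q)) p j c +
      Pi.single q (r * koszul (u + Pi.single p (r * u q)) p j c p) =
      koszul u p j c + koszul u q j (c * r) := by
  have hp : koszul (u + Pi.single p (r * u q)) p j c p = c * u j := by
    simp [koszul, hj, hj.symm]
  rw [hp, koszul_add_single_self u hj, koszul, koszul, mul_left_comm r c, mul_assoc, mul_assoc]
  abel

theorem koszul_dotProduct [Fintype ι] (u : ι → R) (i j : ι) (c : R) : koszul u i j c ⬝ᵥ u = 0 := by
  simp only [koszul, sub_dotProduct, single_dotProduct]
  ring

theorem one_add_single_mulVec [Fintype ι] (p q : ι) (r : R) (u : ι → R) :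
    (1 + Matrix.single p q r) *ᵥ u = u + Pi.single p (r * u q) := by
  rw [Matrix.add_mulVec, Matrix.one_mulVec, Matrix.single_mulVec]
  rfl

theorem vecMul_one_add_single [Fintype ι] (p q : ι) (r : R) (v : ι → R) :
    v ᵥ* (1 + Matrix.single p q r) = v + Pi.single q (r * v p) := by
  rw [← Matrix.mulVec_transpose, Matrix.transpose_add, Matrix.transpose_one,
    Matrix.transpose_single, one_add_single_mulVec]

end Vectors

/-- A family of elements of `G` satisfying the relations of the elementary transvections. The value
on the diagonal is fixed to be `1`, so that rows and columns are indexed by all of `ι`. -/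
structure SteinbergFamily (ι R G : Type*) [CommRing R] [Group G] where
  x : ι → ι → R → G
  x_self (i : ι) (r : R) : x i i r = 1
  x_add (i j : ι) (r s : R) : x i j (r + s) = x i j r * x i j s
  commute_x {i j h k : ι} (hjh : j ≠ h) (hik : i ≠ k) (r s : R) : Commute (x i j r) (x h k s)
  commutator_x {i j k : ι} (hij : i ≠ j) (hjk : j ≠ k) (hik : i ≠ k) (r s : R) :
    ⁅x i j r, x j k s⁆ = x i k (r * s)

namespace SteinbergFamily

variable {ι R G : Type*} [CommRing R] [Group G] (S : SteinbergFamily ι R G)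

theorem x_zero (i j : ι) : S.x i j 0 = 1 := by
  simpa using S.x_add i j 0 0

/-- The root subgroup map `r ↦ x_{ij}(r)` as a homomorphism. -/
def xHom (i j : ι) : Multiplicative R →* G where
  toFun r := S.x i j r.toAdd
  map_one' := S.x_zero i j
  map_mul' r s := S.x_add i j r.toAdd s.toAdd

theorem x_neg (i j : ι) (r : R) : S.x i j (-r) = (S.x i j r)⁻¹ :=
  map_inv (S.xHom i j) (.ofAdd r)

/-- The family obtained from the transpose-inverse symmetry `x_{ij}(r) ↦ x_{ji}(-r)`, which
exchanges rows and columns. -/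
def transpose : SteinbergFamily ι R G where
  x i j r := S.x j i (-r)
  x_self i r := S.x_self i (-r)
  x_add i j r s := by rw [neg_add, S.x_add]
  commute_x hjh hik r s := S.commute_x hik hjh (-r) (-s)
  commutator_x hij hjk hik r s := by
    rw [← commutatorElement_inv, S.commutator_x hjk.symm hij.symm hik.symm, neg_mul_neg,
      ← S.x_neg, mul_comm]

theorem transpose_x (i j : ι) (r : R) : S.transpose.x i j r = S.x j i (-r) := rfl

theorem transpose_transpose : S.transpose.transpose = S := by
  simp only [transpose, neg_neg]

theorem commute_x_x_same_col (m i j : ι) (r s : R) : Commute (S.x i m r) (S.x j m s) := by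
  obtain rfl | hi := eq_or_ne i m
  · rw [S.x_self]
    exact Commute.one_left _
  obtain rfl | hj := eq_or_ne j m
  · rw [S.x_self]
    exact Commute.one_right _
  exact S.commute_x hj.symm hi r s

theorem conj_x_x {i j k : ι} (hij : i ≠ j) (hjk : j ≠ k) (hik : i ≠ k) (r s : R) :
    conj (S.x i j r) (S.x j k s) = S.x i k (r * s) * S.x j k s := by
  rw [conj_eq_commutatorElement_mul, S.commutator_x hij hjk hik]

/-- The Weyl element attached to the pair `(m, q)`. -/
def weyl (m q : ι) : G := S.x m q 1 * S.x q m (-1) * S.x m q 1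

theorem transpose_weyl (m q : ι) : S.transpose.weyl q m = (S.weyl m q)⁻¹ := by
  simp only [weyl, transpose_x, S.x_neg, neg_neg, mul_inv_rev, inv_inv, mul_assoc]

variable [Fintype ι]

/-- The product `∏ᵢ x_{im}(uᵢ)` over the `m`-th column. -/
def col (m : ι) (u : ι → R) : G :=
  MonoidHom.noncommPiCoprod (fun i => S.xHom i m)
    (fun i j _ r s => S.commute_x_x_same_col m i j r.toAdd s.toAdd) (fun i => .ofAdd (u i))

/-- The product `∏ⱼ x_{mj}(vⱼ)` over the `m`-th row, as a column of the transposed family. -/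
def row (m : ι) (v : ι → R) : G := S.transpose.col m (-v)

theorem col_zero (m : ι) : S.col m 0 = 1 := map_one _

theorem col_add (m : ι) (u v : ι → R) : S.col m (u + v) = S.col m u * S.col m v := map_mul _ _ _

theorem col_neg (m : ι) (u : ι → R) : S.col m (-u) = (S.col m u)⁻¹ := map_inv _ _

theorem col_single [DecidableEq ι] (m i : ι) (c : R) : S.col m (Pi.single i c) = S.x i m c :=
  MonoidHom.noncommPiCoprod_mulSingle (ϕ := fun i => S.xHom i m) i (.ofAdd c)

theorem row_zero (m : ι) : S.row m 0 = 1 := by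
  rw [row, neg_zero, col_zero]

theorem row_add (m : ι) (u v : ι → R) : S.row m (u + v) = S.row m u * S.row m v := by
  rw [row, neg_add, col_add, row, row]

theorem row_neg (m : ι) (v : ι → R) : S.row m (-v) = (S.row m v)⁻¹ :=
  S.transpose.col_neg m (-v)

theorem row_single [DecidableEq ι] (m i : ι) (c : R) : S.row m (Pi.single i c) = S.x m i c := by
  rw [row, ← Pi.single_neg, col_single, transpose_x, neg_neg]

theorem transpose_col_neg (m : ι) (v : ι → R) : S.transpose.col m (-v) = S.row m v := rfl

theorem transpose_row_neg (m : ι) (u : ι → R) : S.transpose.row m (-u) = S.col m u := by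
  rw [row, transpose_transpose, neg_neg]

theorem commute_col_col_same (m : ι) (u v : ι → R) : Commute (S.col m u) (S.col m v) := by
  rw [Commute, SemiconjBy, ← S.col_add, ← S.col_add, add_comm]

theorem commute_row_row_same (m : ι) (u v : ι → R) : Commute (S.row m u) (S.row m v) :=
  S.transpose.commute_col_col_same m (-u) (-v)

theorem commute_x_col (m i : ι) (c : R) (u : ι → R) : Commute (S.x i m c) (S.col m u) := by
  classical
  rw [← S.col_single]
  exact S.commute_col_col_same m _ u

theorem commute_x_row (m i : ι) (c : R) (v : ι → R) : Commute (S.x m i c) (S.row m v) := by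
  classical
  rw [← S.row_single]
  exact S.commute_row_row_same m _ v

theorem commute_col_of_forall_commute {g : G} {m : ι} {s : Set ι}
    (hg : ∀ i ∉ s, ∀ c, Commute g (S.x i m c)) {u : ι → R} (hu : u ∈ vanishingOn R s) :
    Commute g (S.col m u) := by
  classical
  induction hu using vanishingOn_induction with
  | zero => rw [S.col_zero]; exact Commute.one_right g
  | single i hi c => rw [S.col_single]; exact hg i hi c
  | add u v _ _ ihu ihv => rw [S.col_add]; exact ihu.mul_right ihv

theorem commute_col_col {m q : ι} {u v : ι → R} (hu : u q = 0) (hv : v m = 0) :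
    Commute (S.col m u) (S.col q v) := by
  have hu' : u ∈ vanishingOn R {q} := by simpa [mem_vanishingOn] using hu
  have hv' : v ∈ vanishingOn R {m} := by simpa [mem_vanishingOn] using hv
  refine S.commute_col_of_forall_commute (fun i hi c => ?_) hv'
  refine (S.commute_col_of_forall_commute (fun j hj d => ?_) hu').symm
  exact S.commute_x (Ne.symm hj) hi c d

theorem commute_row_row {m q : ι} {u v : ι → R} (hu : u q = 0) (hv : v m = 0) :
    Commute (S.row m u) (S.row q v) :=
  S.transpose.commute_col_col (by simpa using hu) (by simpa using hv)

theorem conj_x_col_of_ne [DecidableEq ι] {m k l : ι} (hk : k ≠ m) (hl : l ≠ m) (hkl : k ≠ l)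
    (r : R) (u : ι → R) :
    conj (S.x k l r) (S.col m u) = S.col m (u + Pi.single k (r * u l)) := by
  induction u using Pi.single_induction with
  | zero => simp [S.col_zero]
  | add u v ihu ihv =>
    rw [S.col_add, map_mul, ihu, ihv, ← S.col_add, Pi.add_apply, mul_add, Pi.single_add,
      add_add_add_comm]
  | single i c =>
    rw [S.col_add, S.col_single, S.col_single]
    obtain rfl | hil := eq_or_ne i l
    · rw [S.conj_x_x hkl hl hk, Pi.single_eq_same]
      exact S.commute_x_x_same_col m k i _ _
    · rw [Pi.single_eq_of_ne hil.symm, mul_zero, S.x_zero, mul_one, conj_eq_self_iff]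
      exact S.commute_x hil.symm hk r c

theorem conj_x_row_of_ne [DecidableEq ι] {m k l : ι} (hk : k ≠ m) (hl : l ≠ m) (hkl : k ≠ l)
    (r : R) (v : ι → R) :
    conj (S.x k l r) (S.row m v) = S.row m (v + Pi.single l (-(r * v k))) := by
  simpa [transpose_x, row, Pi.single_neg, add_comm] using
    S.transpose.conj_x_col_of_ne hl hk hkl.symm (-r) (-v)

theorem conj_x_col {m q : ι} (hmq : m ≠ q) (r : R) {u : ι → R} (hu : u ∈ vanishingOn R {m, q}) :
    conj (S.x m q r) (S.col m u) = S.col m u * S.col q (-(r • u)) := by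
  classical
  induction hu using vanishingOn_induction with
  | zero => simp [S.col_zero]
  | single i hi c =>
    simp only [Set.mem_insert_iff, Set.mem_singleton_iff, not_or] at hi
    have hcomm : ⁅S.x m q r, S.x i m c⁆ = S.x i q (-(r * c)) := by
      rw [← commutatorElement_inv, S.commutator_x hi.1 hmq hi.2, S.x_neg, mul_comm]
    rw [← Pi.single_smul, ← Pi.single_neg, S.col_single, S.col_single,
      conj_eq_commutatorElement_mul, hcomm]
    exact S.commute_x (Ne.symm hi.2) hi.1 _ _
  | add u v hu hv ihu ihv =>
    rw [mem_vanishingOn_pair] at hu hv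
    have hvu : Commute (S.col q (-(r • u))) (S.col m v) :=
      S.commute_col_col (by simp [hu.1]) hv.2
    rw [smul_add, neg_add, S.col_add, S.col_add, map_mul, ihu, ihv, hvu.mul_mul_mul_comm]

theorem conj_x_row {m q : ι} (hmq : m ≠ q) (r : R) {v : ι → R} (hv : v ∈ vanishingOn R {m, q}) :
    conj (S.x q m r) (S.row m v) = S.row m v * S.row q (r • v) := by
  simpa [transpose_x, row] using S.transpose.conj_x_col hmq (-r) (neg_mem hv)

theorem conj_col_row {m q : ι} (hmq : m ≠ q) {u : ι → R} (hu : u ∈ vanishingOn R {m, q})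
    (v : ι → R) : conj (S.col q u) (S.row m v) = S.row m v * S.x m q (-(v ⬝ᵥ u)) := by
  classical
  induction hu using vanishingOn_induction with
  | zero => simp [S.col_zero, S.x_zero]
  | single i hi c =>
    simp only [Set.mem_insert_iff, Set.mem_singleton_iff, not_or] at hi
    rw [S.col_single, S.conj_x_row_of_ne hi.1 hmq.symm hi.2, S.row_add, S.row_single,
      dotProduct_single, mul_comm c]
  | add u w _ _ ihu ihw =>
    rw [S.col_add, map_mul, MulAut.mul_apply, ihw, map_mul, ihu,
      conj_eq_self_iff.2 (S.commute_x_col q m _ u).symm, mul_assoc, ← S.x_add, dotProduct_add,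
      neg_add]

theorem commute_row_col {m q : ι} (hmq : m ≠ q) {u v : ι → R} (hu : u ∈ vanishingOn R {m, q})
    (hvu : v ⬝ᵥ u = 0) : Commute (S.row m v) (S.col q u) := by
  apply Commute.symm
  rw [← conj_eq_self_iff, S.conj_col_row hmq hu, hvu, neg_zero, S.x_zero, mul_one]

/-- The commutator of the `m`-th column `u` and the `m`-th row `v`, which lifts `1 + u vᵀ` when
`v ⬝ᵥ u = 0` and both vectors vanish at `m`. -/
def colRowComm (m : ι) (u v : ι → R) : G := ⁅S.col m u, S.row m v⁆

theorem transpose_colRowComm_neg (m : ι) (u v : ι → R) :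
    S.transpose.colRowComm m (-v) (-u) = (S.colRowComm m u v)⁻¹ := by
  rw [colRowComm, transpose_row_neg, transpose_col_neg, colRowComm, commutatorElement_inv]

theorem commute_x_colRowComm {m q : ι} (hmq : m ≠ q) {u v : ι → R} (hu : u ∈ vanishingOn R {m, q})
    (hvu : v ⬝ᵥ u = 0) (r : R) : Commute (S.x m q r) (S.colRowComm m u v) := by
  have hcomm : Commute (S.col q (-(r • u))) (S.row m v) :=
    (S.commute_row_col hmq (neg_mem (Submodule.smul_mem _ r hu)) (by simp [hvu])).symm
  rw [← conj_eq_self_iff, colRowComm, map_commutatorElement, S.conj_x_col hmq r hu,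
    conj_eq_self_iff.2 (S.commute_x_row m q r v), commutatorElement_mul_left_of_commute hcomm]

theorem commute_x_swap_colRowComm {m q : ι} (hmq : m ≠ q) {u v : ι → R}
    (hv : v ∈ vanishingOn R {m, q}) (hvu : v ⬝ᵥ u = 0) (r : R) :
    Commute (S.x q m r) (S.colRowComm m u v) := by
  have h := S.transpose.commute_x_colRowComm hmq (neg_mem hv) (v := -u)
    (by simpa [dotProduct_comm] using hvu) (-r)
  rwa [transpose_colRowComm_neg, transpose_x, neg_neg, Commute.inv_right_iff] at h

theorem conj_weyl_col {m q : ι} (hmq : m ≠ q) {u : ι → R} (hu : u ∈ vanishingOn R {m, q}) :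
    conj (S.weyl m q) (S.col m u) = S.col q (-u) := by
  have hu' : -u ∈ vanishingOn R {q, m} := by rw [Set.pair_comm]; exact neg_mem hu
  obtain ⟨hum, huq⟩ := mem_vanishingOn_pair.1 hu
  have hcomm : Commute (S.col q (-u)) (S.col m (-u)) :=
    S.commute_col_col (by simpa using hum) (by simpa using huq)
  calc conj (S.weyl m q) (S.col m u)
      = conj (S.x m q 1) (conj (S.x q m (-1)) (S.col m u * S.col q (-u))) := by
        rw [weyl, map_mul, map_mul, MulAut.mul_apply, MulAut.mul_apply, S.conj_x_col hmq 1 hu,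
          one_smul]
    _ = conj (S.x m q 1) (S.col m u * (S.col q (-u) * S.col m (-u))) := by
        rw [map_mul (conj _), conj_eq_self_iff.2 (S.commute_x_col m q (-1) u),
          S.conj_x_col hmq.symm (-1) hu', neg_one_smul, neg_neg]
    _ = S.col q (-u) := by
        rw [hcomm.eq, S.col_neg m, mul_inv_cancel_left,
          conj_eq_self_iff.2 (S.commute_x_col q m 1 _)]

theorem conj_weyl_row {m q : ι} (hmq : m ≠ q) {v : ι → R} (hv : v ∈ vanishingOn R {m, q}) :
    conj (S.weyl m q) (S.row m v) = S.row q (-v) := by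
  rw [Set.pair_comm] at hv
  have h := S.transpose.conj_weyl_col hmq.symm hv
  rw [transpose_weyl, transpose_col_neg, map_inv, MulAut.inv_apply, MulEquiv.symm_apply_eq] at h
  rw [← h, row, neg_neg]

theorem commute_weyl_colRowComm {m q : ι} (hmq : m ≠ q) {u v : ι → R}
    (hu : u ∈ vanishingOn R {m, q}) (hv : v ∈ vanishingOn R {m, q}) (hvu : v ⬝ᵥ u = 0) :
    Commute (S.weyl m q) (S.colRowComm m u v) :=
  ((S.commute_x_colRowComm hmq hu hvu 1).mul_left
    (S.commute_x_swap_colRowComm hmq hv hvu (-1))).mul_left (S.commute_x_colRowComm hmq hu hvu 1)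

theorem colRowComm_eq_neg {m q : ι} (hmq : m ≠ q) {u v : ι → R} (hu : u ∈ vanishingOn R {m, q})
    (hv : v ∈ vanishingOn R {m, q}) (hvu : v ⬝ᵥ u = 0) :
    S.colRowComm m u v = S.colRowComm q (-u) (-v) := by
  rw [← conj_eq_self_iff.2 (S.commute_weyl_colRowComm hmq hu hv hvu), colRowComm, colRowComm,
    map_commutatorElement, S.conj_weyl_col hmq hu, S.conj_weyl_row hmq hv]

theorem commute_row_colRowComm {m q : ι} (hmq : m ≠ q) {u v w : ι → R}
    (hu : u ∈ vanishingOn R {m, q}) (hv : v ∈ vanishingOn R {m, q}) (hw : w q = 0)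
    (hvu : v ⬝ᵥ u = 0) (hwu : w ⬝ᵥ u = 0) : Commute (S.row m w) (S.colRowComm m u v) := by
  have hcol : Commute (S.row m w) (S.col q (-u)) :=
    S.commute_row_col hmq (neg_mem hu) (by simp [hwu])
  have hrow : Commute (S.row m w) (S.row q (-v)) :=
    S.commute_row_row hw (by simp [(mem_vanishingOn_pair.1 hv).1])
  rw [S.colRowComm_eq_neg hmq hu hv hvu, ← conj_eq_self_iff, colRowComm, map_commutatorElement,
    conj_eq_self_iff.2 hcol, conj_eq_self_iff.2 hrow]

theorem commute_col_colRowComm {m q : ι} (hmq : m ≠ q) {u v w : ι → R}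
    (hu : u ∈ vanishingOn R {m, q}) (hv : v ∈ vanishingOn R {m, q}) (hw : w q = 0)
    (hvu : v ⬝ᵥ u = 0) (hvw : v ⬝ᵥ w = 0) : Commute (S.col m w) (S.colRowComm m u v) := by
  have h := S.transpose.commute_row_colRowComm hmq (neg_mem hv) (neg_mem hu) (w := -w)
    (by simpa using hw) (by simpa [dotProduct_comm] using hvu)
    (by simpa [dotProduct_comm] using hvw)
  rwa [transpose_colRowComm_neg, transpose_row_neg, Commute.inv_right_iff] at h

theorem colRowComm_eq {m q : ι} (hmq : m ≠ q) {u v : ι → R} (hu : u ∈ vanishingOn R {m, q})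
    (hv : v ∈ vanishingOn R {m, q}) (hvu : v ⬝ᵥ u = 0) :
    S.colRowComm m u v = S.colRowComm q u v := by
  rw [S.colRowComm_eq_neg hmq hu hv hvu]
  rw [Set.pair_comm] at hu hv
  obtain ⟨⟨-, hum⟩, ⟨-, hvm⟩⟩ := mem_vanishingOn_pair.1 hu, mem_vanishingOn_pair.1 hv
  rw [colRowComm, S.col_neg, S.row_neg]
  exact commutatorElement_inv_inv_of_commute
    (S.commute_col_colRowComm hmq.symm hu hv hum hvu hvu).symm
    (S.commute_row_colRowComm hmq.symm hu hv hvm hvu hvu).symm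

/-- The lift of the transvection `1 + u vᵀ` through the index `m`, for `v ⬝ᵥ u = 0` and `v m = 0`.
The second factor accounts for the coordinate `u m`, which `colRowComm` ignores. -/
def transvec (m : ι) (u v : ι → R) : G := S.colRowComm m u v * S.row m (u m • v)

theorem transvec_zero (m : ι) (u : ι → R) : S.transvec m u 0 = 1 := by
  simp [transvec, colRowComm, S.row_zero]

theorem transvec_single_one [DecidableEq ι] (m : ι) (v : ι → R) :
    S.transvec m (Pi.single m 1) v = S.row m v := by
  simp [transvec, colRowComm, S.col_single, S.x_self]

theorem transvec_add_single_add_single [DecidableEq ι] {m q : ι} (hmq : m ≠ q) {u v : ι → R}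
    (hu : u ∈ vanishingOn R {m, q}) (hv : v ∈ vanishingOn R {m, q}) (hvu : v ⬝ᵥ u = 0) (a b : R) :
    S.transvec m (u + Pi.single m a + Pi.single q b) v =
      S.colRowComm m u v * S.row q (b • v) * S.row m (a • v) := by
  obtain ⟨hvm, hvq⟩ := mem_vanishingOn_pair.1 hv
  have hcol : S.col m (u + Pi.single m a + Pi.single q b) = S.x q m b * S.col m u := by
    rw [S.col_add, S.col_add, S.col_single, S.col_single, S.x_self, mul_one,
      (S.commute_x_col m q b u).eq]
  have hrow : ⁅S.x q m b, S.row m v⁆ = S.row q (b • v) := by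
    rw [← mul_left_inj (S.row m v), ← conj_eq_commutatorElement_mul, S.conj_x_row hmq b hv]
    exact S.commute_row_row hvq (by simp [hvm])
  have hconj : conj (S.x q m b) (S.colRowComm m u v) = S.colRowComm m u v :=
    conj_eq_self_iff.2 (S.commute_x_swap_colRowComm hmq hv hvu b)
  have hm : (u + Pi.single m a + Pi.single q b : ι → R) m = a := by
    simp [(mem_vanishingOn_pair.1 hu).1, hmq]
  rw [transvec, hm, colRowComm, hcol, commutatorElement_mul_left_eq_conj_mul, hrow,
    ← MulAut.conj_apply, ← colRowComm, hconj]

theorem transvec_eq_transvec {m q : ι} {u v : ι → R} (hvm : v m = 0) (hvq : v q = 0)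
    (hvu : v ⬝ᵥ u = 0) : S.transvec m u v = S.transvec q u v := by
  classical
  obtain rfl | hmq := eq_or_ne m q
  · rfl
  have hv : v ∈ vanishingOn R {m, q} := mem_vanishingOn_pair.2 ⟨hvm, hvq⟩
  obtain ⟨u₀, hu₀, a, b, rfl⟩ := exists_eq_add_single_add_single hmq u
  have hvu₀ : v ⬝ᵥ u₀ = 0 := by simpa [dotProduct_add, hvm, hvq] using hvu
  have hrows : Commute (S.row q (b • v)) (S.row m (a • v)) :=
    S.commute_row_row (by simp [hvm]) (by simp [hvq])
  rw [S.transvec_add_single_add_single hmq hu₀ hv hvu₀, add_right_comm,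
    S.colRowComm_eq hmq hu₀ hv hvu₀, mul_assoc, hrows.eq, ← mul_assoc]
  rw [Set.pair_comm] at hu₀ hv
  rw [S.transvec_add_single_add_single hmq.symm hu₀ hv hvu₀]

theorem conj_x_transvec_of_ne [DecidableEq ι] {m k l : ι} (hk : k ≠ m) (hl : l ≠ m) (hkl : k ≠ l)
    (r : R) (u v : ι → R) :
    conj (S.x k l r) (S.transvec m u v) =
      S.transvec m (u + Pi.single k (r * u l)) (v + Pi.single l (-(r * v k))) := by
  have hum : (u + Pi.single k (r * u l) : ι → R) m = u m := by simp [hk.symm]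
  rw [transvec, transvec, colRowComm, map_mul, map_commutatorElement,
    S.conj_x_col_of_ne hk hl hkl, S.conj_x_row_of_ne hk hl hkl, S.conj_x_row_of_ne hk hl hkl,
    ← colRowComm, hum, smul_add, ← Pi.single_smul, smul_neg, Pi.smul_apply, smul_eq_mul,
    smul_eq_mul, mul_left_comm]

theorem conj_x_transvec_of_mem [DecidableEq ι] {p q : ι} (hpq : p ≠ q) (r : R) {u v : ι → R}
    (hv : v ∈ vanishingOn R {p, q}) (hvu : v ⬝ᵥ u = 0) :
    conj (S.x p q r) (S.transvec p u v) = S.transvec p (u + Pi.single p (r * u q)) v := by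
  obtain ⟨hvp, hvq⟩ := mem_vanishingOn_pair.1 hv
  obtain ⟨u₀, hu₀, a, b, rfl⟩ := exists_eq_add_single_add_single hpq u
  have hvu₀ : v ⬝ᵥ u₀ = 0 := by simpa [dotProduct_add, hvp, hvq] using hvu
  have hq : (u₀ + Pi.single p a + Pi.single q b : ι → R) q = b := by
    simp [(mem_vanishingOn_pair.1 hu₀).2, hpq.symm]
  have hsum : u₀ + Pi.single p a + Pi.single q b + Pi.single p (r * b) =
      u₀ + Pi.single p (r * b + a) + Pi.single q b := by
    rw [Pi.single_add]
    abel
  have hbv : b • v ∈ vanishingOn R {q, p} := by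
    rw [Set.pair_comm]
    exact Submodule.smul_mem _ b hv
  rw [hq, hsum, S.transvec_add_single_add_single hpq hu₀ hv hvu₀,
    S.transvec_add_single_add_single hpq hu₀ hv hvu₀, map_mul, map_mul,
    conj_eq_self_iff.2 (S.commute_x_colRowComm hpq hu₀ hvu₀ r),
    conj_eq_self_iff.2 (S.commute_x_row p q r _), S.conj_x_row hpq.symm r hbv, add_smul, S.row_add,
    smul_smul]
  simp only [mul_assoc]

theorem conj_x_transvec [DecidableEq ι] {p q m : ι} (hpq : p ≠ q) (hmp : m ≠ p) (r : R)
    {u v : ι → R} (hvp : v p = 0) (hvm : v m = 0) (hvu : v ⬝ᵥ u = 0) :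
    conj (S.x p q r) (S.transvec p u v) = S.transvec p (u + Pi.single p (r * u q)) v := by
  obtain rfl | hmq := eq_or_ne m q
  · exact S.conj_x_transvec_of_mem hpq r (mem_vanishingOn_pair.2 ⟨hvp, hvm⟩) hvu
  have hvu' : v ⬝ᵥ (u + Pi.single p (r * u q)) = 0 := by simp [dotProduct_add, hvu, hvp]
  rw [S.transvec_eq_transvec hvp hvm hvu, S.transvec_eq_transvec hvp hvm hvu',
    S.conj_x_transvec_of_ne hmp.symm hmq.symm hpq, hvp, mul_zero, neg_zero, Pi.single_zero,
    add_zero]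

theorem conj_row_transvec [DecidableEq ι] {p m : ι} (hmp : m ≠ p) {u v w : ι → R} (hvp : v p = 0)
    (hvm : v m = 0) (hvu : v ⬝ᵥ u = 0) (hw : w ∈ vanishingOn R {p}) :
    conj (S.row p w) (S.transvec p u v) = S.transvec p (u + Pi.single p (w ⬝ᵥ u)) v := by
  induction hw using vanishingOn_induction generalizing u with
  | zero => simp [S.row_zero]
  | single i hi c =>
    rw [S.row_single, S.conj_x_transvec (Ne.symm hi) hmp c hvp hvm hvu, single_dotProduct]
  | add w w' hw _ ihw ihw' =>
    have hwp : w p = 0 := hw p rfl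
    have hvu' : v ⬝ᵥ (u + Pi.single p (w' ⬝ᵥ u)) = 0 := by simp [dotProduct_add, hvu, hvp]
    rw [S.row_add, map_mul, MulAut.mul_apply, ihw' hvu, ihw hvu', dotProduct_add,
      dotProduct_single, hwp, zero_mul, add_zero, add_dotProduct, Pi.single_add, add_assoc,
      add_comm (Pi.single p _)]

theorem commute_row_colRowComm_of_dotProduct_eq_zero {p m : ι} (hmp : m ≠ p) {u v w : ι → R}
    (hvp : v p = 0) (hvm : v m = 0) (hvu : v ⬝ᵥ u = 0) (hwp : w p = 0) (hwu : w ⬝ᵥ u = 0) :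
    Commute (S.row p w) (S.colRowComm p u v) := by
  classical
  have h := S.conj_row_transvec hmp hvp hvm hvu (w := w) (by simpa [mem_vanishingOn] using hwp)
  rw [hwu, Pi.single_zero, add_zero, transvec, map_mul,
    conj_eq_self_iff.2 (S.commute_row_row_same p w _)] at h
  exact conj_eq_self_iff.1 (mul_right_cancel h)

theorem transvec_add {p m : ι} (hmp : m ≠ p) {u v w : ι → R} (hvp : v p = 0) (hvm : v m = 0)
    (hvu : v ⬝ᵥ u = 0) (hwp : w p = 0) (hwu : w ⬝ᵥ u = 0) :
    S.transvec p u (w + v) = S.transvec p u w * S.transvec p u v := by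
  have hconj : conj (S.row p w) (S.colRowComm p u v) = S.colRowComm p u v := conj_eq_self_iff.2 <|
    S.commute_row_colRowComm_of_dotProduct_eq_zero hmp hvp hvm hvu hwp hwu
  have hcomm : Commute (S.row p (u p • w)) (S.colRowComm p u v) :=
    S.commute_row_colRowComm_of_dotProduct_eq_zero hmp hvp hvm hvu (by simp [hwp]) (by simp [hwu])
  have hadd : S.colRowComm p u (w + v) = S.colRowComm p u w * S.colRowComm p u v := by
    rw [← hconj]
    simp only [colRowComm, S.row_add, commutatorElement_def, MulAut.conj_apply]
    group
  rw [transvec, transvec, transvec, hadd, smul_add, S.row_add, hcomm.mul_mul_mul_comm]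

/-- `T` is an additive extension of the lift `v ↦ transvec m u v` of `1 + u vᵀ` from Koszul vectors
`v` of `u` to all `v`. On the Koszul vector of `i` and `j` every `m ≠ i, j` gives the lift. -/
structure IsTransvecExtension [DecidableEq ι] (u : ι → R) (T : (ι → R) → G) : Prop where
  map_add (v w : ι → R) : T (v + w) = T v * T w
  map_koszul {i j m : ι} (c : R) (hi : m ≠ i) (hj : m ≠ j) :
    T (koszul u i j c) = S.transvec m u (koszul u i j c)

theorem isTransvecExtension_row [DecidableEq ι] (k : ι) :
    S.IsTransvecExtension (Pi.single k 1) (S.row k) where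
  map_add := S.row_add k
  map_koszul {i j m} c hi hj := by
    have horth := koszul_dotProduct (Pi.single k (1 : R)) i j c
    have hk : koszul (Pi.single k (1 : R)) i j c k = 0 := by simpa using horth
    rw [S.transvec_eq_transvec (koszul_apply_of_ne _ c hi hj) hk horth, S.transvec_single_one]

namespace IsTransvecExtension

variable {S} [DecidableEq ι] {u : ι → R} {T : (ι → R) → G}

theorem map_zero (hT : S.IsTransvecExtension u T) : T 0 = 1 := by
  simpa using hT.map_add 0 0

theorem conj_x_koszul_of_ne (hT : S.IsTransvecExtension u T) (hι : 4 ≤ Fintype.card ι) {p q : ι}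
    (hpq : p ≠ q) (r : R) {i j : ι} (hpi : p ≠ i) (hpj : p ≠ j) (c : R) :
    conj (S.x p q r) (T (koszul u i j c)) =
      S.transvec p (u + Pi.single p (r * u q)) (koszul u i j c) := by
  obtain ⟨m, hmi, hmj, hmp⟩ := exists_ne_ne_ne hι i j p
  rw [hT.map_koszul c hpi hpj]
  exact S.conj_x_transvec hpq hmp r (koszul_apply_of_ne u c hpi hpj)
    (koszul_apply_of_ne u c hmi hmj) (koszul_dotProduct u i j c)

theorem map_koszul_add_koszul (hT : S.IsTransvecExtension u T) (hι : 4 ≤ Fintype.card ι)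
    {p q j m : ι} (hp : m ≠ p) (hq : m ≠ q) (hj : m ≠ j) (c d : R) :
    T (koszul u p j c + koszul u q j d) = S.transvec m u (koszul u p j c + koszul u q j d) := by
  obtain ⟨m', hm'q, hm'j, hm'm⟩ := exists_ne_ne_ne hι q j m
  rw [hT.map_add, hT.map_koszul c hp hj, hT.map_koszul d hq hj,
    S.transvec_add hm'm (koszul_apply_of_ne u d hq hj) (koszul_apply_of_ne u d hm'q hm'j)
      (koszul_dotProduct u q j d) (koszul_apply_of_ne u c hp hj) (koszul_dotProduct u p j c)]

theorem conj_x_koszul (hT : S.IsTransvecExtension u T) (hι : 4 ≤ Fintype.card ι) {p q m j : ι}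
    (hpq : p ≠ q) (r : R) (hpj : p ≠ j) (hp : m ≠ p) (hq : m ≠ q) (hj : m ≠ j) (c : R) :
    conj (S.x p q r) (T (koszul u p j c + koszul u q j (c * r))) =
      S.transvec m (u + Pi.single p (r * u q)) (koszul (u + Pi.single p (r * u q)) p j c) := by
  rw [hT.map_koszul_add_koszul hι hp hq hj, ← koszul_add_single_self_add_single u hpj,
    S.conj_x_transvec_of_ne hp.symm hq.symm hpq, Pi.add_apply, Pi.single_eq_of_ne hpq, add_zero,
    Pi.single_neg, add_neg_cancel_right]

theorem conj_x_of_ne (hT : S.IsTransvecExtension u T) (hι : 4 ≤ Fintype.card ι) {p q : ι}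
    (hpq : p ≠ q) (r : R) {i j m : ι} (hpj : p ≠ j) (hi : m ≠ i) (hj : m ≠ j) (c : R) {v : ι → R}
    (hv : v = koszul (u + Pi.single p (r * u q)) i j c) :
    conj (S.x p q r) (T (v + Pi.single q (r * v p))) =
      S.transvec m (u + Pi.single p (r * u q)) v := by
  have horth : v ⬝ᵥ (u + Pi.single p (r * u q)) = 0 := hv ▸ koszul_dotProduct _ i j c
  have hvanish {k : ι} (hki : k ≠ i) (hkj : k ≠ j) : v k = 0 := hv ▸ koszul_apply_of_ne _ c hki hkj
  obtain rfl | hpi := eq_or_ne p i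
  · obtain ⟨k, hkp, hkj, hkq⟩ := exists_ne_ne_ne hι p j q
    rw [S.transvec_eq_transvec (hvanish hi hj) (hvanish hkp hkj) horth, hv,
      koszul_add_single_self_add_single u hpj, hT.conj_x_koszul hι hpq r hpj hkp hkq hkj]
  · rw [S.transvec_eq_transvec (hvanish hi hj) (hvanish hpi hpj) horth, hvanish hpi hpj, mul_zero,
      Pi.single_zero, add_zero, hv, koszul_add_single_of_ne u hpi hpj,
      hT.conj_x_koszul_of_ne hι hpq r hpi hpj]

theorem conj_x (hT : S.IsTransvecExtension u T) (hι : 4 ≤ Fintype.card ι) {p q : ι} (hpq : p ≠ q)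
    (r : R) :
    S.IsTransvecExtension (u + Pi.single p (r * u q))
      (fun v => conj (S.x p q r) (T (v + Pi.single q (r * v p)))) where
  map_add v w := by
    rw [← map_mul, ← hT.map_add, Pi.add_apply, mul_add, Pi.single_add, add_add_add_comm]
  map_koszul {i j m} c hi hj := by
    obtain rfl | hpj := eq_or_ne p j
    · obtain rfl | hpi := eq_or_ne p i
      · simp [koszul_self, hT.map_zero, S.transvec_zero]
      · rw [koszul_swap]
        exact hT.conj_x_of_ne hι hpq r hpi hj hi (-c) rfl
    · exact hT.conj_x_of_ne hι hpq r hpj hi hj c rfl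

end IsTransvecExtension

variable [DecidableEq ι]

theorem isTransvecExtension_conj_row_x_mul (hι : 4 ≤ Fintype.card ι) {φ : G →* Matrix ι ι R}
    {p q : ι} (hpq : p ≠ q) {r : R} (hφ : φ (S.x p q r) = 1 + Matrix.single p q r) {k : ι} {g : G}
    (hg : S.IsTransvecExtension (φ g *ᵥ Pi.single k 1) fun v => conj g (S.row k (v ᵥ* φ g))) :
    S.IsTransvecExtension (φ (S.x p q r * g) *ᵥ Pi.single k 1)
      fun v => conj (S.x p q r * g) (S.row k (v ᵥ* φ (S.x p q r * g))) := by
  simpa only [map_mul, hφ, ← Matrix.mulVec_mulVec, ← Matrix.vecMul_vecMul,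
    one_add_single_mulVec, vecMul_one_add_single, MulAut.mul_apply] using hg.conj_x hι hpq r

theorem isTransvecExtension_conj_row (hι : 4 ≤ Fintype.card ι)
    (hgen : Subgroup.closure {g | ∃ i j r, i ≠ j ∧ S.x i j r = g} = ⊤) {φ : G →* Matrix ι ι R}
    (hφ : ∀ i j, i ≠ j → ∀ r, φ (S.x i j r) = 1 + Matrix.single i j r) (k : ι) (g : G) :
    S.IsTransvecExtension (φ g *ᵥ Pi.single k 1) fun v => conj g (S.row k (v ᵥ* φ g)) := by
  have hg : g ∈ Subgroup.closure {g | ∃ i j r, i ≠ j ∧ S.x i j r = g} := hgen ▸ Subgroup.mem_top g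
  induction hg using Subgroup.closure_induction_left with
  | one =>
    simpa only [map_one, Matrix.one_mulVec, Matrix.vecMul_one, MulAut.one_apply] using
      S.isTransvecExtension_row k
  | mul_left _ hx g _ ih =>
    obtain ⟨p, q, r, hpq, rfl⟩ := hx
    exact S.isTransvecExtension_conj_row_x_mul hι hpq (hφ p q hpq r) ih
  | inv_mul_cancel _ hx g _ ih =>
    obtain ⟨p, q, r, hpq, rfl⟩ := hx
    rw [← S.x_neg]
    exact S.isTransvecExtension_conj_row_x_mul hι hpq (hφ p q hpq (-r)) ih

theorem commute_x_of_mem_ker (hι : 4 ≤ Fintype.card ι)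
    (hgen : Subgroup.closure {g | ∃ i j r, i ≠ j ∧ S.x i j r = g} = ⊤) {φ : G →* Matrix ι ι R}
    (hφ : ∀ i j, i ≠ j → ∀ r, φ (S.x i j r) = 1 + Matrix.single i j r) {g : G} (hg : g ∈ φ.ker)
    {p q : ι} (hpq : p ≠ q) (r : R) : Commute g (S.x p q r) := by
  obtain ⟨m, hmp, hmq, -⟩ := exists_ne_ne_ne hι p q q
  have hconj : S.IsTransvecExtension (Pi.single p 1) fun v => conj g (S.row p v) := by
    simpa only [MonoidHom.mem_ker.1 hg, Matrix.one_mulVec, Matrix.vecMul_one] using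
      S.isTransvecExtension_conj_row hι hgen hφ p g
  rw [← conj_eq_self_iff, ← S.row_single, ← koszul_single_one hpq]
  exact (hconj.map_koszul r hmq hmp).trans
    ((S.isTransvecExtension_row p).map_koszul r hmq hmp).symm

end SteinbergFamily

theorem stmt0_general {ι R G : Type*} [Fintype ι] [DecidableEq ι] [CommRing R] [Group G]
    (S : SteinbergFamily ι R G) (hι : 4 ≤ Fintype.card ι)
    (hgen : Subgroup.closure {g | ∃ i j r, i ≠ j ∧ S.x i j r = g} = ⊤) (φ : G →* Matrix ι ι R)
    (hφ : ∀ i j, i ≠ j → ∀ r, φ (S.x i j r) = 1 + Matrix.single i j r) :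
    φ.ker ≤ Subgroup.center G := by
  intro g hg
  rw [← Subgroup.centralizer_univ, ← Subgroup.coe_top, ← hgen, Subgroup.centralizer_closure]
  rintro _ ⟨p, q, r, hpq, rfl⟩
  exact (S.commute_x_of_mem_ker hι hgen hφ hg hpq r).symm

section SteinbergGroup

variable {n : ℕ} {R : Type} [CommRing R]

theorem stx_add {i j : Fin n} (hij : i ≠ j) (r s : R) :
    stx n R i j hij (r + s) = stx n R i j hij r * stx n R i j hij s := by
  have h := PresentedGroup.one_of_mem (rels := {w | StRels n R w}) (.add i j hij r s)
  rw [map_mul, map_mul, map_inv, mul_inv_eq_one] at h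
  exact h.symm

theorem commute_stx {i j h k : Fin n} (hij : i ≠ j) (hhk : h ≠ k) (hjh : j ≠ h) (hik : i ≠ k)
    (r s : R) : Commute (stx n R i j hij r) (stx n R h k hhk s) := by
  have h := PresentedGroup.one_of_mem (rels := {w | StRels n R w})
    (.commZero i j h k hij hhk hjh hik r s)
  rwa [map_commutatorElement, commutatorElement_eq_one_iff_commute] at h

theorem commutator_stx {i j k : Fin n} (hij : i ≠ j) (hjk : j ≠ k) (hik : i ≠ k) (r s : R) :
    ⁅stx n R i j hij r, stx n R j k hjk s⁆ = stx n R i k hik (r * s) := by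
  have h := PresentedGroup.one_of_mem (rels := {w | StRels n R w})
    (.commAdd i j k hij hjk hik r s)
  rwa [map_mul, map_inv, mul_inv_eq_one, map_commutatorElement] at h

/-- The generators of the Steinberg group, extended by `1` to the diagonal. -/
def steinbergFamily (n : ℕ) (R : Type) [CommRing R] :
    SteinbergFamily (Fin n) R (SteinbergGroup n R) where
  x i j r := if hij : i ≠ j then stx n R i j hij r else 1
  x_self i r := by simp
  x_add i j r s := by
    split_ifs with hij
    · exact stx_add hij r s
    · exact (mul_one 1).symm
  commute_x {i j h k} hjh hik r s := by
    split_ifs with hij hhk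
    · exact commute_stx hij hhk hjh hik r s
    all_goals simp
  commutator_x hij hjk hik r s := by
    rw [dif_pos hij, dif_pos hjk, dif_pos hik, commutator_stx hij hjk hik]

theorem steinbergFamily_x {i j : Fin n} (hij : i ≠ j) (r : R) :
    (steinbergFamily n R).x i j r = stx n R i j hij r :=
  dif_pos hij

theorem closure_steinbergFamily :
    Subgroup.closure {g | ∃ i j r, i ≠ j ∧ (steinbergFamily n R).x i j r = g} = ⊤ := by
  rw [eq_top_iff, ← PresentedGroup.closure_range_of]
  refine Subgroup.closure_mono ?_
  rintro _ ⟨⟨⟨⟨i, j⟩, hij⟩, r⟩, rfl⟩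
  exact ⟨i, j, r, hij, steinbergFamily_x hij r⟩

end SteinbergGroup

theorem stmt0 (n : ℕ) (hn : 4 ≤ n) (R : Type) [CommRing R]
    (φ : SteinbergGroup n R →* Matrix.GeneralLinearGroup (Fin n) R)
    (hφ : ∀ (i j : Fin n) (hij : i ≠ j) (r : R),
      (φ (stx n R i j hij r) : Matrix (Fin n) (Fin n) R) = 1 + Matrix.single i j r) :
    φ.ker ≤ Subgroup.center (SteinbergGroup n R) := by
  have hker : φ.ker ≤ ((Units.coeHom _).comp φ).ker := fun g hg => by
    simp [MonoidHom.mem_ker.1 hg]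
  refine hker.trans (stmt0_general (steinbergFamily n R) (by simpa using hn)
    closure_steinbergFamily _ fun i j hij r => ?_)
  rw [steinbergFamily_x hij]
  exact hφ i j hij r
end

section
/- Let R be a commutative ring and n ≥ 4 an integer. Let g ∈ St(n, R[X]) satisfy (ev_{X=0})_*(g) = 1 ∈ St(n,R). Then g = 1 in St(n, R[X]) if and only if (λ_M)_*(g) = 1 ∈ St(n, R_M[X]) for every maximal ideal M of R, where λ_M : R → R_M is the localisation map. (Quillen local–global principle for K₂ in type A_{n−1}.) -/
open scoped commutatorElement

/-!
Let every element of a multiplicative set `S` act bijectively on an ideal `I` of `A`, let `ε` be an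
endomorphism of `A` which fixes `S` and is the identity modulo `I`, and let `B` be the localization
of `A` at `S`. A transvection `1 + u vᵀ` over `B`, with `u` unimodular, `v` orthogonal to `u` and
with entries in `I B`, lifts canonically to `St(n, A)`: it equals `1 + (s u) (v / s)ᵀ` for any
`s ∈ S`, and once `s u` has entries in `A`, the vector `v / s` is a combination of Koszul syzygies
of `s u` with coefficients in `I`. For `n ≥ 4` the lift is independent of choices and satisfies the
expected addition and conjugation formulas. The relations among these lifts give a homomorphism
on `St(n, B)`, with values in a semidirect product of functions `GL(n, B) → St(n, A)` by `GL(n, B)`,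
which recovers `g ε(g)⁻¹` from the image of `g ∈ St(n, A)` in `St(n, B)`. So an element killed both
by `ε` and by localization is trivial.

Let `P` be a multiplicative set in `R` and let `g(X)` become trivial over `R_P[X]`. The previous
statement, for `A = R[X] ⊕ Z R_P[X][Z]` and `ε` the substitution `Z = 0`, gives `g(X + Z) = g(X)` in
`St(n, A)`. Since `A` is the direct limit of copies of `R[X][Z]` along `Z ↦ aZ`, `a ∈ P`, some
`a ∈ P` satisfies `g(X + aZ) = g(X)` in `St(n, R[X][Z])`. The set of such `a ∈ R` is an ideal, and
by the hypothesis at the maximal ideals it contains `1`; then `X = 0` gives `g(Z) = g(0) = 1`.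
-/

section GroupTheory

variable {G : Type*} [Group G]

theorem semiconjBy_commutatorElement {a b b' c c' : G} (hb : SemiconjBy a b b')
    (hc : SemiconjBy a c c') : SemiconjBy a ⁅b, c⁆ ⁅b', c'⁆ :=
  ((hb.mul_right hc).mul_right hb.inv_right).mul_right hc.inv_right

theorem commutatorElement_mul_right_of_commute {a b c : G} (hac : Commute a c) :
    ⁅a, b * c⁆ = ⁅a, b⁆ := by
  rw [commutatorElement_mul_right_eq_mul_conj, commutatorElement_eq_one_iff_commute.mpr hac,
    mul_one, mul_inv_cancel_right]

theorem commutatorElement_mul_left_of_commute_s1 {a b c : G} (hac : Commute a c) (hab : Commute a b) :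
    ⁅a * b, c⁆ = ⁅b, c⁆ := by
  rw [hab.eq, commutatorElement_mul_left_eq_conj_mul, commutatorElement_eq_one_iff_commute.mpr hac,
    mul_one, mul_inv_cancel, one_mul]

theorem commutatorElement_mul_mul (a b : G) : ⁅a, b⁆ * (b * a) = a * b := by
  rw [commutatorElement_def]; group

theorem conj_eq_self_of_commute {a b : G} (h : Commute a b) : a * b * a⁻¹ = b := by
  rw [h.eq, mul_inv_cancel_right]

theorem eq_of_semiconjBy_of_commute {a b c : G} (h : SemiconjBy a b c) (h' : Commute a b) :
    b = c :=
  mul_right_cancel (h'.eq.symm.trans h.eq)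

@[elab_as_elim]
theorem pi_induction_of_apply_eq_zero {ι A : Type*} [Finite ι] [DecidableEq ι] [AddCommMonoid A]
    {l : ι} {P : (ι → A) → Prop} (f : ι → A) (hf : f l = 0) (zero : P 0)
    (add : ∀ f g, f l = 0 → g l = 0 → P f → P g → P (f + g))
    (single : ∀ q a, q ≠ l → P (Pi.single q a)) : P f := by
  have := Fintype.ofFinite ι
  rw [← Finset.univ_sum_single f]
  refine (Finset.sum_induction _ (fun g => g l = 0 ∧ P g) ?_ ⟨rfl, zero⟩ fun q _ => ?_).2
  · exact fun f g hf hg => ⟨by simp [hf.1, hg.1], add f g hf.1 hg.1 hf.2 hg.2⟩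
  · obtain rfl | hq := eq_or_ne q l
    · simpa [hf] using zero
    · exact ⟨Pi.single_eq_of_ne' hq _, single q _ hq⟩

variable {ι A : Type*} [Fintype ι] [AddMonoid A]

/-- The product `∏ q, φ q (f q)` over a family of pairwise commuting homomorphisms out of the
additive group `A`, as a function of `f : ι → A`. -/
noncomputable def commPiProd (φ : ι → Multiplicative A →* G)
    (hφ : Pairwise fun p q => ∀ a b, Commute (φ p a) (φ q b)) (f : ι → A) : G :=
  MonoidHom.noncommPiCoprod φ hφ fun q => Multiplicative.ofAdd (f q)

variable (φ : ι → Multiplicative A →* G) (hφ : Pairwise fun p q => ∀ a b, Commute (φ p a) (φ q b))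

theorem commPiProd_add (f g : ι → A) :
    commPiProd φ hφ (f + g) = commPiProd φ hφ f * commPiProd φ hφ g := by
  simp only [commPiProd, ← map_mul]
  rfl

theorem commPiProd_single [DecidableEq ι] (q : ι) (a : A) :
    commPiProd φ hφ (Pi.single q a) = φ q (Multiplicative.ofAdd a) := by
  rw [commPiProd, ← MonoidHom.noncommPiCoprod_mulSingle (ϕ := φ) (hcomm := hφ)]
  congr 1 with p

end GroupTheory

namespace SteinbergGroup

section Basic

open Matrix

variable {n : ℕ} {A : Type} [CommRing A]

/-- The generator `x_{ij}(r)` as a total function of the indices, with value `1` for `i = j`. -/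
def x (i j : Fin n) (r : A) : SteinbergGroup n A :=
  if h : i ≠ j then stx n A i j h r else 1

theorem x_of_ne {i j : Fin n} (h : i ≠ j) (r : A) : x i j r = stx n A i j h r :=
  dif_pos h

theorem x_self (i : Fin n) (r : A) : x i i r = 1 :=
  dif_neg (not_not.mpr rfl)

theorem mk_eq_one_of_rel {w : FreeGroup (StGen n A)} (h : StRels n A w) :
    PresentedGroup.mk {w | StRels n A w} w = 1 :=
  PresentedGroup.one_of_mem h

theorem x_add (i j : Fin n) (r s : A) : x i j (r + s) = x i j r * x i j s := by
  obtain rfl | hij := eq_or_ne i j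
  · simp only [x_self, mul_one]
  · simp only [x_of_ne hij]
    exact (mul_inv_eq_one.mp (mk_eq_one_of_rel (StRels.add i j hij r s))).symm

theorem x_zero (i j : Fin n) : x i j (0 : A) = 1 := by
  simpa using x_add i j (0 : A) 0

theorem x_neg (i j : Fin n) (r : A) : x i j (-r) = (x i j r)⁻¹ := by
  rw [eq_inv_iff_mul_eq_one, ← x_add, neg_add_cancel, x_zero]

theorem commute_x {i j h k : Fin n} (hjh : j ≠ h) (hik : i ≠ k) (r s : A) :
    Commute (x i j r) (x h k s) := by
  obtain rfl | hij := eq_or_ne i j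
  · simp only [x_self, Commute.one_left]
  obtain rfl | hhk := eq_or_ne h k
  · simp only [x_self, Commute.one_right]
  rw [x_of_ne hij, x_of_ne hhk]
  exact commutatorElement_eq_one_iff_commute.mp
    (mk_eq_one_of_rel (StRels.commZero i j h k hij hhk hjh hik r s))

theorem x_mul_x {i j k : Fin n} (hij : i ≠ j) (hjk : j ≠ k) (hik : i ≠ k) (r s : A) :
    x i j r * x j k s = x i k (r * s) * x j k s * x i j r := by
  have hrel : ⁅x i j r, x j k s⁆ = x i k (r * s) := by
    rw [x_of_ne hij, x_of_ne hjk, x_of_ne hik]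
    exact mul_inv_eq_one.mp (mk_eq_one_of_rel (StRels.commAdd i j k hij hjk hik r s))
  rw [mul_assoc, ← hrel, commutatorElement_mul_mul]

section Lift

variable {G : Type*} [Group G] (y : ∀ i j : Fin n, i ≠ j → A → G)
  (hadd : ∀ i j (h : i ≠ j) r s, y i j h (r + s) = y i j h r * y i j h s)
  (hcomm : ∀ i j h k (hij : i ≠ j) (hhk : h ≠ k), j ≠ h → i ≠ k → ∀ r s,
    Commute (y i j hij r) (y h k hhk s))
  (hmul : ∀ i j k (hij : i ≠ j) (hjk : j ≠ k) (hik : i ≠ k) r s,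
    y i j hij r * y j k hjk s = y i k hik (r * s) * y j k hjk s * y i j hij r)

include hadd hcomm hmul in
theorem freeGroupLift_eq_one_of_rel (w : FreeGroup (StGen n A)) (hw : StRels n A w) :
    FreeGroup.lift (fun g : StGen n A => y g.1.1.1 g.1.1.2 g.1.2 g.2) w = 1 := by
  obtain ⟨i, j, hij, r, s⟩ | ⟨i, j, h, k, hij, hhk, hjh, hik, r, s⟩ |
    ⟨i, j, k, hij, hjk, hik, r, s⟩ := hw
  · simp only [map_mul, map_inv, FreeGroup.lift_apply_of, hadd, mul_inv_cancel]
  · simp only [map_commutatorElement, FreeGroup.lift_apply_of]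
    exact commutatorElement_eq_one_iff_commute.mpr (hcomm i j h k hij hhk hjh hik r s)
  · simp only [map_commutatorElement, map_mul, map_inv, FreeGroup.lift_apply_of]
    rw [mul_inv_eq_one, commutatorElement_def, hmul i j k hij hjk hik]
    group

/-- The universal property of the Steinberg group: the homomorphism with `x_{ij}(r) ↦ y i j r`,
for a family `y` satisfying the Steinberg relations. -/
def lift : SteinbergGroup n A →* G :=
  PresentedGroup.toGroup (freeGroupLift_eq_one_of_rel y hadd hcomm hmul)

theorem lift_x {i j : Fin n} (h : i ≠ j) (r : A) :
    lift y hadd hcomm hmul (x i j r) = y i j h r := by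
  rw [x_of_ne h]
  exact PresentedGroup.toGroup.of _

end Lift

theorem hom_ext {G : Type*} [Group G] {φ ψ : SteinbergGroup n A →* G}
    (h : ∀ i j (_ : i ≠ j) r, φ (x i j r) = ψ (x i j r)) : φ = ψ := by
  apply PresentedGroup.ext
  rintro ⟨⟨⟨i, j⟩, hij⟩, r⟩
  simpa only [x_of_ne hij, stx] using h i j hij r

theorem induction_left {P : SteinbergGroup n A → Prop} (one : P 1)
    (x_mul : ∀ i j (_ : i ≠ j) r g, P g → P (x i j r * g)) (g : SteinbergGroup n A) : P g := by
  have hg : g ∈ Subgroup.closure (Set.range (PresentedGroup.of (rels := {w | StRels n A w}))) := by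
    rw [PresentedGroup.closure_range_of]; trivial
  induction hg using Subgroup.closure_induction_left with
  | one => exact one
  | mul_left _ hx g _ hg =>
    obtain ⟨⟨⟨⟨i, j⟩, hij⟩, r⟩, rfl⟩ := hx
    simpa only [x_of_ne hij, stx] using x_mul i j hij r g hg
  | inv_mul_cancel _ hx g _ hg =>
    obtain ⟨⟨⟨⟨i, j⟩, hij⟩, r⟩, rfl⟩ := hx
    have := x_mul i j hij (-r) g hg
    rwa [x_neg, x_of_ne hij] at this

section Map

variable {B C : Type} [CommRing B] [CommRing C]

/-- The homomorphism `St(n, A) → St(n, B)` induced by a ring homomorphism `A → B`. -/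
def map (f : A →+* B) : SteinbergGroup n A →* SteinbergGroup n B :=
  lift (fun i j _ r => x i j (f r)) (fun i j _ r s => by rw [map_add, x_add])
    (fun _ _ _ _ _ _ hjh hik _ _ => commute_x hjh hik _ _)
    (fun _ _ _ hij hjk hik r s => by rw [x_mul_x hij hjk hik, map_mul])

theorem map_x (f : A →+* B) (i j : Fin n) (r : A) : map f (x i j r) = x i j (f r) := by
  obtain rfl | hij := eq_or_ne i j
  · simp only [x_self, map_one]
  · exact lift_x _ _ _ _ hij r

theorem map_map (f : A →+* B) (f' : B →+* C) (g : SteinbergGroup n A) :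
    map f' (map f g) = map (f'.comp f) g := by
  have : (map f').comp (map f) = map (n := n) (f'.comp f) :=
    hom_ext fun i j _ r => by simp only [MonoidHom.comp_apply, map_x, RingHom.comp_apply]
  exact DFunLike.congr_fun this g

theorem map_id (g : SteinbergGroup n A) : map (RingHom.id A) g = g := by
  have : map (RingHom.id A) = MonoidHom.id (SteinbergGroup n A) :=
    hom_ext fun i j _ r => map_x _ i j r
  exact DFunLike.congr_fun this g

end Map

section ToMatrix

/-- The elementary matrix `1 + r e_{ij}`, `i ≠ j`, as an element of `GL(n, A)`. -/
def transvectionGL {i j : Fin n} (h : i ≠ j) (r : A) : GL (Fin n) A where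
  val := transvection i j r
  inv := transvection i j (-r)
  val_inv := by rw [transvection_mul_transvection_same _ _ h, add_neg_cancel, transvection_zero]
  inv_val := by rw [transvection_mul_transvection_same _ _ h, neg_add_cancel, transvection_zero]

/-- The canonical homomorphism `St(n, A) → GL(n, A)`. -/
noncomputable def toGL : SteinbergGroup n A →* GL (Fin n) A :=
  lift (fun _ _ h r => transvectionGL h r)
    (fun i j h r s => Units.ext (transvection_mul_transvection_same i j h r s).symm)
    (fun i j h k hij hhk hjh hik r s => Units.ext <| by
      simp only [transvectionGL, Units.val_mul, transvection, mul_add, add_mul, one_mul, mul_one,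
        single_mul_single_of_ne _ _ _ _ hjh, single_mul_single_of_ne _ _ _ _ hik.symm]
      abel)
    (fun i j k hij hjk hik r s => Units.ext <| by
      simp only [transvectionGL, Units.val_mul, transvection, mul_add, add_mul, one_mul, mul_one,
        single_mul_single_same, single_mul_single_of_ne _ _ _ _ hik.symm,
        single_mul_single_of_ne _ _ _ _ hjk.symm, zero_mul]
      abel)

theorem toGL_x {i j : Fin n} (h : i ≠ j) (r : A) : toGL (x i j r) = transvectionGL h r :=
  lift_x _ _ _ _ h r

/-- The matrix of an element of the Steinberg group. -/
noncomputable def toMatrix (g : SteinbergGroup n A) : Matrix (Fin n) (Fin n) A :=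
  (toGL g).val

theorem toMatrix_mul (g h : SteinbergGroup n A) : toMatrix (g * h) = toMatrix g * toMatrix h := by
  simp only [toMatrix, map_mul, Units.val_mul]

theorem toMatrix_one : toMatrix (1 : SteinbergGroup n A) = 1 := by
  simp only [toMatrix, map_one, Units.val_one]

theorem toMatrix_inv_mul (g : SteinbergGroup n A) : toMatrix g⁻¹ * toMatrix g = 1 := by
  rw [← toMatrix_mul, inv_mul_cancel, toMatrix_one]

theorem toMatrix_mul_inv (g : SteinbergGroup n A) : toMatrix g * toMatrix g⁻¹ = 1 := by
  rw [← toMatrix_mul, mul_inv_cancel, toMatrix_one]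

theorem toMatrix_x {i j : Fin n} (h : i ≠ j) (r : A) : toMatrix (x i j r) = 1 + single i j r := by
  rw [toMatrix, toGL_x h]; rfl

theorem single_eq_vecMulVec (i j : Fin n) (r : A) :
    single i j r = vecMulVec (Pi.single i r) (Pi.single j 1) := by
  ext a b
  simp only [vecMulVec_apply, single_apply, Pi.single_apply]
  grind

theorem single_eq_vecMulVec' (i j : Fin n) (r : A) :
    single i j r = vecMulVec (Pi.single i 1) (Pi.single j r) := by
  ext a b
  simp only [vecMulVec_apply, single_apply, Pi.single_apply]
  grind

theorem one_add_vecMulVec_mul_one_add_vecMulVec (u v u' v' : Fin n → A) :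
    (1 + vecMulVec u v) * (1 + vecMulVec u' v') =
      1 + vecMulVec u v + vecMulVec (u' + (v ⬝ᵥ u') • u) v' := by
  rw [mul_add, mul_one, add_mul, one_mul, vecMulVec_mul_vecMulVec, add_vecMulVec, vecMulVec_smul,
    smul_vecMulVec]

theorem one_add_vecMulVec_mulVec (u v f : Fin n → A) :
    (1 + vecMulVec u v) *ᵥ f = f + (v ⬝ᵥ f) • u := by
  rw [add_mulVec, one_mulVec, vecMulVec_mulVec, op_smul_eq_smul]

theorem vecMul_one_add_vecMulVec (u v f : Fin n → A) :
    f ᵥ* (1 + vecMulVec u v) = f + (f ⬝ᵥ u) • v := by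
  rw [vecMul_add, vecMul_one, vecMul_vecMulVec]

theorem toMatrix_x_mulVec {i j : Fin n} (h : i ≠ j) (r : A) (f : Fin n → A) :
    toMatrix (x i j r) *ᵥ f = f + Pi.single i (r * f j) := by
  rw [toMatrix_x h, single_eq_vecMulVec, one_add_vecMulVec_mulVec, single_dotProduct, one_mul,
    ← Pi.single_smul', smul_eq_mul, mul_comm]

theorem vecMul_toMatrix_x {i j : Fin n} (h : i ≠ j) (r : A) (f : Fin n → A) :
    f ᵥ* toMatrix (x i j r) = f + Pi.single j (f i * r) := by
  rw [toMatrix_x h, single_eq_vecMulVec, vecMul_one_add_vecMulVec, dotProduct_single,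
    ← Pi.single_smul', smul_eq_mul, mul_one]

end ToMatrix

end Basic

/-! ### Column and row subgroups -/

section Transvections

open Matrix

variable {n : ℕ} {A : Type} [CommRing A]

section ColRow

/-- The root subgroup `r ↦ x_{ij}(r)` as a homomorphism. -/
def xHom (i j : Fin n) : Multiplicative A →* SteinbergGroup n A where
  toFun r := x i j r.toAdd
  map_one' := x_zero i j
  map_mul' r s := x_add i j r.toAdd s.toAdd

theorem pairwise_commute_xHom_left (l : Fin n) : Pairwise fun p q =>
    ∀ r s : Multiplicative A, Commute (xHom p l r) (xHom q l s) := by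
  intro p q _ r s
  obtain rfl | hlq := eq_or_ne l q
  · simp [xHom, x_self]
  obtain rfl | hpl := eq_or_ne p l
  · simp [xHom, x_self]
  exact commute_x hlq hpl _ _

theorem pairwise_commute_xHom_right (l : Fin n) : Pairwise fun p q =>
    ∀ r s : Multiplicative A, Commute (xHom l p r) (xHom l q s) := by
  intro p q _ r s
  obtain rfl | hlq := eq_or_ne l q
  · simp [xHom, x_self]
  obtain rfl | hpl := eq_or_ne p l
  · simp [xHom, x_self]
  exact commute_x hpl hlq _ _

/-- The product `∏ q ≠ l, x_{ql}(f q)`, lifting `1 + f e_lᵀ` when `f l = 0`. -/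
noncomputable def col (l : Fin n) (f : Fin n → A) : SteinbergGroup n A :=
  commPiProd (fun q => xHom q l) (pairwise_commute_xHom_left l) f

/-- The product `∏ q ≠ l, x_{lq}(f q)`, lifting `1 + e_l fᵀ` when `f l = 0`. -/
noncomputable def row (l : Fin n) (f : Fin n → A) : SteinbergGroup n A :=
  commPiProd (fun q => xHom l q) (pairwise_commute_xHom_right l) f

theorem col_add (l : Fin n) (f g : Fin n → A) : col l (f + g) = col l f * col l g :=
  commPiProd_add _ _ f g

theorem row_add (l : Fin n) (f g : Fin n → A) : row l (f + g) = row l f * row l g :=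
  commPiProd_add _ _ f g

theorem col_zero (l : Fin n) : col l (0 : Fin n → A) = 1 := by
  simpa using col_add l (0 : Fin n → A) 0

theorem row_zero (l : Fin n) : row l (0 : Fin n → A) = 1 := by
  simpa using row_add l (0 : Fin n → A) 0

theorem col_single (l q : Fin n) (r : A) : col l (Pi.single q r) = x q l r :=
  commPiProd_single _ _ q r

theorem row_single (l q : Fin n) (r : A) : row l (Pi.single q r) = x l q r :=
  commPiProd_single _ _ q r

theorem commute_row (l : Fin n) (f g : Fin n → A) : Commute (row l f) (row l g) := by
  rw [commute_iff_eq, ← row_add, ← row_add, add_comm]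

theorem commute_x_row (l q : Fin n) (r : A) (f : Fin n → A) : Commute (x l q r) (row l f) := by
  rw [← row_single]
  exact commute_row l _ _

theorem toMatrix_col {l : Fin n} {f : Fin n → A} (hf : f l = 0) :
    toMatrix (col l f) = 1 + vecMulVec f (Pi.single l 1) := by
  refine pi_induction_of_apply_eq_zero f hf ?_ (fun f g _ hg hfm hgm => ?_) fun q r hq => ?_
  · rw [col_zero, toMatrix_one, zero_vecMulVec, add_zero]
  · rw [col_add, toMatrix_mul, hfm, hgm, one_add_vecMulVec_mul_one_add_vecMulVec,
      single_dotProduct, hg, mul_zero, zero_smul, add_zero, add_vecMulVec, add_assoc]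
  · rw [col_single, toMatrix_x hq, single_eq_vecMulVec]

theorem toMatrix_row {l : Fin n} {f : Fin n → A} (hf : f l = 0) :
    toMatrix (row l f) = 1 + vecMulVec (Pi.single l 1) f := by
  refine pi_induction_of_apply_eq_zero f hf ?_ (fun f g hf _ hfm hgm => ?_) fun q r hq => ?_
  · rw [row_zero, toMatrix_one, vecMulVec_zero, add_zero]
  · rw [row_add, toMatrix_mul, hfm, hgm, one_add_vecMulVec_mul_one_add_vecMulVec,
      dotProduct_single, hf, zero_mul, zero_smul, add_zero, vecMulVec_add, add_assoc]
  · rw [row_single, toMatrix_x hq.symm, single_eq_vecMulVec']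

theorem semiconjBy_x_col {h k l : Fin n} (hhk : h ≠ k) (hhl : h ≠ l) (hkl : k ≠ l) (s : A)
    (f : Fin n → A) :
    SemiconjBy (x h k s) (col l f) (col l (f + Pi.single h (s * f k))) := by
  induction f using Pi.single_induction with
  | zero => simp [col_zero]
  | add f g hf hg =>
    rw [Pi.add_apply, mul_add, Pi.single_add, add_add_add_comm, col_add, col_add]
    exact hf.mul_right hg
  | single q r =>
    rw [col_add, col_single, col_single]
    obtain rfl | hq := eq_or_ne q k
    · rw [Pi.single_eq_same, (commute_x hhl.symm hkl _ _).eq]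
      exact x_mul_x hhk hkl hhl s r
    · rw [Pi.single_eq_of_ne' hq, mul_zero, x_zero, mul_one]
      exact commute_x hq.symm hhl _ _

theorem semiconjBy_x_row {h k l : Fin n} (hhk : h ≠ k) (hhl : h ≠ l) (hkl : k ≠ l) (s : A)
    (f : Fin n → A) :
    SemiconjBy (x h k s) (row l (f + Pi.single k (f h * s))) (row l f) := by
  induction f using Pi.single_induction with
  | zero => simp [row_zero]
  | add f g hf hg =>
    rw [Pi.add_apply, add_mul, Pi.single_add, add_add_add_comm, row_add l (f + _),
      row_add l f g]
    exact hf.mul_right hg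
  | single q r =>
    rw [row_add, row_single, row_single]
    obtain rfl | hq := eq_or_ne q h
    · rw [Pi.single_eq_same, SemiconjBy, x_mul_x hhl.symm hhk hkl.symm,
        (commute_x hhl hkl.symm _ _).eq, ← mul_assoc, (commute_x hkl hhk _ _).eq]
    · rw [Pi.single_eq_of_ne' hq, zero_mul, x_zero, mul_one]
      exact commute_x hkl hq.symm _ _

/-- The subgroup of elements that normalize the `l`-th column and row subgroups and act on them
through their matrix. -/
def linearStabilizer (A : Type) [CommRing A] (l : Fin n) : Subgroup (SteinbergGroup n A) where
  carrier := {g | ∀ f : Fin n → A, SemiconjBy g (col l f) (col l (toMatrix g *ᵥ f)) ∧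
    SemiconjBy g (row l (f ᵥ* toMatrix g)) (row l f)}
  one_mem' f := by simp [toMatrix_one]
  mul_mem' {g h} hg hh f := by
    rw [toMatrix_mul, ← mulVec_mulVec, ← vecMul_vecMul]
    exact ⟨(hg _).1.mul_left (hh _).1, (hg _).2.mul_left (hh _).2⟩
  inv_mem' {g} hg f := by
    have hcol := (hg (toMatrix g⁻¹ *ᵥ f)).1
    have hrow := (hg (f ᵥ* toMatrix g⁻¹)).2
    rw [mulVec_mulVec, toMatrix_mul_inv, one_mulVec] at hcol
    rw [vecMul_vecMul, toMatrix_inv_mul, vecMul_one] at hrow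
    exact ⟨hcol.inv_symm_left, hrow.inv_symm_left⟩

theorem x_mem_linearStabilizer {h k l : Fin n} (hhl : h ≠ l) (hkl : k ≠ l) (s : A) :
    x h k s ∈ linearStabilizer A l := by
  obtain rfl | hhk := eq_or_ne h k
  · rw [x_self]; exact one_mem _
  intro f
  rw [toMatrix_x_mulVec hhk, vecMul_toMatrix_x hhk]
  exact ⟨semiconjBy_x_col hhk hhl hkl s f, semiconjBy_x_row hhk hhl hkl s f⟩

theorem col_mem_linearStabilizer {l m : Fin n} (hlm : l ≠ m) {f : Fin n → A} (hf : f l = 0) :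
    col m f ∈ linearStabilizer A l := by
  refine pi_induction_of_apply_eq_zero f hf ?_ (fun f g _ _ hf hg => ?_) fun q r hq => ?_
  · rw [col_zero]; exact one_mem _
  · rw [col_add]; exact mul_mem hf hg
  · rw [col_single]; exact x_mem_linearStabilizer hq hlm.symm r

theorem row_mem_linearStabilizer {l m : Fin n} (hlm : l ≠ m) {f : Fin n → A} (hf : f l = 0) :
    row m f ∈ linearStabilizer A l := by
  refine pi_induction_of_apply_eq_zero f hf ?_ (fun f g _ _ hf hg => ?_) fun q r hq => ?_
  · rw [row_zero]; exact one_mem _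
  · rw [row_add]; exact mul_mem hf hg
  · rw [row_single]; exact x_mem_linearStabilizer hlm.symm hq r

section Commutation

variable {l m : Fin n} {f v : Fin n → A}

theorem semiconjBy_col_col (hlm : l ≠ m) (hfl : f l = 0) (hfm : f m = 0) (g : Fin n → A) :
    SemiconjBy (col l f) (col m g) (col m (g + g l • f)) := by
  have := (col_mem_linearStabilizer hlm.symm hfm g).1
  rwa [toMatrix_col hfl, one_add_vecMulVec_mulVec, single_dotProduct, one_mul] at this

theorem semiconjBy_row_row (hlm : l ≠ m) (hvl : v l = 0) (hvm : v m = 0) (g : Fin n → A) :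
    SemiconjBy (row l v) (row m (g + g l • v)) (row m g) := by
  have := (row_mem_linearStabilizer hlm.symm hvm g).2
  rwa [toMatrix_row hvl, vecMul_one_add_vecMulVec, dotProduct_single, mul_one] at this

theorem commute_col_col (hlm : l ≠ m) (hfl : f l = 0) (hfm : f m = 0) {g : Fin n → A}
    (hgl : g l = 0) : Commute (col l f) (col m g) := by
  have := semiconjBy_col_col hlm hfl hfm g
  rwa [hgl, zero_smul, add_zero] at this

theorem commute_row_row (hlm : l ≠ m) (hvl : v l = 0) (hvm : v m = 0) {g : Fin n → A}
    (hgl : g l = 0) : Commute (row l v) (row m g) := by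
  have := semiconjBy_row_row hlm hvl hvm g
  rwa [hgl, zero_smul, add_zero] at this

theorem commute_row_col (hlm : l ≠ m) (hvl : v l = 0) (hvm : v m = 0) (hvf : v ⬝ᵥ f = 0) :
    Commute (row l v) (col m f) := by
  have := (row_mem_linearStabilizer hlm.symm hvm f).1
  rwa [toMatrix_row hvl, one_add_vecMulVec_mulVec, hvf, zero_smul, add_zero] at this

end Commutation

end ColRow

section Bracket

/-- The commutator of a column and a row element with the same index `l`; it lifts the
transvection `1 + f vᵀ` when `f l = v l = 0` and `v ⬝ᵥ f = 0`. -/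
noncomputable def bracket (l : Fin n) (f v : Fin n → A) : SteinbergGroup n A :=
  ⁅col l f, row l v⁆

theorem toMatrix_eq_of_mul_eq {g h : SteinbergGroup n A} {M : Matrix (Fin n) (Fin n) A}
    (e : M * toMatrix h = toMatrix (g * h)) : toMatrix g = M := by
  rw [← mul_one M, ← toMatrix_mul_inv h, ← mul_assoc, e, ← toMatrix_mul, mul_inv_cancel_right]

variable {l m : Fin n} {f v : Fin n → A}

theorem toMatrix_bracket (hfl : f l = 0) (hvl : v l = 0) (hvf : v ⬝ᵥ f = 0) :
    toMatrix (bracket l f v) = 1 + vecMulVec f v := by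
  apply toMatrix_eq_of_mul_eq (h := row l v * col l f)
  rw [bracket, commutatorElement_mul_mul, toMatrix_mul, toMatrix_mul, toMatrix_col hfl,
    toMatrix_row hvl]
  simp only [add_mul, mul_add, one_mul, mul_one, vecMulVec_mul_vecMulVec, hvf, hvl,
    dotProduct_single, Pi.single_eq_same, zero_smul, one_smul, vecMulVec_zero, add_zero]
  abel

theorem bracket_mem_linearStabilizer (hlm : l ≠ m) (hfl : f l = 0) (hvl : v l = 0) :
    bracket m f v ∈ linearStabilizer A l := by
  have hcol := col_mem_linearStabilizer hlm hfl
  have hrow := row_mem_linearStabilizer hlm hvl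
  exact mul_mem (mul_mem (mul_mem hcol hrow) (inv_mem hcol)) (inv_mem hrow)

theorem semiconjBy_bracket_col (hlm : l ≠ m) (hfl : f l = 0) (hvl : v l = 0) (hfm : f m = 0)
    (hvm : v m = 0) (hvf : v ⬝ᵥ f = 0) (w : Fin n → A) :
    SemiconjBy (bracket m f v) (col l w) (col l (w + (v ⬝ᵥ w) • f)) := by
  have := (bracket_mem_linearStabilizer hlm hfl hvl w).1
  rwa [toMatrix_bracket hfm hvm hvf, one_add_vecMulVec_mulVec] at this

theorem semiconjBy_bracket_row (hlm : l ≠ m) (hfl : f l = 0) (hvl : v l = 0) (hfm : f m = 0)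
    (hvm : v m = 0) (hvf : v ⬝ᵥ f = 0) (w : Fin n → A) :
    SemiconjBy (bracket m f v) (row l w) (row l (w - (w ⬝ᵥ f) • v)) := by
  have := (bracket_mem_linearStabilizer hlm hfl hvl (w - (w ⬝ᵥ f) • v)).2
  rwa [toMatrix_bracket hfm hvm hvf, vecMul_one_add_vecMulVec, sub_dotProduct, smul_dotProduct,
    hvf, smul_zero, sub_zero, sub_add_cancel] at this

theorem commute_bracket_row (hlm : l ≠ m) (hfl : f l = 0) (hvl : v l = 0) (hfm : f m = 0)
    (hvm : v m = 0) (hvf : v ⬝ᵥ f = 0) {w : Fin n → A} (hwf : w ⬝ᵥ f = 0) :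
    Commute (bracket m f v) (row l w) := by
  have := semiconjBy_bracket_row hlm hfl hvl hfm hvm hvf w
  rwa [hwf, zero_smul, sub_zero] at this

-- Conjugation by `x_{lm}(s)` carries one bracket to the other, and also fixes it.
theorem bracket_smul_left (hlm : l ≠ m) (hfl : f l = 0) (hvl : v l = 0) (hfm : f m = 0)
    (hvm : v m = 0) (hvf : v ⬝ᵥ f = 0) (s : A) : bracket m (s • f) v = bracket l f (s • v) := by
  have hsfl : (s • f) l = 0 := by simp [hfl]
  have hsfm : (s • f) m = 0 := by simp [hfm]
  have hsvm : (s • v) m = 0 := by simp [hvm]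
  have hfv : Commute (col l f) (row m v) := (commute_row_col hlm.symm hvm hvl hvf).symm
  have hff : Commute (col l f) (col m (s • f)) := commute_col_col hlm hfl hfm hsfl
  have hvv : Commute (row m v) (row l (s • v)) := commute_row_row hlm.symm hvm hvl hsvm
  have hcol : SemiconjBy (x l m s) (col l f * col m (s • f)) (col l f) := by
    have := (semiconjBy_col_col hlm hfl hfm (Pi.single l s)).eq
    rw [Pi.single_eq_same, col_add, col_single] at this
    rw [SemiconjBy, this, hff.eq, mul_assoc]
  have hrow : SemiconjBy (x l m s) (row m v) (row l (s • v) * row m v) := by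
    have := (semiconjBy_row_row hlm.symm hvm hvl (Pi.single m s)).eq
    rw [Pi.single_eq_same, row_add, row_single] at this
    rw [SemiconjBy, ← this, (commute_x_row l m s _).eq, ← mul_assoc, hvv.eq]
  have hconj := semiconjBy_commutatorElement hcol hrow
  rw [commutatorElement_mul_left_of_commute_s1 hfv hff,
    commutatorElement_mul_right_of_commute hfv] at hconj
  refine eq_of_semiconjBy_of_commute hconj ?_
  rw [← row_single]
  exact (commute_bracket_row hlm hsfl hvl hsfm hvm (by simp [hvf]) (by simp [hfm])).symm

theorem bracket_index_swap (hlm : l ≠ m) (hfl : f l = 0) (hvl : v l = 0) (hfm : f m = 0)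
    (hvm : v m = 0) (hvf : v ⬝ᵥ f = 0) : bracket m f v = bracket l f v := by
  simpa using bracket_smul_left hlm hfl hvl hfm hvm hvf 1

theorem bracket_smul_comm (hlm : l ≠ m) (hfl : f l = 0) (hvl : v l = 0) (hfm : f m = 0)
    (hvm : v m = 0) (hvf : v ⬝ᵥ f = 0) (s : A) : bracket l (s • f) v = bracket l f (s • v) := by
  rw [← bracket_smul_left hlm hfl hvl hfm hvm hvf s, bracket_index_swap hlm (by simp [hfl]) hvl
    (by simp [hfm]) hvm (by simp [hvf])]

end Bracket

/-! ### Transvections -/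

section EraseCoord

/-- The vector `u` with its `l`-th coordinate replaced by `0`. -/
def eraseCoord (u : Fin n → A) (l : Fin n) : Fin n → A :=
  Function.update u l 0

variable (u : Fin n → A) {l q : Fin n}

theorem eraseCoord_self (l : Fin n) : eraseCoord u l l = 0 :=
  Function.update_self _ _ _

theorem eraseCoord_of_ne (h : q ≠ l) : eraseCoord u l q = u q :=
  Function.update_of_ne h _ _

variable {u} in
theorem eraseCoord_apply_eq_zero (h : u q = 0) : eraseCoord u l q = 0 := by
  obtain rfl | hq := eq_or_ne q l
  · exact eraseCoord_self u q
  · rw [eraseCoord_of_ne u hq, h]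

theorem eraseCoord_add_single (l : Fin n) : eraseCoord u l + Pi.single l (u l) = u := by
  ext q
  by_cases h : q = l
  · subst h; simp [eraseCoord]
  · simp [eraseCoord, h]

theorem dotProduct_eraseCoord {v : Fin n → A} (hv : v l = 0) : v ⬝ᵥ eraseCoord u l = v ⬝ᵥ u := by
  conv_rhs => rw [← eraseCoord_add_single u l]
  simp [dotProduct_add, hv]

theorem eraseCoord_comm (l m : Fin n) :
    eraseCoord (eraseCoord u l) m = eraseCoord (eraseCoord u m) l := by
  ext q
  simp only [eraseCoord, Function.update_apply]
  grind

theorem eraseCoord_smul (t : A) (l : Fin n) : eraseCoord (t • u) l = t • eraseCoord u l := by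
  ext q
  simp [eraseCoord, Function.update_apply]

end EraseCoord

section TransvAt

/-- A lift to the Steinberg group of the transvection `1 + u vᵀ`, where `v ⬝ᵥ u = 0`, available
when the `l`-th coordinate of `v` vanishes. -/
noncomputable def transvAt (l : Fin n) (u v : Fin n → A) : SteinbergGroup n A :=
  bracket l (eraseCoord u l) v * row l (u l • v)

variable {l m : Fin n} {u v w : Fin n → A}

theorem commutatorElement_x_row (hlm : l ≠ m) (hvl : v l = 0) (hvm : v m = 0) (r : A) :
    ⁅x m l r, row l v⁆ = row m (r • v) := by
  have hsemi := (semiconjBy_row_row hlm hvl hvm (Pi.single l r)).eq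
  rw [Pi.single_eq_same, row_add, row_single] at hsemi
  have hvv : Commute (row l v) (row m (r • v)) := commute_row_row hlm hvl hvm (by simp [hvl])
  rw [commutatorElement_def, ← hsemi, (commute_x_row m l r _).eq, ← mul_assoc, hvv.eq,
    mul_inv_cancel_right, mul_inv_cancel_right]

theorem bracket_eraseCoord_eq (hlm : l ≠ m) (hvl : v l = 0) (hvm : v m = 0) (hvu : v ⬝ᵥ u = 0) :
    bracket l (eraseCoord u l) v =
      bracket l (eraseCoord (eraseCoord u l) m) v * row m (u m • v) := by
  set f := eraseCoord (eraseCoord u l) m with hf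
  have hfl : f l = 0 := eraseCoord_apply_eq_zero (eraseCoord_self u l)
  have hfm : f m = 0 := eraseCoord_self _ m
  have hvf : v ⬝ᵥ f = 0 := by
    rw [hf, dotProduct_eraseCoord _ hvm, dotProduct_eraseCoord _ hvl, hvu]
  have hdecomp : eraseCoord u l = f + Pi.single m (u m) := by
    rw [hf, ← eraseCoord_of_ne u hlm.symm, eraseCoord_add_single]
  have hcol : Commute (col l f) (row m (u m • v)) :=
    (commute_row_col hlm.symm (by simp [hvm]) (by simp [hvl]) (by simp [hvf])).symm
  have hrow : Commute (bracket l f v) (row m (u m • v)) :=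
    commute_bracket_row hlm.symm hfm hvm hfl hvl hvf (by simp [hvf])
  rw [bracket, hdecomp, col_add, col_single, commutatorElement_mul_left_eq_conj_mul,
    commutatorElement_x_row hlm hvl hvm, conj_eq_self_of_commute hcol]
  exact hrow.symm.eq

theorem transvAt_eq (hlm : l ≠ m) (hvl : v l = 0) (hvm : v m = 0) (hvu : v ⬝ᵥ u = 0) :
    transvAt l u v =
      bracket l (eraseCoord (eraseCoord u l) m) v * row m (u m • v) * row l (u l • v) := by
  rw [transvAt, bracket_eraseCoord_eq hlm hvl hvm hvu]

theorem transvAt_index_swap (hvl : v l = 0) (hvm : v m = 0) (hvu : v ⬝ᵥ u = 0) :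
    transvAt l u v = transvAt m u v := by
  obtain rfl | hlm := eq_or_ne l m
  · rfl
  have hrow : Commute (row l (u l • v)) (row m (u m • v)) :=
    commute_row_row hlm (by simp [hvl]) (by simp [hvm]) (by simp [hvl])
  have hbracket : bracket l (eraseCoord (eraseCoord u m) l) v =
      bracket m (eraseCoord (eraseCoord u m) l) v :=
    (bracket_index_swap hlm (eraseCoord_self _ l) hvl
      (eraseCoord_apply_eq_zero (eraseCoord_self u m)) hvm
      (by rw [dotProduct_eraseCoord _ hvl, dotProduct_eraseCoord _ hvm, hvu])).symm
  rw [transvAt_eq hlm hvl hvm hvu, transvAt_eq hlm.symm hvm hvl hvu, mul_assoc, mul_assoc, hrow.eq,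
    eraseCoord_comm u l m, hbracket]

theorem toMatrix_transvAt (hvl : v l = 0) (hvu : v ⬝ᵥ u = 0) :
    toMatrix (transvAt l u v) = 1 + vecMulVec u v := by
  have hsv : (u l • v) l = 0 := by simp [hvl]
  have hve : v ⬝ᵥ eraseCoord u l = 0 := by rw [dotProduct_eraseCoord _ hvl, hvu]
  rw [transvAt, toMatrix_mul, toMatrix_bracket (eraseCoord_self u l) hvl hve, toMatrix_row hsv,
    one_add_vecMulVec_mul_one_add_vecMulVec, dotProduct_single, hvl, zero_mul, zero_smul, add_zero,
    vecMulVec_smul, ← smul_vecMulVec, ← Pi.single_smul', smul_eq_mul, mul_one, add_assoc,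
    ← add_vecMulVec, eraseCoord_add_single]

theorem semiconjBy_x_transvAt {h k : Fin n} (hhk : h ≠ k) (hhl : h ≠ l) (hkl : k ≠ l) (s : A)
    (u v : Fin n → A) : SemiconjBy (x h k s) (transvAt l u v)
      (transvAt l (u + Pi.single h (s * u k)) (v - Pi.single k (s * v h))) := by
  have hrow (f : Fin n → A) :
      SemiconjBy (x h k s) (row l f) (row l (f - Pi.single k (s * f h))) := by
    have := semiconjBy_x_row hhk hhl hkl s (f - Pi.single k (s * f h))
    rwa [Pi.sub_apply, Pi.single_eq_of_ne hhk, sub_zero, mul_comm (f h) s, sub_add_cancel] at this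
  have herase : eraseCoord (u + Pi.single h (s * u k)) l =
      eraseCoord u l + Pi.single h (s * eraseCoord u l k) := by
    rw [eraseCoord_of_ne u hkl]
    ext q
    simp only [eraseCoord, Function.update_apply, Pi.single_apply, Pi.add_apply]
    grind
  have hul : (u + Pi.single h (s * u k) : Fin n → A) l = u l := by simp [hhl.symm]
  have hsmul : u l • (v - Pi.single k (s * v h)) = u l • v - Pi.single k (s * (u l • v) h) := by
    rw [smul_sub, ← Pi.single_smul', Pi.smul_apply, smul_eq_mul, smul_eq_mul, mul_left_comm]
  rw [transvAt, transvAt, herase, hul, hsmul]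
  exact (semiconjBy_commutatorElement (semiconjBy_x_col hhk hhl hkl s _) (hrow v)).mul_right
    (hrow _)

/-- The conditions on `w` under which `transvAt l u` is additive at `w`: besides those making
`transvAt l u w` a lift of `1 + u wᵀ`, its bracket factor acts linearly on the `l`-th row. -/
structure AdmissibleAt (l : Fin n) (u w : Fin n → A) : Prop where
  apply_eq_zero : w l = 0
  dotProduct_eq_zero : w ⬝ᵥ u = 0
  bracket_mem : bracket l (eraseCoord u l) w ∈ linearStabilizer A l

theorem admissibleAt_of_ne (hlm : l ≠ m) (hvl : v l = 0) (hvm : v m = 0) (hvu : v ⬝ᵥ u = 0) :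
    AdmissibleAt l u v where
  apply_eq_zero := hvl
  dotProduct_eq_zero := hvu
  bracket_mem := by
    have hfl : eraseCoord (eraseCoord u l) m l = 0 := eraseCoord_apply_eq_zero (eraseCoord_self u l)
    rw [bracket_eraseCoord_eq hlm hvl hvm hvu, ← bracket_index_swap hlm hfl hvl
      (eraseCoord_self _ m) hvm
      (by rw [dotProduct_eraseCoord _ hvm, dotProduct_eraseCoord _ hvl, hvu])]
    exact mul_mem (bracket_mem_linearStabilizer hlm hfl hvl)
      (row_mem_linearStabilizer hlm (by simp [hvl]))

theorem AdmissibleAt.commute_row (hw : AdmissibleAt l u w) (hvl : v l = 0) (hvu : v ⬝ᵥ u = 0) :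
    Commute (bracket l (eraseCoord u l) w) (row l v) := by
  have := (hw.bracket_mem v).2
  rwa [toMatrix_bracket (eraseCoord_self u l) hw.apply_eq_zero
    (by rw [dotProduct_eraseCoord _ hw.apply_eq_zero, hw.dotProduct_eq_zero]),
    vecMul_one_add_vecMulVec, dotProduct_eraseCoord _ hvl, hvu, zero_smul, add_zero] at this

theorem AdmissibleAt.bracket_add (hw : AdmissibleAt l u w) (hvl : v l = 0) (hvu : v ⬝ᵥ u = 0) :
    bracket l (eraseCoord u l) (v + w) =
      bracket l (eraseCoord u l) v * bracket l (eraseCoord u l) w := by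
  have hconj := conj_eq_self_of_commute (hw.commute_row hvl hvu).symm
  rw [bracket] at hconj
  rw [bracket, row_add, commutatorElement_mul_right_eq_mul_conj, mul_assoc, mul_assoc,
    ← mul_assoc (row l v), hconj]
  rfl

theorem AdmissibleAt.add (hv : AdmissibleAt l u v) (hw : AdmissibleAt l u w) :
    AdmissibleAt l u (v + w) where
  apply_eq_zero := by rw [Pi.add_apply, hv.apply_eq_zero, hw.apply_eq_zero, add_zero]
  dotProduct_eq_zero := by
    rw [add_dotProduct, hv.dotProduct_eq_zero, hw.dotProduct_eq_zero, add_zero]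
  bracket_mem := by
    rw [hw.bracket_add hv.apply_eq_zero hv.dotProduct_eq_zero]
    exact mul_mem hv.bracket_mem hw.bracket_mem

theorem AdmissibleAt.transvAt_add (hw : AdmissibleAt l u w) (hvl : v l = 0) (hvu : v ⬝ᵥ u = 0) :
    transvAt l u (v + w) = transvAt l u v * transvAt l u w := by
  have hcomm : Commute (bracket l (eraseCoord u l) w) (row l (u l • v)) :=
    hw.commute_row (by simp [hvl]) (by simp [hvu])
  simp only [transvAt, hw.bracket_add hvl hvu, smul_add, row_add]
  rw [mul_assoc, ← mul_assoc _ (row l (u l • v)), hcomm.eq]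
  group

theorem AdmissibleAt.commute_transvAt (hv : AdmissibleAt l u v) (hw : AdmissibleAt l u w) :
    Commute (transvAt l u v) (transvAt l u w) := by
  rw [commute_iff_eq, ← hw.transvAt_add hv.apply_eq_zero hv.dotProduct_eq_zero,
    ← hv.transvAt_add hw.apply_eq_zero hw.dotProduct_eq_zero, add_comm]

end TransvAt

/-! ### Koszul transvections -/

section Koszul

theorem exists_ne_ne_ne [hn : Fact (4 ≤ n)] (a b c : Fin n) : ∃ l, l ≠ a ∧ l ≠ b ∧ l ≠ c := by
  have hcard : ({a, b, c} : Finset (Fin n)).card < (Finset.univ : Finset (Fin n)).card := by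
    rw [Finset.card_univ, Fintype.card_fin]
    exact Finset.card_le_three.trans_lt hn.out
  obtain ⟨l, -, hl⟩ := Finset.exists_mem_notMem_of_card_lt_card hcard
  exact ⟨l, by simpa using hl⟩

theorem bracket_zero (l : Fin n) (f : Fin n → A) : bracket l f 0 = 1 := by
  simp [bracket, row_zero]

theorem transvAt_zero (l : Fin n) (u : Fin n → A) : transvAt l u 0 = 1 := by
  simp [transvAt, bracket_zero, row_zero]

theorem transvAt_smul {l m : Fin n} {u v : Fin n → A} (hlm : l ≠ m) (hvl : v l = 0)
    (hvm : v m = 0) (hvu : v ⬝ᵥ u = 0) (s : A) : transvAt l (s • u) v = transvAt l u (s • v) := by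
  rw [transvAt_eq hlm hvl hvm (by simp [hvu]),
    transvAt_eq hlm (by simp [hvl]) (by simp [hvm]) (by simp [hvu]), eraseCoord_smul,
    eraseCoord_smul, bracket_smul_comm hlm (eraseCoord_apply_eq_zero (eraseCoord_self u l)) hvl
      (eraseCoord_self _ m) hvm
      (by rw [dotProduct_eraseCoord _ hvm, dotProduct_eraseCoord _ hvl, hvu])]
  simp only [Pi.smul_apply, smul_eq_mul, smul_smul, mul_comm]

/-- The Koszul syzygy `c (u_m e_p - u_p e_m)`, a vector orthogonal to `u`. -/
def koszulVec (u : Fin n → A) (p m : Fin n) (c : A) : Fin n → A :=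
  Pi.single p (c * u m) - Pi.single m (c * u p)

variable (u : Fin n → A)

theorem koszulVec_dotProduct (p m : Fin n) (c : A) : koszulVec u p m c ⬝ᵥ u = 0 := by
  simp only [koszulVec, sub_dotProduct, single_dotProduct]
  ring

theorem koszulVec_of_ne {p m q : Fin n} (hp : q ≠ p) (hm : q ≠ m) (c : A) :
    koszulVec u p m c q = 0 := by
  simp [koszulVec, hp, hm]

theorem koszulVec_add (p m : Fin n) (c d : A) :
    koszulVec u p m (c + d) = koszulVec u p m c + koszulVec u p m d := by
  simp only [koszulVec, add_mul, Pi.single_add]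
  abel

theorem koszulVec_self (p : Fin n) (c : A) : koszulVec u p p c = 0 :=
  sub_self _

theorem koszulVec_swap (p m : Fin n) (c : A) : koszulVec u p m c = koszulVec u m p (-c) := by
  simp [koszulVec, sub_eq_add_neg, add_comm, Pi.single_neg]

theorem smul_koszulVec (s : A) (p m : Fin n) (c : A) :
    s • koszulVec u p m c = koszulVec u p m (s * c) := by
  simp only [koszulVec, smul_sub, ← Pi.single_smul', smul_eq_mul, mul_assoc]

theorem koszulVec_smul (s : A) (p m : Fin n) (c : A) :
    koszulVec (s • u) p m c = koszulVec u p m (s * c) := by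
  simp only [koszulVec, Pi.smul_apply, smul_eq_mul, mul_left_comm c s, mul_assoc]

theorem koszulVec_add_single {h p m : Fin n} (hp : h ≠ p) (hm : h ≠ m) (c r : A) :
    koszulVec (u + Pi.single h r) p m c = koszulVec u p m c := by
  simp [koszulVec, hp.symm, hm.symm]

variable {u} in
theorem koszulVec_sub_single {p k m : Fin n} (hpk : p ≠ k) (hpm : p ≠ m) {c s : A} :
    koszulVec u p m c - Pi.single k (s * koszulVec u p m c p) =
      koszulVec (u + Pi.single p (s * u k)) p m c +
        koszulVec (u + Pi.single p (s * u k)) m k (c * s) := by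
  ext a
  simp only [koszulVec, Pi.add_apply, Pi.sub_apply, Pi.single_apply]
  grind

open Classical in
/-- The lift to the Steinberg group of the transvection `1 + u kᵀ`, where `k` is the Koszul vector
`koszulVec u p m c`; it does not depend on the auxiliary index chosen. -/
noncomputable def koszulTransv (p m : Fin n) (c : A) : SteinbergGroup n A :=
  if h : ∃ l, l ≠ p ∧ l ≠ m then transvAt h.choose u (koszulVec u p m c) else 1

theorem koszulTransv_eq {l p m : Fin n} (hp : l ≠ p) (hm : l ≠ m) (c : A) :
    koszulTransv u p m c = transvAt l u (koszulVec u p m c) := by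
  have h : ∃ l, l ≠ p ∧ l ≠ m := ⟨l, hp, hm⟩
  rw [koszulTransv, dif_pos h]
  exact transvAt_index_swap (koszulVec_of_ne u h.choose_spec.1 h.choose_spec.2 c)
    (koszulVec_of_ne u hp hm c) (koszulVec_dotProduct u p m c)

variable [Fact (4 ≤ n)]

theorem admissibleAt_koszulVec {l p m : Fin n} (hp : l ≠ p) (hm : l ≠ m) (c : A) :
    AdmissibleAt l u (koszulVec u p m c) := by
  obtain ⟨q, hql, hqp, hqm⟩ := exists_ne_ne_ne l p m
  exact admissibleAt_of_ne hql.symm (koszulVec_of_ne u hp hm c) (koszulVec_of_ne u hqp hqm c)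
    (koszulVec_dotProduct u p m c)

theorem koszulTransv_add (p m : Fin n) (c d : A) :
    koszulTransv u p m (c + d) = koszulTransv u p m c * koszulTransv u p m d := by
  obtain ⟨l, hp, hm, -⟩ := exists_ne_ne_ne p m m
  simp only [koszulTransv_eq u hp hm, koszulVec_add]
  exact (admissibleAt_koszulVec u hp hm d).transvAt_add (koszulVec_of_ne u hp hm c)
    (koszulVec_dotProduct u p m c)

theorem koszulTransv_zero (p m : Fin n) : koszulTransv u p m 0 = 1 := by
  simpa using koszulTransv_add u p m 0 0

theorem koszulTransv_self (p : Fin n) (c : A) : koszulTransv u p p c = 1 := by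
  obtain ⟨l, hp, -⟩ := exists_ne_ne_ne p p p
  rw [koszulTransv_eq u hp hp, koszulVec_self, transvAt_zero]

theorem koszulTransv_swap (p m : Fin n) (c : A) :
    koszulTransv u p m c = koszulTransv u m p (-c) := by
  obtain ⟨l, hp, hm, -⟩ := exists_ne_ne_ne p m m
  rw [koszulTransv_eq u hp hm, koszulTransv_eq u hm hp, koszulVec_swap]

theorem toMatrix_koszulTransv (p m : Fin n) (c : A) :
    toMatrix (koszulTransv u p m c) = 1 + vecMulVec u (koszulVec u p m c) := by
  obtain ⟨l, hp, hm, -⟩ := exists_ne_ne_ne p m m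
  rw [koszulTransv_eq u hp hm,
    toMatrix_transvAt (koszulVec_of_ne u hp hm c) (koszulVec_dotProduct u p m c)]

theorem koszulTransv_mul_koszulTransv (p m q : Fin n) (c : A) :
    koszulTransv u p q (c * u m) * koszulTransv u m q (-(c * u p)) =
      koszulTransv u p m (c * u q) := by
  obtain ⟨l, hp, hm, hq⟩ := exists_ne_ne_ne p m q
  have hvec : koszulVec u p m (c * u q) =
      koszulVec u p q (c * u m) + koszulVec u m q (-(c * u p)) := by
    ext a
    simp only [koszulVec, Pi.add_apply, Pi.sub_apply, Pi.single_apply]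
    grind
  rw [koszulTransv_eq u hp hq, koszulTransv_eq u hm hq, koszulTransv_eq u hp hm, hvec]
  exact ((admissibleAt_koszulVec u hm hq _).transvAt_add (koszulVec_of_ne u hp hq _)
    (koszulVec_dotProduct u p q _)).symm

theorem koszulTransv_smul (p m : Fin n) (c s : A) :
    koszulTransv (s • u) p m c = koszulTransv u p m (s * (s * c)) := by
  obtain ⟨l, hp, hm, -⟩ := exists_ne_ne_ne p m m
  obtain ⟨q, hql, hqp, hqm⟩ := exists_ne_ne_ne l p m
  rw [koszulTransv_eq _ hp hm, koszulTransv_eq _ hp hm, koszulVec_smul,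
    transvAt_smul hql.symm (koszulVec_of_ne u hp hm _) (koszulVec_of_ne u hqp hqm _)
      (koszulVec_dotProduct u p m _), smul_koszulVec]

theorem semiconjBy_x_koszulTransv_of_ne {h k p m : Fin n} (hhk : h ≠ k) (hp : h ≠ p) (hm : h ≠ m)
    (c s : A) : SemiconjBy (x h k s) (koszulTransv u p m c)
      (koszulTransv (u + Pi.single h (s * u k)) p m c) := by
  have herase : eraseCoord (u + Pi.single h (s * u k)) h = eraseCoord u h := by
    ext q
    simp only [eraseCoord, Function.update_apply, Pi.single_apply, Pi.add_apply]
    grind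
  have huh : (u + Pi.single h (s * u k) : Fin n → A) h = u h + s * u k := by simp
  have hadm := admissibleAt_koszulVec u hp hm c
  rw [koszulTransv_eq _ hp hm, koszulTransv_eq _ hp hm, koszulVec_add_single u hp hm, transvAt,
    transvAt, herase, huh, add_smul, row_add]
  set v := koszulVec u p m c
  set b := bracket h (eraseCoord u h) v
  have hb : b * (x h k s * row h ((s * u k) • v)) = x h k s * b := by
    have := (hadm.bracket_mem (Pi.single k s)).2
    rwa [toMatrix_bracket (eraseCoord_self u h) hadm.apply_eq_zero
      (by rw [dotProduct_eraseCoord _ hadm.apply_eq_zero, hadm.dotProduct_eq_zero]),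
      vecMul_one_add_vecMulVec, single_dotProduct, eraseCoord_of_ne u hhk.symm, row_add,
      row_single] at this
  calc x h k s * (b * row h (u h • v))
      = b * (x h k s * (row h ((s * u k) • v) * row h (u h • v))) := by
        rw [← mul_assoc, ← hb, mul_assoc, mul_assoc]
    _ = b * (row h (u h • v) * row h ((s * u k) • v)) * x h k s := by
        rw [(commute_row h _ _).eq, ← row_add, (commute_x_row h k s _).eq, mul_assoc]

theorem semiconjBy_x_koszulTransv_left {p k m : Fin n} (hpk : p ≠ k) (hpm : p ≠ m) (c s : A) :
    SemiconjBy (x p k s) (koszulTransv u p m c)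
      (koszulTransv (u + Pi.single p (s * u k)) p m c *
        koszulTransv (u + Pi.single p (s * u k)) m k (c * s)) := by
  obtain ⟨l, hlp, hlm, hlk⟩ := exists_ne_ne_ne p m k
  have hsemi := semiconjBy_x_transvAt hpk hlp.symm hlk.symm s u (koszulVec u p m c)
  rwa [koszulVec_sub_single hpk hpm, (admissibleAt_koszulVec _ hlm hlk _).transvAt_add
    (koszulVec_of_ne _ hlp hlm _) (koszulVec_dotProduct _ p m c), ← koszulTransv_eq _ hlp hlm,
    ← koszulTransv_eq _ hlp hlm, ← koszulTransv_eq _ hlm hlk] at hsemi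

end Koszul

section Commute

theorem eq_single_add_single {k l : Fin n} (hkl : k ≠ l) {b : Fin n → A}
    (hb : ∀ q, q ≠ k → q ≠ l → b q = 0) : b = Pi.single k (b k) + Pi.single l (b l) := by
  ext q
  simp only [Pi.add_apply, Pi.single_apply]
  grind

theorem commutatorElement_col_mul_col_row_mul_row {i j : Fin n} {g w : Fin n → A} (hij : i ≠ j)
    (hgi : g i = 0) (hgj : g j = 0) (hwi : w i = 0) (hwj : w j = 0) (hwg : w ⬝ᵥ g = 0)
    (α β γ δ : A) :
    ⁅col i (α • g) * col j (β • g), row i (γ • w) * row j (δ • w)⁆ =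
      bracket i g ((α * γ + β * δ) • w) := by
  have hcc : Commute (col i (α • g)) (col j (β • g)) :=
    commute_col_col hij (by simp [hgi]) (by simp [hgj]) (by simp [hgi])
  have hrr : Commute (row i (γ • w)) (row j (δ • w)) :=
    commute_row_row hij (by simp [hwi]) (by simp [hwj]) (by simp [hwi])
  have hcr : Commute (col i (α • g)) (row j (δ • w)) :=
    (commute_row_col hij.symm (by simp [hwj]) (by simp [hwi]) (by simp [hwg])).symm
  have hrc : Commute (col j (β • g)) (row i (γ • w)) :=
    (commute_row_col hij (by simp [hwi]) (by simp [hwj]) (by simp [hwg])).symm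
  have hj : bracket j (β • g) (δ • w) = bracket i g ((β * δ) • w) := by
    rw [bracket_smul_left hij hgi (by simp [hwi]) hgj (by simp [hwj]) (by simp [hwg]), smul_smul]
  have hi : bracket i (α • g) (γ • w) = bracket i g ((α * γ) • w) := by
    rw [bracket_smul_comm hij hgi (by simp [hwi]) hgj (by simp [hwj]) (by simp [hwg]), smul_smul]
  have hadd := (admissibleAt_of_ne (u := g) (v := (α * γ) • w) hij (by simp [hwi]) (by simp [hwj])
    (by simp [hwg])).bracket_add (v := (β * δ) • w) (by simp [hwi]) (by simp [hwg])
  have herase : eraseCoord g i = g := by rw [eraseCoord, ← hgi, Function.update_eq_self]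
  rw [herase, ← add_smul, add_comm (β * δ)] at hadd
  rw [commutatorElement_mul_left_eq_conj_mul, commutatorElement_mul_right_of_commute hcr, hrr.eq,
    commutatorElement_mul_right_of_commute hrc,
    conj_eq_self_of_commute (semiconjBy_commutatorElement hcc hcr), hadd, ← hi, ← hj]
  rfl

theorem row_mul_row_eq_col_mul_col {i j k l : Fin n} {a b : Fin n → A} (hij : i ≠ j) (hkl : k ≠ l)
    (hlj : l ≠ j) (hik : i ≠ k) (ha : ∀ q, q ≠ i → q ≠ j → a q = 0)
    (hb : ∀ q, q ≠ k → q ≠ l → b q = 0) :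
    row i (a i • b) * row j (a j • b) = col k (b k • a) * col l (b l • a) := by
  have hrow (q : Fin n) (s : A) : row q (s • b) = x q k (s * b k) * x q l (s * b l) := by
    conv_lhs => rw [eq_single_add_single hkl hb]
    simp only [smul_add, row_add, ← Pi.single_smul', row_single, smul_eq_mul]
  have hcol (q : Fin n) (s : A) : col q (s • a) = x i q (a i * s) * x j q (a j * s) := by
    conv_lhs => rw [eq_single_add_single hij ha]
    simp only [smul_add, col_add, ← Pi.single_smul', col_single, smul_eq_mul, mul_comm s]
  simp only [hrow, hcol, mul_assoc]
  rw [← mul_assoc (x i l _), (commute_x hlj hik _ _).eq, mul_assoc]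

/-- Two transvections `1 + f vᵀ` and `1 + g wᵀ` supported on the disjoint pairs of coordinates
`{i, j}` and `{k, l}`. -/
structure DisjointTransvections (i j k l : Fin n) (f v g w : Fin n → A) : Prop where
  hij : i ≠ j
  hik : i ≠ k
  hil : i ≠ l
  hjk : j ≠ k
  hjl : j ≠ l
  hkl : k ≠ l
  hf : ∀ q, q ≠ i → q ≠ j → f q = 0
  hv : ∀ q, q ≠ i → q ≠ j → v q = 0
  hg : ∀ q, q ≠ k → q ≠ l → g q = 0
  hw : ∀ q, q ≠ k → q ≠ l → w q = 0
  hvf : v ⬝ᵥ f = 0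
  hwg : w ⬝ᵥ g = 0

namespace DisjointTransvections

variable {i j k l : Fin n} {f v g w : Fin n → A} (D : DisjointTransvections i j k l f v g w)

include D

theorem symm : DisjointTransvections k l i j g w f v where
  hij := D.hkl
  hik := D.hik.symm
  hil := D.hjk.symm
  hjk := D.hil.symm
  hjl := D.hjl.symm
  hkl := D.hij
  hf := D.hg
  hv := D.hw
  hg := D.hf
  hw := D.hv
  hvf := D.hwg
  hwg := D.hvf

theorem swap_right : DisjointTransvections i j l k f v g w where
  hij := D.hij
  hik := D.hil
  hil := D.hik
  hjk := D.hjl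
  hjl := D.hjk
  hkl := D.hkl.symm
  hf := D.hf
  hv := D.hv
  hg q hql hqk := D.hg q hqk hql
  hw q hql hqk := D.hw q hqk hql
  hvf := D.hvf
  hwg := D.hwg

theorem left_apply_eq_zero : f k = 0 :=
  D.hf k D.hik.symm D.hjk.symm

theorem right_apply_eq_zero : v k = 0 :=
  D.hv k D.hik.symm D.hjk.symm

theorem bracket_swap : bracket k f v = bracket l f v :=
  bracket_index_swap D.hkl.symm D.swap_right.left_apply_eq_zero D.swap_right.right_apply_eq_zero
    D.left_apply_eq_zero D.right_apply_eq_zero D.hvf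

theorem semiconjBy_bracket_col_other (h : Fin n → A) :
    SemiconjBy (bracket k f v) (col l h) (col l (h + (v ⬝ᵥ h) • f)) :=
  semiconjBy_bracket_col D.hkl.symm D.swap_right.left_apply_eq_zero
    D.swap_right.right_apply_eq_zero D.left_apply_eq_zero D.right_apply_eq_zero D.hvf h

theorem semiconjBy_bracket_col_self (h : Fin n → A) :
    SemiconjBy (bracket k f v) (col k h) (col k (h + (v ⬝ᵥ h) • f)) := by
  rw [D.bracket_swap]
  exact D.swap_right.semiconjBy_bracket_col_other h

theorem semiconjBy_bracket_row_other (h : Fin n → A) :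
    SemiconjBy (bracket k f v) (row l h) (row l (h - (h ⬝ᵥ f) • v)) :=
  semiconjBy_bracket_row D.hkl.symm D.swap_right.left_apply_eq_zero
    D.swap_right.right_apply_eq_zero D.left_apply_eq_zero D.right_apply_eq_zero D.hvf h

theorem semiconjBy_bracket_row_self (h : Fin n → A) :
    SemiconjBy (bracket k f v) (row k h) (row k (h - (h ⬝ᵥ f) • v)) := by
  rw [D.bracket_swap]
  exact D.swap_right.semiconjBy_bracket_row_other h

theorem dotProduct_eq : v ⬝ᵥ f = v i * f i + v j * f j := by
  rw [eq_single_add_single D.hij D.hv]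
  simp [D.hij, D.hij.symm, add_dotProduct]

theorem commute_bracket_row_mul_row :
    Commute (bracket k f v) (row i (f i • w) * row j (f j • w)) := by
  rw [row_mul_row_eq_col_mul_col D.hij D.hkl D.hjl.symm D.hik D.hf D.hw]
  have hk := D.semiconjBy_bracket_col_self (w k • f)
  have hl := D.semiconjBy_bracket_col_other (w l • f)
  rw [dotProduct_smul, D.hvf, smul_zero, zero_smul, add_zero] at hk hl
  exact Commute.mul_right hk hl

theorem commute_row_mul_row :
    Commute (row k (g k • v) * row l (g l • v)) (row i (f i • w) * row j (f j • w)) := by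
  rw [row_mul_row_eq_col_mul_col D.hkl D.hij D.hjl D.hik.symm D.hg D.hv,
    ← commutatorElement_eq_one_iff_commute,
    commutatorElement_col_mul_col_row_mul_row D.hij D.symm.left_apply_eq_zero
      D.symm.swap_right.left_apply_eq_zero D.symm.right_apply_eq_zero
      D.symm.swap_right.right_apply_eq_zero D.hwg, ← D.dotProduct_eq, D.hvf, zero_smul,
    bracket_zero]

theorem semiconjBy_bracket_col_mul_col : SemiconjBy (bracket i g w) (col k f)
    (col k ((1 - g k * w k) • f) * col l ((-(g k * w l)) • f)) := by
  have hcol : col k f = row i (f i • Pi.single k 1) * row j (f j • Pi.single k 1) := by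
    rw [row_mul_row_eq_col_mul_col (b := Pi.single k 1) D.hij D.hkl D.hjl.symm D.hik D.hf
      fun q hq _ => Pi.single_eq_of_ne hq _]
    simp [D.hkl.symm, col_zero]
  have hrows := row_mul_row_eq_col_mul_col (b := Pi.single k 1 - g k • w) D.hij D.hkl D.hjl.symm
    D.hik D.hf fun q hqk hql => by simp [hqk, D.hw q hqk hql]
  simp only [Pi.sub_apply, Pi.single_eq_same, Pi.smul_apply, smul_eq_mul,
    Pi.single_eq_of_ne D.hkl.symm, zero_sub] at hrows
  have hi := D.symm.semiconjBy_bracket_row_self (f i • Pi.single k 1)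
  have hj := D.symm.semiconjBy_bracket_row_other (f j • Pi.single k 1)
  rw [smul_dotProduct, single_dotProduct, one_mul, smul_assoc, ← smul_sub] at hi hj
  rw [hcol, ← hrows]
  exact hi.mul_right hj

theorem semiconjBy_bracket_row_mul_row : SemiconjBy (bracket i g w) (row k v)
    (row k ((1 + w k * g k) • v) * row l ((w k * g l) • v)) := by
  have hrow : row k v = col i (v i • Pi.single k 1) * col j (v j • Pi.single k 1) := by
    rw [← row_mul_row_eq_col_mul_col (a := Pi.single k 1) D.hkl D.hij D.hjl D.hik.symm
      (fun q hq _ => Pi.single_eq_of_ne hq _) D.hv]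
    simp [D.hkl.symm, row_zero]
  have hcols := row_mul_row_eq_col_mul_col (a := Pi.single k 1 + w k • g) D.hkl D.hij D.hjl
    D.hik.symm (fun q hqk hql => by simp [hqk, D.hg q hqk hql]) D.hv
  simp only [Pi.add_apply, Pi.single_eq_same, Pi.smul_apply, smul_eq_mul,
    Pi.single_eq_of_ne D.hkl.symm, zero_add] at hcols
  have hi := D.symm.semiconjBy_bracket_col_self (v i • Pi.single k 1)
  have hj := D.symm.semiconjBy_bracket_col_other (v j • Pi.single k 1)
  rw [dotProduct_smul, dotProduct_single, mul_one, smul_assoc, ← smul_add] at hi hj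
  rw [hrow, hcols]
  exact hi.mul_right hj

theorem commute_bracket_bracket : Commute (bracket k f v) (bracket i g w) := by
  have hconj := semiconjBy_commutatorElement D.semiconjBy_bracket_col_mul_col
    D.semiconjBy_bracket_row_mul_row
  have hwg : w k * g k + w l * g l = 0 := D.symm.dotProduct_eq ▸ D.hwg
  have hcoeff : (1 - g k * w k) * (1 + w k * g k) + -(g k * w l) * (w k * g l) = 1 := by
    linear_combination -(g k * w k) * hwg
  rw [commutatorElement_col_mul_col_row_mul_row D.hkl D.left_apply_eq_zero
    D.swap_right.left_apply_eq_zero D.right_apply_eq_zero D.swap_right.right_apply_eq_zero D.hvf,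
    hcoeff, one_smul] at hconj
  exact Commute.symm hconj

end DisjointTransvections

theorem disjointTransvections_koszulVec {i j k l : Fin n} (hij : i ≠ j) (hik : i ≠ k)
    (hil : i ≠ l) (hjk : j ≠ k) (hjl : j ≠ l) (hkl : k ≠ l)
    (hex : ∀ q, q ≠ i → q ≠ j → q ≠ k → q = l) (u : Fin n → A) (c d : A) :
    DisjointTransvections i j k l (eraseCoord (eraseCoord u k) l) (koszulVec u i j c)
      (eraseCoord (eraseCoord u i) j) (koszulVec u k l d) where
  hij := hij
  hik := hik
  hil := hil
  hjk := hjk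
  hjl := hjl
  hkl := hkl
  hf q hqi hqj := by
    obtain rfl | hqk := eq_or_ne q k
    · exact eraseCoord_apply_eq_zero (eraseCoord_self u q)
    · rw [hex q hqi hqj hqk, eraseCoord_self]
  hv q hqi hqj := koszulVec_of_ne u hqi hqj c
  hg q hqk hql := by
    obtain rfl | hqi := eq_or_ne q i
    · exact eraseCoord_apply_eq_zero (eraseCoord_self u q)
    obtain rfl | hqj := eq_or_ne q j
    · exact eraseCoord_self _ q
    exact absurd (hex q hqi hqj hqk) hql
  hw q hqk hql := koszulVec_of_ne u hqk hql d
  hvf := by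
    rw [dotProduct_eraseCoord _ (koszulVec_of_ne u hil.symm hjl.symm c),
      dotProduct_eraseCoord _ (koszulVec_of_ne u hik.symm hjk.symm c), koszulVec_dotProduct]
  hwg := by
    rw [dotProduct_eraseCoord _ (koszulVec_of_ne u hjk hjl d),
      dotProduct_eraseCoord _ (koszulVec_of_ne u hik hil d), koszulVec_dotProduct]

theorem koszulTransv_eq_bracket_mul {i j k l : Fin n} (hik : i ≠ k) (hil : i ≠ l) (hjk : j ≠ k)
    (hjl : j ≠ l) (hkl : k ≠ l) (u : Fin n → A) (c : A) :
    koszulTransv u i j c = bracket k (eraseCoord (eraseCoord u k) l) (koszulVec u i j c) *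
      (row k (u k • koszulVec u i j c) * row l (u l • koszulVec u i j c)) := by
  have hvk : koszulVec u i j c k = 0 := koszulVec_of_ne u hik.symm hjk.symm c
  have hvl : koszulVec u i j c l = 0 := koszulVec_of_ne u hil.symm hjl.symm c
  have hrows : Commute (row k (u k • koszulVec u i j c)) (row l (u l • koszulVec u i j c)) :=
    commute_row_row hkl (by simp [hvk]) (by simp [hvl]) (by simp [hvk])
  rw [koszulTransv_eq u hik.symm hjk.symm, transvAt_eq hkl hvk hvl (koszulVec_dotProduct u i j c),
    mul_assoc, hrows.eq]

theorem commute_koszulTransv_of_forall {i j k l : Fin n} (hij : i ≠ j) (hik : i ≠ k)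
    (hil : i ≠ l) (hjk : j ≠ k) (hjl : j ≠ l) (hkl : k ≠ l)
    (hex : ∀ q, q ≠ i → q ≠ j → q ≠ k → q = l) (u : Fin n → A) (c d : A) :
    Commute (koszulTransv u i j c) (koszulTransv u k l d) := by
  have D := disjointTransvections_koszulVec hij hik hil hjk hjl hkl hex u c d
  have hleft := D.commute_bracket_row_mul_row
  have hright := D.symm.commute_bracket_row_mul_row
  have hrows := D.commute_row_mul_row
  simp only [eraseCoord_of_ne _ hik, eraseCoord_of_ne _ hil,
    eraseCoord_of_ne _ hjk, eraseCoord_of_ne _ hjl, eraseCoord_of_ne _ hik.symm,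
    eraseCoord_of_ne _ hil.symm, eraseCoord_of_ne _ hjk.symm, eraseCoord_of_ne _ hjl.symm]
    at hleft hright hrows
  rw [koszulTransv_eq_bracket_mul hik hil hjk hjl hkl,
    koszulTransv_eq_bracket_mul hik.symm hjk.symm hil.symm hjl.symm hij]
  exact (D.commute_bracket_bracket.mul_right hleft).mul_left (hright.symm.mul_right hrows)

theorem commute_koszulTransv [Fact (4 ≤ n)] (u : Fin n → A) (i j k l : Fin n) (c d : A) :
    Commute (koszulTransv u i j c) (koszulTransv u k l d) := by
  by_cases hex : ∃ q, q ≠ i ∧ q ≠ j ∧ q ≠ k ∧ q ≠ l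
  · obtain ⟨q, hi, hj, hk, hl⟩ := hex
    rw [koszulTransv_eq u hi hj, koszulTransv_eq u hk hl]
    exact (admissibleAt_koszulVec u hi hj c).commute_transvAt (admissibleAt_koszulVec u hk hl d)
  push Not at hex
  have hij : i ≠ j := by rintro rfl; obtain ⟨q, h⟩ := exists_ne_ne_ne i k l; have := hex q; tauto
  have hik : i ≠ k := by rintro rfl; obtain ⟨q, h⟩ := exists_ne_ne_ne i j l; have := hex q; tauto
  have hil : i ≠ l := by rintro rfl; obtain ⟨q, h⟩ := exists_ne_ne_ne i j k; have := hex q; tauto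
  have hjk : j ≠ k := by rintro rfl; obtain ⟨q, h⟩ := exists_ne_ne_ne i j l; have := hex q; tauto
  have hjl : j ≠ l := by rintro rfl; obtain ⟨q, h⟩ := exists_ne_ne_ne i j k; have := hex q; tauto
  have hkl : k ≠ l := by rintro rfl; obtain ⟨q, h⟩ := exists_ne_ne_ne i j k; have := hex q; tauto
  exact commute_koszulTransv_of_forall hij hik hil hjk hjl hkl hex u c d

end Commute

section AddLeft

/-- A vector that stays admissible under rescaling either argument, and for which scalars pass
through the bracket. -/
structure ScalableAt (l : Fin n) (u v : Fin n → A) : Prop where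
  admissible_smul_left : ∀ t : A, AdmissibleAt l (t • u) v
  admissible_smul_right : ∀ t : A, AdmissibleAt l u (t • v)
  bracket_smul : ∀ t : A, bracket l (eraseCoord (t • u) l) v = bracket l (eraseCoord u l) (t • v)

variable {l m : Fin n} {u v w : Fin n → A}

theorem scalableAt_of_ne (hlm : l ≠ m) (hvl : v l = 0) (hvm : v m = 0) (hvu : v ⬝ᵥ u = 0) :
    ScalableAt l u v where
  admissible_smul_left t := admissibleAt_of_ne hlm hvl hvm (by simp [hvu])
  admissible_smul_right t :=
    admissibleAt_of_ne hlm (by simp [hvl]) (by simp [hvm]) (by simp [hvu])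
  bracket_smul t := by
    rw [bracket_eraseCoord_eq hlm hvl hvm (by simp [hvu]),
      bracket_eraseCoord_eq hlm (by simp [hvl]) (by simp [hvm]) (by simp [hvu]),
      eraseCoord_smul, eraseCoord_smul,
      bracket_smul_comm hlm (eraseCoord_apply_eq_zero (eraseCoord_self u l)) hvl
        (eraseCoord_self _ m) hvm
        (by rw [dotProduct_eraseCoord _ hvm, dotProduct_eraseCoord _ hvl, hvu])]
    simp only [Pi.smul_apply, smul_eq_mul, smul_smul, mul_comm]

theorem ScalableAt.add (hv : ScalableAt l u v) (hw : ScalableAt l u w) :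
    ScalableAt l u (v + w) where
  admissible_smul_left t := (hv.admissible_smul_left t).add (hw.admissible_smul_left t)
  admissible_smul_right t := by
    rw [smul_add]
    exact (hv.admissible_smul_right t).add (hw.admissible_smul_right t)
  bracket_smul t := by
    have hvl := hv.admissible_smul_left t
    have hvr := hv.admissible_smul_right t
    rw [smul_add, (hw.admissible_smul_left t).bracket_add hvl.apply_eq_zero hvl.dotProduct_eq_zero,
      (hw.admissible_smul_right t).bracket_add hvr.apply_eq_zero hvr.dotProduct_eq_zero,
      hv.bracket_smul, hw.bracket_smul]

theorem transvAt_add_smul_left {a b : Fin n → A} (ha : ScalableAt l a v) (hb : ScalableAt l b v)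
    (t : A) : transvAt l (b + t • a) v = transvAt l a (t • v) * transvAt l b v := by
  have hbv : AdmissibleAt l b v := by simpa using hb.admissible_smul_left 1
  have hav := ha.admissible_smul_right t
  have hcol : Commute (bracket l (eraseCoord a l) (t • v)) (col l (eraseCoord b l)) := by
    have := (hav.bracket_mem (eraseCoord b l)).1
    rwa [toMatrix_bracket (eraseCoord_self a l) hav.apply_eq_zero
      (by rw [dotProduct_eraseCoord _ hav.apply_eq_zero, hav.dotProduct_eq_zero]),
      one_add_vecMulVec_mulVec, dotProduct_eraseCoord _ hav.apply_eq_zero, smul_dotProduct,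
      hbv.dotProduct_eq_zero, smul_zero, zero_smul, add_zero] at this
  have hrow : Commute (bracket l (eraseCoord b l) v) (row l (a l • t • v)) :=
    hbv.commute_row (by simp [hbv.apply_eq_zero]) (by simp [hbv.dotProduct_eq_zero])
  have hbracket : bracket l (eraseCoord (b + t • a) l) v =
      bracket l (eraseCoord a l) (t • v) * bracket l (eraseCoord b l) v := by
    have herase : eraseCoord (b + t • a) l = eraseCoord b l + eraseCoord (t • a) l := by
      rw [eraseCoord, eraseCoord, eraseCoord, ← Function.update_add, add_zero]
    rw [bracket, herase, col_add, commutatorElement_mul_left_eq_conj_mul]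
    change col l (eraseCoord b l) * bracket l (eraseCoord (t • a) l) v * _ * _ = _
    rw [ha.bracket_smul, conj_eq_self_of_commute hcol.symm, bracket, bracket]
  have hsmul : (b + t • a : Fin n → A) l • v = a l • t • v + b l • v := by
    rw [Pi.add_apply, Pi.smul_apply, smul_eq_mul, add_smul, add_comm, mul_comm, mul_smul]
  rw [transvAt, transvAt, transvAt, hbracket, hsmul, row_add, mul_assoc, mul_assoc,
    ← mul_assoc (bracket l (eraseCoord b l) v), hrow.eq, mul_assoc]

/-- The sum of the Koszul vectors of `u` for the three pairs of indices among `p, m, q`. -/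
def koszulVec₃ (u : Fin n → A) (p m q : Fin n) (α β γ : A) : Fin n → A :=
  koszulVec u p m α + koszulVec u p q β + koszulVec u m q γ

/-- The lift of `1 + u kᵀ` with `k = koszulVec₃ u p m q α β γ`. -/
noncomputable def koszulTransv₃ (u : Fin n → A) (p m q : Fin n) (α β γ : A) :
    SteinbergGroup n A :=
  koszulTransv u p m α * koszulTransv u p q β * koszulTransv u m q γ

theorem koszulVec₃_add_smul (a b : Fin n → A) (p m q : Fin n) (c t : A) :
    koszulVec₃ (b + t • a) p m q (-(c * a q)) (c * a m) (-(c * a p)) =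
      koszulVec₃ b p m q (-(c * a q)) (c * a m) (-(c * a p)) := by
  ext i
  simp only [koszulVec₃, koszulVec, Pi.add_apply, Pi.sub_apply, Pi.single_apply, Pi.smul_apply,
    smul_eq_mul]
  grind

theorem koszulVec₃_exchange (a b : Fin n → A) (p m q : Fin n) (c : A) :
    koszulVec₃ a p m q (c * b q) (-(c * b m)) (c * b p) =
      koszulVec₃ b p m q (-(c * a q)) (c * a m) (-(c * a p)) := by
  ext i
  simp only [koszulVec₃, koszulVec, Pi.add_apply, Pi.sub_apply, Pi.single_apply]
  grind

theorem smul_koszulVec₃ (t : A) (u : Fin n → A) (p m q : Fin n) (α β γ : A) :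
    t • koszulVec₃ u p m q α β γ = koszulVec₃ u p m q (t * α) (t * β) (t * γ) := by
  simp only [koszulVec₃, smul_add, smul_koszulVec]

variable [Fact (4 ≤ n)]

theorem scalableAt_koszulVec {p : Fin n} (hp : l ≠ p) (hm : l ≠ m) (u : Fin n → A) (c : A) :
    ScalableAt l u (koszulVec u p m c) := by
  obtain ⟨q, hql, hqp, hqm⟩ := exists_ne_ne_ne l p m
  exact scalableAt_of_ne hql.symm (koszulVec_of_ne u hp hm c) (koszulVec_of_ne u hqp hqm c)
    (koszulVec_dotProduct u p m c)

theorem scalableAt_koszulVec₃ {p q : Fin n} (hp : l ≠ p) (hm : l ≠ m) (hq : l ≠ q)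
    (u : Fin n → A) (α β γ : A) : ScalableAt l u (koszulVec₃ u p m q α β γ) :=
  ((scalableAt_koszulVec hp hm u α).add (scalableAt_koszulVec hp hq u β)).add
    (scalableAt_koszulVec hm hq u γ)

theorem koszulTransv₃_eq {p q : Fin n} (hp : l ≠ p) (hm : l ≠ m) (hq : l ≠ q) (u : Fin n → A)
    (α β γ : A) : koszulTransv₃ u p m q α β γ = transvAt l u (koszulVec₃ u p m q α β γ) := by
  have hpq := admissibleAt_koszulVec u hp hq β
  have hsum := (admissibleAt_koszulVec u hp hm α).add hpq
  rw [koszulTransv₃, koszulVec₃, (admissibleAt_koszulVec u hm hq γ).transvAt_add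
    hsum.apply_eq_zero hsum.dotProduct_eq_zero, hpq.transvAt_add (koszulVec_of_ne u hp hm α)
    (koszulVec_dotProduct u p m α), koszulTransv_eq u hp hm, koszulTransv_eq u hp hq,
    koszulTransv_eq u hm hq]

theorem koszulTransv₃_add_smul (a b : Fin n → A) (p m q : Fin n) (c t : A) :
    koszulTransv₃ (b + t • a) p m q (-(c * a q)) (c * a m) (-(c * a p)) =
      koszulTransv₃ a p m q (t * (c * b q)) (t * -(c * b m)) (t * (c * b p)) *
        koszulTransv₃ b p m q (-(c * a q)) (c * a m) (-(c * a p)) := by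
  obtain ⟨l, hp, hm, hq⟩ := exists_ne_ne_ne p m q
  have ha := scalableAt_koszulVec₃ hp hm hq a (c * b q) (-(c * b m)) (c * b p)
  have hb := scalableAt_koszulVec₃ hp hm hq b (-(c * a q)) (c * a m) (-(c * a p))
  rw [koszulVec₃_exchange] at ha
  simp only [koszulTransv₃_eq hp hm hq, koszulVec₃_add_smul, ← smul_koszulVec₃,
    koszulVec₃_exchange]
  exact transvAt_add_smul_left ha hb t

end AddLeft

/-! ### Koszul lifts -/

section KoszulLift

/-- Every element of `S` acts bijectively on the ideal `I` by multiplication. -/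
structure UniquelyDivisible (S : Submonoid A) (I : Ideal A) : Prop where
  exists_mul_eq : ∀ s ∈ S, ∀ b ∈ I, ∃ c ∈ I, s * c = b
  eq_zero_of_mul_eq_zero : ∀ s ∈ S, ∀ c ∈ I, s * c = 0 → c = 0

/-- The vector `u` becomes unimodular once the elements of `S` are inverted. -/
def UnimodularAt (S : Submonoid A) (u : Fin n → A) : Prop :=
  ∃ y : Fin n → A, y ⬝ᵥ u ∈ S

variable {S : Submonoid A} {I : Ideal A}

theorem UniquelyDivisible.exists_smul_eq (D : UniquelyDivisible S I) {s : A} (hs : s ∈ S)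
    {v : Fin n → A} (hv : ∀ q, v q ∈ I) : ∃ w : Fin n → A, (∀ q, w q ∈ I) ∧ s • w = v := by
  choose w hw hsw using fun q => D.exists_mul_eq s hs (v q) (hv q)
  exact ⟨w, hw, funext hsw⟩

theorem UniquelyDivisible.eq_zero_of_smul_eq_zero (D : UniquelyDivisible S I) {s : A}
    (hs : s ∈ S) {v : Fin n → A} (hv : ∀ q, v q ∈ I) (h : s • v = 0) : v = 0 :=
  funext fun q => D.eq_zero_of_mul_eq_zero s hs (v q) (hv q) (congrFun h q)

theorem UniquelyDivisible.dotProduct_eq_zero (D : UniquelyDivisible S I) {s : A} (hs : s ∈ S)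
    {v u : Fin n → A} (hv : ∀ q, v q ∈ I) (h : (s • v) ⬝ᵥ u = 0) : v ⬝ᵥ u = 0 :=
  D.eq_zero_of_mul_eq_zero s hs _ (I.sum_mem fun q _ => I.mul_mem_right _ (hv q))
    (by rw [← smul_eq_mul, ← smul_dotProduct, h])

theorem sum_koszulVec (u v y : Fin n → A) :
    ∑ p, ∑ m, koszulVec u p m (v p * y m) = (y ⬝ᵥ u) • v - (v ⬝ᵥ u) • y := by
  have hterm (p m : Fin n) : koszulVec u p m (v p * y m) =
      (y m * u m) • Pi.single p (v p) - (v p * u p) • Pi.single m (y m) := by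
    simp only [koszulVec, ← Pi.single_smul', smul_eq_mul]
    congr 2 <;> ring
  simp only [hterm, Finset.sum_sub_distrib, ← Finset.sum_smul, ← Finset.smul_sum,
    Finset.univ_sum_single]
  rfl

/-- `KoszulLift I u v g` says that `g` is a product of Koszul transvections with coefficients in
`I`, whose Koszul vectors add up to `v`; in particular `g` lifts the transvection `1 + u vᵀ`. -/
inductive KoszulLift (I : Ideal A) (u : Fin n → A) : (Fin n → A) → SteinbergGroup n A → Prop
  | one : KoszulLift I u 0 1
  | koszulTransv_mul {v : Fin n → A} {g : SteinbergGroup n A} (p m : Fin n) (c : A) (hc : c ∈ I)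
      (h : KoszulLift I u v g) :
      KoszulLift I u (koszulVec u p m c + v) (koszulTransv u p m c * g)

namespace KoszulLift

variable {u v w : Fin n → A} {g h : SteinbergGroup n A}

theorem koszulTransv (u : Fin n → A) (p m : Fin n) {c : A} (hc : c ∈ I) :
    KoszulLift I u (koszulVec u p m c) (koszulTransv u p m c) := by
  simpa using koszulTransv_mul p m c hc (one (I := I) (u := u))

theorem mul (hv : KoszulLift I u v g) (hw : KoszulLift I u w h) :
    KoszulLift I u (v + w) (g * h) := by
  induction hv with
  | one => simpa using hw
  | koszulTransv_mul p m c hc _ ih =>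
    rw [add_assoc, mul_assoc]
    exact koszulTransv_mul p m c hc ih

theorem apply_mem (hv : KoszulLift I u v g) (q : Fin n) : v q ∈ I := by
  have single_mem (p : Fin n) {c : A} (hc : c ∈ I) : (Pi.single p c : Fin n → A) q ∈ I := by
    rw [Pi.single_apply]
    split_ifs
    exacts [hc, I.zero_mem]
  induction hv with
  | one => exact I.zero_mem
  | koszulTransv_mul p m c hc _ ih =>
    exact I.add_mem (I.sub_mem (single_mem p (I.mul_mem_right _ hc))
      (single_mem m (I.mul_mem_right _ hc))) ih

theorem dotProduct_eq_zero (hv : KoszulLift I u v g) : v ⬝ᵥ u = 0 := by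
  induction hv with
  | one => exact zero_dotProduct u
  | koszulTransv_mul p m c hc _ ih => rw [add_dotProduct, koszulVec_dotProduct, ih, add_zero]

theorem exists_sum {ι : Type*} (T : Finset ι) (V : ι → Fin n → A)
    (hV : ∀ i ∈ T, ∃ g, KoszulLift I u (V i) g) : ∃ g, KoszulLift I u (∑ i ∈ T, V i) g :=
  Finset.sum_induction V (fun v => ∃ g, KoszulLift I u v g)
    (fun _ _ ⟨g, hg⟩ ⟨h, hh⟩ => ⟨g * h, hg.mul hh⟩) ⟨1, one⟩ hV

end KoszulLift

variable {u v : Fin n → A} {g : SteinbergGroup n A}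

theorem UnimodularAt.exists_koszulLift (D : UniquelyDivisible S I) (hu : UnimodularAt S u)
    (hv : ∀ q, v q ∈ I) (hvu : v ⬝ᵥ u = 0) : ∃ g, KoszulLift I u v g := by
  obtain ⟨y, hy⟩ := hu
  obtain ⟨w, hw, rfl⟩ := D.exists_smul_eq hy hv
  have hwu : w ⬝ᵥ u = 0 := D.dotProduct_eq_zero hy hw hvu
  rw [← sub_zero ((y ⬝ᵥ u) • w), ← zero_smul A y, ← hwu, ← sum_koszulVec]
  exact KoszulLift.exists_sum _ _ fun p _ => KoszulLift.exists_sum _ _ fun m _ =>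
    ⟨_, KoszulLift.koszulTransv u p m (I.mul_mem_right _ (hw p))⟩

section FourLE

variable [Fact (4 ≤ n)]

theorem KoszulLift.toMatrix_eq (hv : KoszulLift I u v g) :
    toMatrix g = 1 + vecMulVec u v := by
  induction hv with
  | one => rw [toMatrix_one, vecMulVec_zero, add_zero]
  | koszulTransv_mul p m c hc _ ih =>
    rw [toMatrix_mul, ih, toMatrix_koszulTransv, one_add_vecMulVec_mul_one_add_vecMulVec,
      koszulVec_dotProduct, zero_smul, add_zero, vecMulVec_add, add_assoc]

theorem KoszulLift.conj_x_koszulTransv_left {p k m : Fin n} (hpk : p ≠ k) (hpm : p ≠ m) (s : A)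
    {c : A} (hc : c ∈ I) :
    KoszulLift I (u + Pi.single p (s * u k))
      (koszulVec u p m c - Pi.single k (s * koszulVec u p m c p))
      (x p k s * SteinbergGroup.koszulTransv u p m c * (x p k s)⁻¹) := by
  rw [(semiconjBy_x_koszulTransv_left u hpk hpm c s).eq, mul_inv_cancel_right,
    koszulVec_sub_single hpk hpm]
  exact (koszulTransv _ _ _ hc).mul (koszulTransv _ _ _ (I.mul_mem_right _ hc))

theorem KoszulLift.conj_x_koszulTransv {h k : Fin n} (hhk : h ≠ k) (p m : Fin n) (s : A)
    {c : A} (hc : c ∈ I) :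
    KoszulLift I (u + Pi.single h (s * u k))
      (koszulVec u p m c - Pi.single k (s * koszulVec u p m c h))
      (x h k s * SteinbergGroup.koszulTransv u p m c * (x h k s)⁻¹) := by
  rcases eq_or_ne p m with rfl | hpm
  · simpa [koszulVec_self, koszulTransv_self] using one
  rcases eq_or_ne h p with rfl | hhp
  · exact conj_x_koszulTransv_left hhk hpm s hc
  rcases eq_or_ne h m with rfl | hhm
  · rw [koszulVec_swap, koszulTransv_swap]
    exact conj_x_koszulTransv_left hhk hpm.symm s (I.neg_mem hc)
  · rw [(semiconjBy_x_koszulTransv_of_ne u hhk hhp hhm c s).eq, mul_inv_cancel_right,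
      koszulVec_of_ne u hhp hhm, mul_zero, Pi.single_zero, sub_zero,
      ← koszulVec_add_single u hhp hhm c (s * u k)]
    exact koszulTransv _ _ _ hc

theorem KoszulLift.conj_x (hv : KoszulLift I u v g) {h k : Fin n} (hhk : h ≠ k) (s : A) :
    KoszulLift I (u + Pi.single h (s * u k)) (v - Pi.single k (s * v h))
      (x h k s * g * (x h k s)⁻¹) := by
  induction hv with
  | one => simpa using one
  | koszulTransv_mul p m c hc _ ih =>
    rw [Pi.add_apply, mul_add, Pi.single_add, add_sub_add_comm, ← conj_mul]
    exact (conj_x_koszulTransv hhk p m s hc).mul ih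

theorem KoszulLift.conj (hv : KoszulLift I u v g) (k : SteinbergGroup n A) :
    KoszulLift I (toMatrix k *ᵥ u) (v ᵥ* toMatrix k⁻¹) (k * g * k⁻¹) := by
  induction k using induction_left with
  | one => simpa [toMatrix_one] using hv
  | x_mul i j hij r k ih =>
    have hrow : v ᵥ* toMatrix (x i j r * k)⁻¹ =
        v ᵥ* toMatrix k⁻¹ - Pi.single j (r * (v ᵥ* toMatrix k⁻¹) i) := by
      rw [_root_.mul_inv_rev, ← x_neg, toMatrix_mul, ← vecMul_vecMul, vecMul_toMatrix_x hij,
        mul_neg, Pi.single_neg, sub_eq_add_neg, mul_comm r]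
    rw [hrow, toMatrix_mul, ← mulVec_mulVec, toMatrix_x_mulVec hij, _root_.mul_inv_rev]
    simpa only [mul_assoc] using ih.conj_x hij r

theorem KoszulLift.inv (hv : KoszulLift I u v g) : KoszulLift I u (-v) g⁻¹ := by
  induction hv with
  | one => simpa using one
  | koszulTransv_mul p m c hc _ ih =>
    have hinv : (SteinbergGroup.koszulTransv u p m c)⁻¹ =
        SteinbergGroup.koszulTransv u p m (-c) :=
      inv_eq_of_mul_eq_one_right (by rw [← koszulTransv_add, add_neg_cancel, koszulTransv_zero])
    rw [neg_add_rev, _root_.mul_inv_rev, hinv,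
      ← neg_one_smul A (koszulVec u p m c), smul_koszulVec, neg_one_mul]
    exact ih.mul (koszulTransv u p m (I.neg_mem hc))

theorem KoszulLift.smul {s : A} (hv : KoszulLift I (s • u) v g) : KoszulLift I u (s • v) g := by
  induction hv with
  | one => simpa using one
  | koszulTransv_mul p m c hc _ ih =>
    rw [smul_add, koszulVec_smul, smul_koszulVec, koszulTransv_smul]
    exact koszulTransv_mul p m _ (I.mul_mem_left _ (I.mul_mem_left _ hc)) ih

/-- `c ↦ koszulTransv u p.1 p.2 c` as a homomorphism. -/
noncomputable def koszulTransvHom (u : Fin n → A) (p : Fin n × Fin n) :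
    Multiplicative A →* SteinbergGroup n A where
  toFun r := koszulTransv u p.1 p.2 r.toAdd
  map_one' := koszulTransv_zero u _ _
  map_mul' _ _ := koszulTransv_add u _ _ _ _

theorem commute_koszulTransvHom (u : Fin n → A) : Pairwise fun p q =>
    ∀ r s : Multiplicative A, Commute (koszulTransvHom u p r) (koszulTransvHom u q s) :=
  fun _ _ _ _ _ => commute_koszulTransv _ _ _ _ _ _ _

/-- The product of the Koszul transvections of `u` with coefficients `F p m`; its factors commute.
It is a closed formula for Koszul lifts, which makes them unique. -/
noncomputable def koszulProd (u : Fin n → A) (F : Fin n × Fin n → A) : SteinbergGroup n A :=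
  commPiProd (koszulTransvHom u) (commute_koszulTransvHom u) F

theorem koszulProd_add (u : Fin n → A) (F G : Fin n × Fin n → A) :
    koszulProd u (F + G) = koszulProd u F * koszulProd u G :=
  commPiProd_add _ _ F G

theorem koszulProd_zero (u : Fin n → A) : koszulProd u 0 = 1 := by
  simpa using koszulProd_add u 0 0

theorem koszulProd_single (u : Fin n → A) (p m : Fin n) (c : A) :
    koszulProd u (Pi.single (p, m) c) = koszulTransv u p m c :=
  commPiProd_single _ _ _ _

theorem koszulProd_koszulVec_mul_single (u : Fin n → A) (p m q : Fin n) (c t : A) :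
    koszulProd u (fun a => koszulVec u p m c a.1 * (Pi.single q t : Fin n → A) a.2) =
      koszulTransv u p m (c * (t * u q)) := by
  have hsplit : (fun a : Fin n × Fin n => koszulVec u p m c a.1 * (Pi.single q t : Fin n → A) a.2) =
      Pi.single (p, q) (c * t * u m) + Pi.single (m, q) (-(c * t * u p)) := by
    ext ⟨a, b⟩
    simp only [koszulVec, Pi.add_apply, Pi.sub_apply, Pi.single_apply, Prod.mk.injEq]
    grind
  rw [hsplit, koszulProd_add, koszulProd_single, koszulProd_single,
    koszulTransv_mul_koszulTransv, mul_assoc]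

theorem koszulProd_koszulVec_mul (u y : Fin n → A) (p m : Fin n) (c : A) :
    koszulProd u (fun a => koszulVec u p m c a.1 * y a.2) =
      koszulTransv u p m (c * (y ⬝ᵥ u)) := by
  induction y using Pi.single_induction with
  | zero =>
    simp only [Pi.zero_apply, zero_dotProduct, mul_zero, koszulTransv_zero]
    exact koszulProd_zero u
  | add y z hy hz =>
    rw [add_dotProduct, mul_add, koszulTransv_add, ← hy, ← hz, ← koszulProd_add]
    simp only [Pi.add_apply, mul_add]
    rfl
  | single q t => rw [koszulProd_koszulVec_mul_single, single_dotProduct]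

theorem KoszulLift.eq_koszulProd (D : UniquelyDivisible S I) {y w : Fin n → A}
    (hy : y ⬝ᵥ u ∈ S) (h : KoszulLift I u v g) (hw : ∀ q, w q ∈ I) (hwv : (y ⬝ᵥ u) • w = v) :
    g = koszulProd u fun a => w a.1 * y a.2 := by
  induction h generalizing w with
  | one =>
    rw [D.eq_zero_of_smul_eq_zero hy hw hwv]
    simp only [Pi.zero_apply, zero_mul]
    exact (koszulProd_zero u).symm
  | @koszulTransv_mul v g p m c hc _ ih =>
    obtain ⟨d, hd, rfl⟩ := D.exists_mul_eq _ hy c hc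
    have hrest := ih (w := w - koszulVec u p m d)
      (fun q => I.sub_mem (hw q) ((koszulTransv u p m hd).apply_mem q))
      (by rw [smul_sub, hwv, smul_koszulVec, add_sub_cancel_left])
    rw [mul_comm, ← koszulProd_koszulVec_mul, hrest, ← koszulProd_add]
    congr 1 with a
    simp only [Pi.add_apply, Pi.sub_apply]
    ring

theorem KoszulLift.unique (D : UniquelyDivisible S I) (hu : UnimodularAt S u)
    {g' : SteinbergGroup n A} (h : KoszulLift I u v g) (h' : KoszulLift I u v g') : g = g' := by
  obtain ⟨y, hy⟩ := hu
  obtain ⟨w, hw, hwv⟩ := D.exists_smul_eq hy h.apply_mem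
  rw [h.eq_koszulProd D hy hw hwv, h'.eq_koszulProd D hy hw hwv]

theorem KoszulLift.conj_koszulLift {a b v w : Fin n → A} {g h : SteinbergGroup n A}
    (hw : KoszulLift I a w h) (hv : KoszulLift I b v g) :
    KoszulLift I (a + (v ⬝ᵥ a) • b) (w - (w ⬝ᵥ b) • v) (g * h * g⁻¹) := by
  simpa only [hv.toMatrix_eq, one_add_vecMulVec_mulVec, vecMul_one_add_vecMulVec, smul_neg,
    hv.inv.toMatrix_eq, ← sub_eq_add_neg] using hw.conj g

theorem KoszulLift.commute (D : UniquelyDivisible S I) {a b v w : Fin n → A}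
    {g h : SteinbergGroup n A} (hw : KoszulLift I a w h) (hv : KoszulLift I b v g)
    (hva : v ⬝ᵥ a = 0) (hwb : w ⬝ᵥ b = 0) (ha : UnimodularAt S a) : Commute g h := by
  have hconj := hw.conj_koszulLift hv
  rw [hva, hwb, zero_smul, zero_smul, add_zero, sub_zero] at hconj
  exact mul_inv_eq_iff_eq_mul.mp (hconj.unique D ha hw)

end FourLE

end KoszulLift

section AdditiveKoszulLift

variable {S : Submonoid A} {I : Ideal A} {a b v w : Fin n → A} {t : A}

theorem koszulVec₃_eq (a b : Fin n → A) (p m q : Fin n) (c d : A) :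
    koszulVec₃ b p m q (-(c * d * a q)) (c * d * a m) (-(c * d * a p)) =
      (d * b q) • (Pi.single p (c * a m) - Pi.single m (c * a p)) -
        (d * a q) • (Pi.single p (c * b m) - Pi.single m (c * b p)) +
        (c * (a p * b m - a m * b p)) • Pi.single q d := by
  ext i
  simp only [koszulVec₃, koszulVec, Pi.add_apply, Pi.sub_apply, Pi.single_apply, Pi.smul_apply,
    smul_eq_mul]
  grind

theorem sum_koszulVec₃ (hva : v ⬝ᵥ a = 0) (hvb : v ⬝ᵥ b = 0) (p m : Fin n) (c : A) :
    ∑ q, koszulVec₃ b p m q (-(c * v q * a q)) (c * v q * a m) (-(c * v q * a p)) =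
      (c * (a p * b m - a m * b p)) • v := by
  have hva' : ∑ q, v q * a q = 0 := hva
  have hvb' : ∑ q, v q * b q = 0 := hvb
  simp only [koszulVec₃_eq, Finset.sum_add_distrib, Finset.sum_sub_distrib, ← Finset.sum_smul,
    ← Finset.smul_sum, hva', hvb', zero_smul, sub_zero, zero_add, Finset.univ_sum_single]

theorem sum_sum_sum_koszulVec₃ (y z : Fin n → A) (hva : v ⬝ᵥ a = 0) (hvb : v ⬝ᵥ b = 0) :
    ∑ p, ∑ m, ∑ q, koszulVec₃ b p m q (-(y p * z m * v q * a q)) (y p * z m * v q * a m)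
      (-(y p * z m * v q * a p)) =
      ((y ⬝ᵥ a) * (z ⬝ᵥ b) - (y ⬝ᵥ b) * (z ⬝ᵥ a)) • v := by
  simp only [sum_koszulVec₃ hva hvb, ← Finset.sum_smul, dotProduct, Finset.sum_mul_sum,
    ← Finset.sum_sub_distrib]
  congr! 3
  ring

/-- The vector `v` has Koszul lifts for `a`, `b` and `b + t • a` which witness the identity
`1 + (b + t a) vᵀ = (1 + a (t v)ᵀ) (1 + b vᵀ)` in the Steinberg group. -/
def HasAdditiveKoszulLift (I : Ideal A) (a b : Fin n → A) (t : A) (v : Fin n → A) : Prop :=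
  v ⬝ᵥ a = 0 ∧ ∃ g h, KoszulLift I a (t • v) g ∧ KoszulLift I b v h ∧
    KoszulLift I (b + t • a) v (g * h)

theorem hasAdditiveKoszulLift_zero : HasAdditiveKoszulLift I a b t 0 :=
  ⟨zero_dotProduct a, 1, 1, by simpa using .one, .one, by simpa using .one⟩

theorem KoszulLift.koszulTransv₃ (u : Fin n → A) (p m q : Fin n) {α β γ : A} (hα : α ∈ I)
    (hβ : β ∈ I) (hγ : γ ∈ I) :
    KoszulLift I u (koszulVec₃ u p m q α β γ) (koszulTransv₃ u p m q α β γ) :=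
  ((koszulTransv u p m hα).mul (koszulTransv u p q hβ)).mul (koszulTransv u m q hγ)

variable [Fact (4 ≤ n)]

theorem HasAdditiveKoszulLift.add (D : UniquelyDivisible S I) (ha : UnimodularAt S a)
    (hv : HasAdditiveKoszulLift I a b t v) (hw : HasAdditiveKoszulLift I a b t w) :
    HasAdditiveKoszulLift I a b t (v + w) := by
  obtain ⟨hva, gv, hv, hgv, hhv, hghv⟩ := hv
  obtain ⟨hwa, gw, hw, hgw, hhw, hghw⟩ := hw
  have hcomm : Commute hv gw := hgw.commute D hhv hva
    (by rw [smul_dotProduct, hhw.dotProduct_eq_zero, smul_zero]) ha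
  refine ⟨by rw [add_dotProduct, hva, hwa, add_zero], gv * gw, hv * hw, ?_, hhv.mul hhw, ?_⟩
  · rw [smul_add]
    exact hgv.mul hgw
  · rw [← hcomm.mul_mul_mul_comm]
    exact hghv.mul hghw

theorem hasAdditiveKoszulLift_koszulVec₃ (a b : Fin n → A) (t : A) (p m q : Fin n) {c : A}
    (hc : c ∈ I) : HasAdditiveKoszulLift I a b t
      (koszulVec₃ b p m q (-(c * a q)) (c * a m) (-(c * a p))) := by
  have hmem (r : A) : c * r ∈ I := I.mul_mem_right _ hc
  have hb := KoszulLift.koszulTransv₃ b p m q (I.neg_mem (hmem (a q))) (hmem (a m))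
    (I.neg_mem (hmem (a p)))
  have hab := KoszulLift.koszulTransv₃ (b + t • a) p m q (I.neg_mem (hmem (a q))) (hmem (a m))
    (I.neg_mem (hmem (a p)))
  have ha := KoszulLift.koszulTransv₃ a p m q (I.mul_mem_left t (hmem (b q)))
    (I.mul_mem_left t (I.neg_mem (hmem (b m)))) (I.mul_mem_left t (hmem (b p)))
  rw [koszulVec₃_add_smul, koszulTransv₃_add_smul] at hab
  rw [← smul_koszulVec₃, koszulVec₃_exchange] at ha
  refine ⟨?_, _, _, ha, hb, hab⟩
  rw [← koszulVec₃_exchange]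
  simp only [koszulVec₃, add_dotProduct, koszulVec_dotProduct, add_zero]

theorem hasAdditiveKoszulLift_of_det_mem (D : UniquelyDivisible S I) {y z : Fin n → A}
    (hdet : (y ⬝ᵥ a) * (z ⬝ᵥ b) - (y ⬝ᵥ b) * (z ⬝ᵥ a) ∈ S) (ha : UnimodularAt S a)
    (hv : ∀ q, v q ∈ I) (hva : v ⬝ᵥ a = 0) (hvb : v ⬝ᵥ b = 0) :
    HasAdditiveKoszulLift I a b t v := by
  obtain ⟨w, hw, rfl⟩ := D.exists_smul_eq hdet hv
  rw [← sum_sum_sum_koszulVec₃ y z (D.dotProduct_eq_zero hdet hw hva)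
    (D.dotProduct_eq_zero hdet hw hvb)]
  have sum_mem (V : Fin n → Fin n → A) (hV : ∀ i, HasAdditiveKoszulLift I a b t (V i)) :
      HasAdditiveKoszulLift I a b t (∑ i, V i) :=
    Finset.sum_induction V _ (fun _ _ => HasAdditiveKoszulLift.add D ha)
      hasAdditiveKoszulLift_zero fun i _ => hV i
  exact sum_mem _ fun p => sum_mem _ fun m => sum_mem _ fun q =>
    hasAdditiveKoszulLift_koszulVec₃ a b t p m q (I.mul_mem_left _ (hw q))

theorem KoszulLift.add_smul_left (D : UniquelyDivisible S I) {y z : Fin n → A}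
    (hdet : (y ⬝ᵥ a) * (z ⬝ᵥ b) - (y ⬝ᵥ b) * (z ⬝ᵥ a) ∈ S) {g h : SteinbergGroup n A}
    (hva : v ⬝ᵥ a = 0) (hg : KoszulLift I a (t • v) g) (hh : KoszulLift I b v h) :
    KoszulLift I (b + t • a) v (g * h) := by
  have ha : UnimodularAt S a := ⟨(z ⬝ᵥ b) • y - (y ⬝ᵥ b) • z, by
    simpa only [sub_dotProduct, smul_dotProduct, smul_eq_mul, mul_comm (z ⬝ᵥ b)] using hdet⟩
  have hb : UnimodularAt S b := ⟨(y ⬝ᵥ a) • z - (z ⬝ᵥ a) • y, by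
    simpa only [sub_dotProduct, smul_dotProduct, smul_eq_mul, mul_comm (z ⬝ᵥ a)] using hdet⟩
  obtain ⟨-, g', h', hg', hh', hgh⟩ := hasAdditiveKoszulLift_of_det_mem (t := t) D hdet ha
    hh.apply_mem hva hh.dotProduct_eq_zero
  rwa [hg.unique D ha hg', hh.unique D hb hh']

end AdditiveKoszulLift

end Transvections

/-! ### Transvections over a localization -/

section LocalizedTransvections

open Matrix

variable {n : ℕ} {A B : Type} [CommRing A] [CommRing B] [Algebra A B]

section VecMap

/-- The coordinatewise structure map `Aⁿ → Bⁿ` of an `A`-algebra `B`. -/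
def vecMap (B : Type) [CommRing B] [Algebra A B] : (Fin n → A) →ₗ[A] (Fin n → B) :=
  .pi fun i => Algebra.linearMap A B ∘ₗ .proj i

instance (S : Submonoid A) [IsLocalization S B] :
    IsLocalizedModule S (vecMap (n := n) (A := A) B) :=
  IsLocalizedModule.pi S fun _ => Algebra.linearMap A B

theorem vecMap_single (i : Fin n) (b : A) :
    vecMap B (Pi.single i b) = Pi.single i (algebraMap A B b) :=
  funext fun q => Pi.apply_single (fun _ => algebraMap A B) (fun _ => map_zero _) i b q

theorem vecMap_dotProduct_vecMap (v w : Fin n → A) :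
    vecMap B v ⬝ᵥ vecMap B w = algebraMap A B (v ⬝ᵥ w) :=
  ((algebraMap A B).map_dotProduct v w).symm

theorem toMatrix_map {C : Type} [CommRing C] (f : A →+* C) (g : SteinbergGroup n A) :
    toMatrix (map f g) = (toMatrix g).map f := by
  induction g using induction_left with
  | one => rw [map_one, toMatrix_one, toMatrix_one, Matrix.map_one _ (map_zero f) (map_one f)]
  | x_mul i j hij r g ih =>
    rw [map_mul, toMatrix_mul, toMatrix_mul, ih, Matrix.map_mul, map_x, toMatrix_x hij,
      toMatrix_x hij, Matrix.map_add _ (map_add f), Matrix.map_one _ (map_zero f) (map_one f),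
      Matrix.map_single]

theorem vecMap_toMatrix_mulVec (k : SteinbergGroup n A) (w : Fin n → A) :
    vecMap B (toMatrix k *ᵥ w) = toMatrix (map (algebraMap A B) k) *ᵥ vecMap B w := by
  rw [toMatrix_map]
  exact funext ((algebraMap A B).map_mulVec _ w)

theorem vecMap_vecMul_toMatrix (k : SteinbergGroup n A) (w : Fin n → A) :
    vecMap B (w ᵥ* toMatrix k) = vecMap B w ᵥ* toMatrix (map (algebraMap A B) k) := by
  rw [toMatrix_map]
  exact funext ((algebraMap A B).map_vecMul _ w)

end VecMap

variable {S : Submonoid A} {I : Ideal A}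

section ClearDenominators

variable [IsLocalization S B]

variable (S) in
theorem exists_vecMap_eq_smul (u : Fin n → B) : ∃ w : Fin n → A, ∃ s ∈ S, vecMap B w = s • u := by
  obtain ⟨⟨w, s⟩, hw⟩ := IsLocalizedModule.surj S (vecMap B) u
  exact ⟨w, s, s.2, hw.symm⟩

theorem exists_mul_mem_of_algebraMap_eq {b s : A} (hs : s ∈ S)
    (h : algebraMap A B b = algebraMap A B s) : ∃ t ∈ S, t * b ∈ S := by
  obtain ⟨t, ht⟩ := IsLocalization.exists_of_eq (M := S) h
  exact ⟨t, t.2, ht ▸ S.mul_mem t.2 hs⟩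

theorem unimodularAt_of_vecMap_eq_smul {w : Fin n → A} {u : Fin n → B} {s : A} (hs : s ∈ S)
    (hu : ∃ y : Fin n → B, y ⬝ᵥ u = 1) (hw : vecMap B w = s • u) : UnimodularAt S w := by
  obtain ⟨y, hy⟩ := hu
  obtain ⟨z, r, hr, hz⟩ := exists_vecMap_eq_smul S y
  have hzw : algebraMap A B (z ⬝ᵥ w) = algebraMap A B (r * s) := by
    rw [← vecMap_dotProduct_vecMap, hz, hw, smul_dotProduct, dotProduct_smul, hy, smul_smul,
      Algebra.algebraMap_eq_smul_one]
  obtain ⟨t, -, ht⟩ := exists_mul_mem_of_algebraMap_eq (S.mul_mem hr hs) hzw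
  exact ⟨t • z, by rwa [smul_dotProduct, smul_eq_mul]⟩

theorem exists_det_mem_of_vecMap_eq_smul {a b y z : Fin n → B}
    (hdet : (y ⬝ᵥ a) * (z ⬝ᵥ b) - (y ⬝ᵥ b) * (z ⬝ᵥ a) = 1) {a₀ b₀ : Fin n → A} {r s : A}
    (hr : r ∈ S) (hs : s ∈ S) (ha : vecMap B a₀ = r • a) (hb : vecMap B b₀ = s • b) :
    ∃ y₀ z₀ : Fin n → A, (y₀ ⬝ᵥ a₀) * (z₀ ⬝ᵥ b₀) - (y₀ ⬝ᵥ b₀) * (z₀ ⬝ᵥ a₀) ∈ S := by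
  obtain ⟨y₀, p, hp, hy⟩ := exists_vecMap_eq_smul S y
  obtain ⟨z₀, q, hq, hz⟩ := exists_vecMap_eq_smul S z
  have hdet₀ : algebraMap A B ((y₀ ⬝ᵥ a₀) * (z₀ ⬝ᵥ b₀) - (y₀ ⬝ᵥ b₀) * (z₀ ⬝ᵥ a₀)) =
      algebraMap A B (p * q * r * s) := by
    rw [map_sub, map_mul, map_mul]
    simp only [← vecMap_dotProduct_vecMap, ha, hb, hy, hz, smul_dotProduct, dotProduct_smul]
    simp only [Algebra.smul_def, map_mul]
    linear_combination algebraMap A B p * algebraMap A B q * algebraMap A B r *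
      algebraMap A B s * hdet
  obtain ⟨t, -, ht⟩ := exists_mul_mem_of_algebraMap_eq
    (S.mul_mem (S.mul_mem (S.mul_mem hp hq) hr) hs) hdet₀
  refine ⟨t • y₀, z₀, ?_⟩
  simpa only [smul_dotProduct, smul_eq_mul, mul_assoc, mul_sub] using ht

namespace UniquelyDivisible

theorem eq_zero_of_algebraMap_eq_zero (D : UniquelyDivisible S I) {b : A} (hb : b ∈ I)
    (h : algebraMap A B b = 0) : b = 0 := by
  obtain ⟨t, ht⟩ := (IsLocalization.map_eq_zero_iff S B b).1 h
  exact D.eq_zero_of_mul_eq_zero t t.2 b hb ht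

theorem eq_of_vecMap_eq (D : UniquelyDivisible S I) {v w : Fin n → A} (hv : ∀ q, v q ∈ I)
    (hw : ∀ q, w q ∈ I) (h : vecMap B v = vecMap B w) : v = w :=
  funext fun q => sub_eq_zero.mp <| D.eq_zero_of_algebraMap_eq_zero (B := B)
    (I.sub_mem (hv q) (hw q)) (by rw [map_sub, sub_eq_zero]; exact congrFun h q)

theorem exists_algebraMap_eq (D : UniquelyDivisible S I) {c : B}
    (hc : c ∈ I.map (algebraMap A B)) : ∃ b ∈ I, algebraMap A B b = c := by
  obtain ⟨⟨⟨b, hb⟩, s⟩, hbs⟩ := (IsLocalization.mem_map_algebraMap_iff S B).1 hc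
  obtain ⟨b', hb', rfl⟩ := D.exists_mul_eq s s.2 b hb
  refine ⟨b', hb', (IsLocalization.map_units B s).mul_left_cancel ?_⟩
  rw [mul_comm _ c, hbs, map_mul]

theorem exists_smul_vecMap_eq (D : UniquelyDivisible S I) {v : Fin n → B}
    (hv : ∀ q, v q ∈ I.map (algebraMap A B)) {s : A} (hs : s ∈ S) :
    ∃ w : Fin n → A, (∀ q, w q ∈ I) ∧ s • vecMap B w = v := by
  choose b hb hbv using fun q => D.exists_algebraMap_eq (hv q)
  obtain ⟨w, hw, rfl⟩ := D.exists_smul_eq hs hb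
  exact ⟨w, hw, by rw [← map_smul]; exact funext hbv⟩

theorem dotProduct_eq_zero_of_vecMap (D : UniquelyDivisible S I) {s : A} (hs : s ∈ S)
    {v w : Fin n → A} (hv : ∀ q, v q ∈ I) (h : (s • vecMap B v) ⬝ᵥ vecMap B w = 0) :
    v ⬝ᵥ w = 0 := by
  refine D.dotProduct_eq_zero hs hv (D.eq_zero_of_algebraMap_eq_zero (B := B) ?_ ?_)
  · exact I.sum_mem fun q _ => I.mul_mem_right _ (I.mul_mem_left s (hv q))
  · rw [← vecMap_dotProduct_vecMap, map_smul, h]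

end UniquelyDivisible

end ClearDenominators

section LocalizedLift

theorem koszulLift_x [Fact (4 ≤ n)] {i j : Fin n} (hij : i ≠ j) {b : A} (hb : b ∈ I) :
    KoszulLift I (Pi.single i 1) (Pi.single j b) (x i j b) := by
  obtain ⟨l, hlj, hli, -⟩ := exists_ne_ne_ne j i i
  have hvec : koszulVec (Pi.single i (1 : A)) j i b = Pi.single j b := by
    simp [koszulVec, hij.symm]
  have herase : eraseCoord (Pi.single i (1 : A)) l = Pi.single i 1 := by
    ext q
    simp only [eraseCoord, Function.update_apply, Pi.single_apply]
    grind
  have htransv : koszulTransv (Pi.single i (1 : A)) j i b = x i j b := by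
    rw [koszulTransv_eq _ hlj hli, hvec, transvAt, herase, Pi.single_eq_of_ne hli, zero_smul,
      row_zero, bracket, col_single, row_single, commutatorElement_def, mul_one,
      x_mul_x hli.symm hlj hij]
    simp
  rw [← hvec, ← htransv]
  exact KoszulLift.koszulTransv _ j i hb

/-- `LocalizedLift S I u v g` extends `KoszulLift` to vectors over the localization `B` of `A` at
`S`: after clearing a denominator `s` of `u`, the element `g` of the Steinberg group over `A` is a
Koszul lift of `1 + (s u) (v / s)ᵀ = 1 + u vᵀ`. -/
def LocalizedLift (S : Submonoid A) (I : Ideal A) (u v : Fin n → B) (g : SteinbergGroup n A) :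
    Prop :=
  (∃ y : Fin n → B, y ⬝ᵥ u = 1) ∧ ∃ w v₀ : Fin n → A, ∃ s ∈ S,
    vecMap B w = s • u ∧ s • vecMap B v₀ = v ∧ KoszulLift I w v₀ g

theorem KoszulLift.exists_smul_left [Fact (4 ≤ n)] (D : UniquelyDivisible S I) {u v : Fin n → A}
    {g : SteinbergGroup n A} (hu : UnimodularAt S u) (h : KoszulLift I u v g) {s : A}
    (hs : s ∈ S) : ∃ w, s • w = v ∧ KoszulLift I (s • u) w g := by
  obtain ⟨w, hw, rfl⟩ := D.exists_smul_eq hs h.apply_mem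
  have hsu : UnimodularAt S (s • u) := hu.imp fun y hy => by
    rw [dotProduct_smul]
    exact S.mul_mem hs hy
  obtain ⟨g', hg'⟩ := hsu.exists_koszulLift D hw
    (by rw [dotProduct_smul, ← smul_dotProduct, h.dotProduct_eq_zero])
  exact ⟨w, rfl, h.unique D hu hg'.smul ▸ hg'⟩

namespace LocalizedLift

variable {u v w : Fin n → B} {g h : SteinbergGroup n A}

theorem apply_mem (hg : LocalizedLift S I u v g) (q : Fin n) :
    v q ∈ I.map (algebraMap A B) := by
  obtain ⟨-, _, v₀, s, -, -, rfl, hg₀⟩ := hg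
  rw [← map_smul]
  exact Ideal.mem_map_of_mem _ (I.mul_mem_left s (hg₀.apply_mem q))

variable [Fact (4 ≤ n)]

theorem x {i j : Fin n} (hij : i ≠ j) {b : A} (hb : b ∈ I) :
    LocalizedLift S I (Pi.single i (1 : B)) (Pi.single j (algebraMap A B b)) (x i j b) :=
  ⟨⟨Pi.single i 1, by simp⟩, Pi.single i 1, Pi.single j b, 1, S.one_mem,
    by rw [vecMap_single, map_one, one_smul], by rw [vecMap_single, one_smul], koszulLift_x hij hb⟩

theorem toMatrix_map_eq (hg : LocalizedLift S I u v g) :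
    toMatrix (map (algebraMap A B) g) = 1 + vecMulVec u v := by
  obtain ⟨-, w, v₀, s, -, hw, rfl, hg₀⟩ := hg
  have hwv : (vecMulVec w v₀).map (algebraMap A B) = vecMulVec (vecMap B w) (vecMap B v₀) := by
    ext a b
    exact map_mul (algebraMap A B) _ _
  rw [toMatrix_map, hg₀.toMatrix_eq, Matrix.map_add _ (map_add _),
    Matrix.map_one _ (map_zero _) (map_one _), hwv, hw, vecMulVec_smul, smul_vecMulVec]

theorem inv (hg : LocalizedLift S I u v g) : LocalizedLift S I u (-v) g⁻¹ := by
  obtain ⟨hu, w, v₀, s, hs, hw, rfl, hg₀⟩ := hg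
  exact ⟨hu, w, -v₀, s, hs, hw, by rw [map_neg, smul_neg], hg₀.inv⟩

theorem conj (hg : LocalizedLift S I u v g) (k : SteinbergGroup n A) :
    LocalizedLift S I (toMatrix (map (algebraMap A B) k) *ᵥ u)
      (v ᵥ* toMatrix (map (algebraMap A B) k⁻¹)) (k * g * k⁻¹) := by
  obtain ⟨⟨y, hy⟩, w, v₀, s, hs, hw, rfl, hg₀⟩ := hg
  refine ⟨⟨y ᵥ* toMatrix (map (algebraMap A B) k⁻¹), ?_⟩, _, _, s, hs, ?_, ?_, hg₀.conj k⟩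
  · rw [← dotProduct_mulVec, mulVec_mulVec, map_inv, toMatrix_inv_mul, one_mulVec, hy]
  · rw [vecMap_toMatrix_mulVec, hw, mulVec_smul]
  · rw [vecMap_vecMul_toMatrix, smul_vecMul]

theorem conj_localizedLift {a b : Fin n → B} (hh : LocalizedLift S I a w h)
    (hg : LocalizedLift S I b v g) :
    LocalizedLift S I (a + (v ⬝ᵥ a) • b) (w - (w ⬝ᵥ b) • v) (g * h * g⁻¹) := by
  simpa only [hg.toMatrix_map_eq, hg.inv.toMatrix_map_eq, one_add_vecMulVec_mulVec,
    vecMul_one_add_vecMulVec, smul_neg, ← sub_eq_add_neg] using hh.conj g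

variable [IsLocalization S B]

theorem koszulLift (D : UniquelyDivisible S I) (hg : LocalizedLift S I u v g) {w v₀ : Fin n → A}
    {s : A} (hs : s ∈ S) (hw : vecMap B w = s • u) (hv₀ : ∀ q, v₀ q ∈ I)
    (hv : s • vecMap B v₀ = v) : KoszulLift I w v₀ g := by
  obtain ⟨hu, w₁, v₁, s₁, hs₁, hw₁, hv₁, hg₁⟩ := hg
  obtain ⟨⟨t, ht⟩, htw⟩ : ∃ t : S, t • (s • w₁) = t • (s₁ • w) :=
    IsLocalizedModule.exists_of_eq (f := vecMap B) (by
      rw [map_smul, map_smul, hw, hw₁, smul_comm])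
  rw [Submonoid.mk_smul, Submonoid.mk_smul, smul_smul, smul_smul] at htw
  obtain ⟨v₂, rfl, hg₂⟩ := hg₁.exists_smul_left D (unimodularAt_of_vecMap_eq_smul hs₁ hu hw₁)
    (S.mul_mem ht hs)
  have hv₂ : (t * s₁) • v₂ = v₀ := by
    have hmem (q : Fin n) : ((t * s₁) • v₂) q ∈ I := I.mul_mem_left _ (hg₂.apply_mem q)
    apply D.eq_of_vecMap_eq (B := B) hmem hv₀
    apply IsLocalizedModule.smul_injective (vecMap B) ⟨s, hs⟩
    simp only [Submonoid.mk_smul]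
    rw [hv, ← hv₁, map_smul, map_smul, smul_smul, smul_smul, mul_left_comm, mul_comm s s₁,
      mul_left_comm s₁]
  rw [htw] at hg₂
  exact hv₂ ▸ hg₂.smul

theorem unique (D : UniquelyDivisible S I) (hg : LocalizedLift S I u v g)
    (hh : LocalizedLift S I u v h) : g = h := by
  obtain ⟨w, s, hs, hw⟩ := exists_vecMap_eq_smul S u
  obtain ⟨v₀, hv₀, hv⟩ := D.exists_smul_vecMap_eq hg.apply_mem hs
  exact (hg.koszulLift D hs hw hv₀ hv).unique D (unimodularAt_of_vecMap_eq_smul hs hg.1 hw)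
    (hh.koszulLift D hs hw hv₀ hv)

theorem mul (D : UniquelyDivisible S I) (hg : LocalizedLift S I u v g)
    (hh : LocalizedLift S I u w h) : LocalizedLift S I u (v + w) (g * h) := by
  obtain ⟨u₀, s, hs, hu₀⟩ := exists_vecMap_eq_smul S u
  obtain ⟨v₀, hv₀, hv⟩ := D.exists_smul_vecMap_eq hg.apply_mem hs
  obtain ⟨w₀, hw₀, hw⟩ := D.exists_smul_vecMap_eq hh.apply_mem hs
  exact ⟨hg.1, u₀, v₀ + w₀, s, hs, hu₀, by rw [map_add, smul_add, hv, hw],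
    (hg.koszulLift D hs hu₀ hv₀ hv).mul (hh.koszulLift D hs hu₀ hw₀ hw)⟩

theorem commute (D : UniquelyDivisible S I) {a b : Fin n → B} (hh : LocalizedLift S I a w h)
    (hg : LocalizedLift S I b v g) (hva : v ⬝ᵥ a = 0) (hwb : w ⬝ᵥ b = 0) : Commute g h := by
  have hconj := hh.conj_localizedLift hg
  rw [hva, hwb, zero_smul, zero_smul, add_zero, sub_zero] at hconj
  exact mul_inv_eq_iff_eq_mul.mp (hconj.unique D hh)

theorem add_smul_left (D : UniquelyDivisible S I) {a b y z : Fin n → B} {t : B}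
    (hdet : (y ⬝ᵥ a) * (z ⬝ᵥ b) - (y ⬝ᵥ b) * (z ⬝ᵥ a) = 1) (hva : v ⬝ᵥ a = 0)
    (hg : LocalizedLift S I a (t • v) g) (hh : LocalizedLift S I b v h) :
    LocalizedLift S I (b + t • a) v (g * h) := by
  obtain ⟨a₀, r, hr, ha⟩ := exists_vecMap_eq_smul S a
  obtain ⟨b₀, s, hs, hb⟩ := exists_vecMap_eq_smul S b
  obtain ⟨⟨t₀, ⟨q, hq⟩⟩, ht⟩ := IsLocalization.surj S t
  have hσ : q * r * s ∈ S := S.mul_mem (S.mul_mem hq hr) hs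
  obtain ⟨v₀, hv₀, hv⟩ := D.exists_smul_vecMap_eq hh.apply_mem hσ
  have hb' : vecMap B ((q * r) • b₀) = (q * r * s) • b := by rw [map_smul, hb, smul_smul]
  have ht' (c : Fin n → B) : (r * (s * t₀)) • c = t • (q * r * s) • c := by
    rw [← algebraMap_smul B, ← algebraMap_smul B (q * r * s), smul_smul]
    congr 1
    simp only [map_mul]
    linear_combination -(algebraMap A B r * algebraMap A B s) * ht
  have hg₀ : KoszulLift I a₀ ((s * t₀) • v₀) g := by
    refine hg.koszulLift D hr ha (fun i => I.mul_mem_left _ (hv₀ i)) ?_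
    rw [← hv, ← ht', map_smul, smul_smul]
  have hh₀ : KoszulLift I ((q * r) • b₀) v₀ h := hh.koszulLift D hσ hb' hv₀ hv
  have hva₀ : v₀ ⬝ᵥ a₀ = 0 := D.dotProduct_eq_zero_of_vecMap (B := B) hσ hv₀
    (by rw [hv, ha, dotProduct_smul, hva, smul_zero])
  obtain ⟨y₀, z₀, hdet₀⟩ := exists_det_mem_of_vecMap_eq_smul hdet hr hσ ha hb'
  refine ⟨⟨(y ⬝ᵥ a) • z - (z ⬝ᵥ a) • y, ?_⟩, _, v₀, q * r * s, hσ, ?_, hv,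
    hg₀.add_smul_left D hdet₀ hva₀ hh₀⟩
  · simp only [sub_dotProduct, smul_dotProduct, dotProduct_add, dotProduct_smul, smul_eq_mul]
    linear_combination hdet
  · rw [map_add, hb', map_smul, ha, smul_smul, mul_comm (s * t₀), ht',
      smul_comm t, smul_add]

end LocalizedLift

theorem exists_localizedLift [IsLocalization S B] (D : UniquelyDivisible S I) {u v : Fin n → B}
    (hu : ∃ y : Fin n → B, y ⬝ᵥ u = 1) (hv : ∀ q, v q ∈ I.map (algebraMap A B))
    (hvu : v ⬝ᵥ u = 0) : ∃ g, LocalizedLift S I u v g := by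
  obtain ⟨w, s, hs, hw⟩ := exists_vecMap_eq_smul S u
  obtain ⟨v₀, hv₀, rfl⟩ := D.exists_smul_vecMap_eq hv hs
  have hv₀w : v₀ ⬝ᵥ w = 0 := D.dotProduct_eq_zero_of_vecMap (B := B) hs hv₀
    (by rw [hw, dotProduct_smul, hvu, smul_zero])
  obtain ⟨g, hg⟩ := (unimodularAt_of_vecMap_eq_smul hs hu hw).exists_koszulLift D hv₀ hv₀w
  exact ⟨g, hu, w, v₀, s, hs, hw, rfl, hg⟩

end LocalizedLift

end LocalizedTransvections

/-! ### The lifting homomorphism -/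

section Lifting

open Matrix

variable {n : ℕ} {A B : Type} [CommRing A] [CommRing B]

section GLRowsAndColumns

theorem row_dotProduct_col_inv (M : GL (Fin n) B) (j i : Fin n) :
    M.1.row j ⬝ᵥ (M⁻¹).1.col i = (1 : Matrix (Fin n) (Fin n) B) j i :=
  congrFun₂ M.mul_inv j i

theorem row_dotProduct_col_inv_same (M : GL (Fin n) B) (i : Fin n) :
    M.1.row i ⬝ᵥ (M⁻¹).1.col i = 1 := by
  rw [row_dotProduct_col_inv, one_apply_eq]

theorem row_dotProduct_col_inv_of_ne (M : GL (Fin n) B) {j i : Fin n} (h : j ≠ i) :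
    M.1.row j ⬝ᵥ (M⁻¹).1.col i = 0 := by
  rw [row_dotProduct_col_inv, one_apply_ne h]

theorem col_inv_toGL_inv_mul (g : SteinbergGroup n B) (M : GL (Fin n) B) (i : Fin n) :
    ((toGL g)⁻¹ * M)⁻¹.1.col i = (M⁻¹).1 *ᵥ (toMatrix g *ᵥ Pi.single i 1) := by
  rw [_root_.mul_inv_rev, inv_inv, Units.val_mul, ← mulVec_single_one, ← mulVec_mulVec]
  rfl

theorem row_toGL_inv_mul (g : SteinbergGroup n B) (M : GL (Fin n) B) (j : Fin n) :
    ((toGL g)⁻¹ * M).1.row j = (Pi.single j 1 ᵥ* toMatrix g⁻¹) ᵥ* M.1 := by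
  rw [← map_inv, Units.val_mul, ← single_one_vecMul, ← vecMul_vecMul]
  rfl

theorem col_inv_mul_inv_toGL (g : SteinbergGroup n B) (M : GL (Fin n) B) (i : Fin n) :
    (M * (toGL g)⁻¹)⁻¹.1.col i = toMatrix g *ᵥ (M⁻¹).1.col i := by
  rw [_root_.mul_inv_rev, inv_inv, Units.val_mul, ← mulVec_single_one, ← mulVec_mulVec,
    mulVec_single_one]
  rfl

theorem row_mul_inv_toGL (g : SteinbergGroup n B) (M : GL (Fin n) B) (j : Fin n) :
    (M * (toGL g)⁻¹).1.row j = M.1.row j ᵥ* toMatrix g⁻¹ := by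
  rw [← map_inv, Units.val_mul, ← single_one_vecMul, ← vecMul_vecMul, single_one_vecMul]
  rfl

variable {h k : Fin n} (hhk : h ≠ k) (a : B) (M : GL (Fin n) B)
include hhk

theorem col_inv_toGL_x_inv_mul_of_ne {i : Fin n} (hik : i ≠ k) :
    ((toGL (x h k a))⁻¹ * M)⁻¹.1.col i = (M⁻¹).1.col i := by
  rw [col_inv_toGL_inv_mul, toMatrix_x_mulVec hhk, Pi.single_eq_of_ne hik.symm, mul_zero,
    Pi.single_zero, add_zero, mulVec_single_one]

theorem col_inv_toGL_x_inv_mul_same :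
    ((toGL (x h k a))⁻¹ * M)⁻¹.1.col k = (M⁻¹).1.col k + a • (M⁻¹).1.col h := by
  rw [col_inv_toGL_inv_mul, toMatrix_x_mulVec hhk, Pi.single_eq_same, ← smul_eq_mul,
    Pi.single_smul', mulVec_add, mulVec_smul, mulVec_single_one, mulVec_single_one]

theorem row_toGL_x_inv_mul_of_ne {j : Fin n} (hjh : j ≠ h) :
    ((toGL (x h k a))⁻¹ * M).1.row j = M.1.row j := by
  rw [row_toGL_inv_mul, ← x_neg, vecMul_toMatrix_x hhk, Pi.single_eq_of_ne hjh.symm, zero_mul,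
    Pi.single_zero, add_zero, single_one_vecMul]

theorem row_toGL_x_inv_mul_same :
    ((toGL (x h k a))⁻¹ * M).1.row h = M.1.row h - a • M.1.row k := by
  rw [row_toGL_inv_mul, ← x_neg, vecMul_toMatrix_x hhk, Pi.single_eq_same, mul_comm,
    ← smul_eq_mul, Pi.single_smul', add_vecMul, smul_vecMul, neg_smul, ← sub_eq_add_neg,
    single_one_vecMul, single_one_vecMul]

end GLRowsAndColumns

variable [Algebra A B] {S : Submonoid A} {I : Ideal A} [IsLocalization S B]

section TransvFun

theorem exists_localizedLift_smul (D : UniquelyDivisible S I) {u v : Fin n → B} {c : B}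
    (hu : ∃ y : Fin n → B, y ⬝ᵥ u = 1) (hc : c ∈ I.map (algebraMap A B)) (hvu : v ⬝ᵥ u = 0) :
    ∃ g, LocalizedLift S I u (c • v) g :=
  exists_localizedLift D hu (fun _ => Ideal.mul_mem_right _ _ hc)
    (by rw [smul_dotProduct, hvu, smul_zero])

theorem LocalizedLift.mul_eq_mul_mul [Fact (4 ≤ n)] (D : UniquelyDivisible S I)
    {ui uj vi vj vk : Fin n → B} {a b c d : B}
    (hii : vi ⬝ᵥ ui = 1) (hjj : vj ⬝ᵥ uj = 1) (hij : vi ⬝ᵥ uj = 0) (hji : vj ⬝ᵥ ui = 0)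
    (hki : vk ⬝ᵥ ui = 0) (hkj : vk ⬝ᵥ uj = 0)
    (hc : c ∈ I.map (algebraMap A B)) (hd : d ∈ I.map (algebraMap A B))
    {gij gij' gjk gjk' gik : SteinbergGroup n A}
    (hgij : LocalizedLift S I ui (c • vj) gij)
    (hgjk' : LocalizedLift S I (uj + a • ui) (d • vk) gjk')
    (hgik : LocalizedLift S I ui ((c * d + c * b + a * d) • vk) gik)
    (hgjk : LocalizedLift S I uj (d • vk) gjk)
    (hgij' : LocalizedLift S I ui (c • (vj - b • vk)) gij') :
    gij * gjk' = gik * (gjk * gij') := by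
  have hui : ∃ y : Fin n → B, y ⬝ᵥ ui = 1 := ⟨vi, hii⟩
  have hdet : (vi ⬝ᵥ ui) * (vj ⬝ᵥ uj) - (vi ⬝ᵥ uj) * (vj ⬝ᵥ ui) = 1 := by
    rw [hii, hjj, hij, zero_mul, sub_zero, one_mul]
  have smul_eq_zero {v u : Fin n → B} (r : B) (h : v ⬝ᵥ u = 0) : (r • v) ⬝ᵥ u = 0 := by
    rw [smul_dotProduct, h, smul_zero]
  obtain ⟨p, hp⟩ := exists_localizedLift_smul D hui (Ideal.mul_mem_left _ a hd) hki
  obtain ⟨q, hq⟩ := exists_localizedLift_smul D hui (Ideal.mul_mem_left _ c hd) hki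
  obtain ⟨z, hz⟩ := exists_localizedLift_smul D hui (Ideal.mul_mem_right (-b) _ hc) hki
  have hgjk'_eq : gjk' = p * gjk := hgjk'.unique D
    (add_smul_left D hdet (smul_eq_zero d hki) (by rwa [smul_smul]) hgjk)
  have hconj : gij * gjk = q * gjk * gij := by
    have hact := hgjk.conj_localizedLift hgij
    rw [smul_dotProduct, hjj, smul_eq_zero d hki, zero_smul, sub_zero, smul_eq_mul, mul_one] at hact
    exact mul_inv_eq_iff_eq_mul.mp <| hact.unique D
      (add_smul_left D hdet (smul_eq_zero d hki) (by rwa [smul_smul]) hgjk)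
  have hgij'_eq : gij' = z * gij := hgij'.unique D (by
    convert hz.mul D hgij using 1
    rw [smul_sub, smul_smul, mul_neg, neg_smul, add_comm, sub_eq_add_neg])
  have hgik_mul : gik * z = p * q := (hgik.mul D hz).unique D (by
    convert hp.mul D hq using 1
    rw [← add_smul, ← add_smul]
    ring_nf)
  have hcomm_z : Commute gjk z := hz.commute D hgjk (smul_eq_zero d hki) (smul_eq_zero _ hkj)
  have hcomm_p : Commute gij p := hp.commute D hgij (smul_eq_zero c hji) (smul_eq_zero _ hki)
  calc gij * gjk' = p * (gij * gjk) := by rw [hgjk'_eq, hcomm_p.left_comm]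
    _ = gik * z * gjk * gij := by rw [hconj, hgik_mul]; simp only [mul_assoc]
    _ = gik * (gjk * gij') := by
      rw [hgij'_eq, hcomm_z.left_comm]
      simp only [mul_assoc]

/-- The lift to `SteinbergGroup n A` of the transvection `1 + u vᵀ` over the localization of `A`
at `S`; a junk value unless such a lift exists. -/
noncomputable def localizedTransv (S : Submonoid A) (I : Ideal A) (u v : Fin n → B) :
    SteinbergGroup n A :=
  Classical.epsilon (LocalizedLift S I u v)

/-- The function sending `M` to the lift of `M⁻¹ x_{ij}(c - e c) M`, the transvection built from the
`i`-th column of `M⁻¹` and the `j`-th row of `M`. -/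
noncomputable def transvFun (S : Submonoid A) (I : Ideal A) (e : B →+* B) (i j : Fin n) (c : B)
    (M : GL (Fin n) B) : SteinbergGroup n A :=
  localizedTransv S I ((M⁻¹).1.col i) ((c - e c) • M.1.row j)

variable (D : UniquelyDivisible S I) {e : B →+* B} (he : ∀ c, c - e c ∈ I.map (algebraMap A B))
include D he

theorem localizedLift_transvFun {i j : Fin n} (hij : i ≠ j) (c : B) (M : GL (Fin n) B) :
    LocalizedLift S I ((M⁻¹).1.col i) ((c - e c) • M.1.row j) (transvFun S I e i j c M) :=
  Classical.epsilon_spec (exists_localizedLift_smul D ⟨_, row_dotProduct_col_inv_same M i⟩ (he c)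
    (row_dotProduct_col_inv_of_ne M hij.symm))

variable [Fact (4 ≤ n)]

theorem transvFun_add {i j : Fin n} (hij : i ≠ j) (r s : B) (M : GL (Fin n) B) :
    transvFun S I e i j (r + s) M =
      transvFun S I e i j r M * transvFun S I e i j s ((toGL (x i j (e r)))⁻¹ * M) := by
  have hs := localizedLift_transvFun D he hij s ((toGL (x i j (e r)))⁻¹ * M)
  rw [col_inv_toGL_x_inv_mul_of_ne hij _ _ hij, row_toGL_x_inv_mul_of_ne hij _ _ hij.symm] at hs
  refine (localizedLift_transvFun D he hij (r + s) M).unique D ?_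
  convert (localizedLift_transvFun D he hij r M).mul D hs using 1
  rw [← add_smul, map_add, add_sub_add_comm]

theorem transvFun_mul_comm {i j h k : Fin n} (hij : i ≠ j) (hhk : h ≠ k) (hjh : j ≠ h)
    (hik : i ≠ k) (r s : B) (M : GL (Fin n) B) :
    transvFun S I e i j r M * transvFun S I e h k s ((toGL (x i j (e r)))⁻¹ * M) =
      transvFun S I e h k s M * transvFun S I e i j r ((toGL (x h k (e s)))⁻¹ * M) := by
  have hr := localizedLift_transvFun D he hij r M
  have hs := localizedLift_transvFun D he hhk s M
  have hr' := localizedLift_transvFun D he hij r ((toGL (x h k (e s)))⁻¹ * M)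
  have hs' := localizedLift_transvFun D he hhk s ((toGL (x i j (e r)))⁻¹ * M)
  rw [col_inv_toGL_x_inv_mul_of_ne hhk _ _ hik, row_toGL_x_inv_mul_of_ne hhk _ _ hjh] at hr'
  rw [col_inv_toGL_x_inv_mul_of_ne hij _ _ hjh.symm,
    row_toGL_x_inv_mul_of_ne hij _ _ hik.symm] at hs'
  rw [hr'.unique D hr, hs'.unique D hs]
  exact hs.commute D hr
    (by rw [smul_dotProduct, row_dotProduct_col_inv_of_ne M hjh, smul_zero])
    (by rw [smul_dotProduct, row_dotProduct_col_inv_of_ne M hik.symm, smul_zero])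

theorem transvFun_mul_eq {i j k : Fin n} (hij : i ≠ j) (hjk : j ≠ k) (hik : i ≠ k) (r s : B)
    (M : GL (Fin n) B) :
    transvFun S I e i j r M * transvFun S I e j k s ((toGL (x i j (e r)))⁻¹ * M) =
      transvFun S I e i k (r * s) M *
        (transvFun S I e j k s ((toGL (x i k (e (r * s))))⁻¹ * M) *
          transvFun S I e i j r
            ((toGL (x j k (e s)))⁻¹ * ((toGL (x i k (e (r * s))))⁻¹ * M))) := by
  have hgjk' := localizedLift_transvFun D he hjk s ((toGL (x i j (e r)))⁻¹ * M)
  have hgik := localizedLift_transvFun D he hik (r * s) M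
  have hgjk := localizedLift_transvFun D he hjk s ((toGL (x i k (e (r * s))))⁻¹ * M)
  have hgij' := localizedLift_transvFun D he hij r
    ((toGL (x j k (e s)))⁻¹ * ((toGL (x i k (e (r * s))))⁻¹ * M))
  rw [col_inv_toGL_x_inv_mul_same hij, row_toGL_x_inv_mul_of_ne hij _ _ hik.symm] at hgjk'
  rw [col_inv_toGL_x_inv_mul_of_ne hik _ _ hjk, row_toGL_x_inv_mul_of_ne hik _ _ hik.symm] at hgjk
  rw [col_inv_toGL_x_inv_mul_of_ne hjk _ _ hik, row_toGL_x_inv_mul_same hjk,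
    col_inv_toGL_x_inv_mul_of_ne hik _ _ hik, row_toGL_x_inv_mul_of_ne hik _ _ hij.symm,
    row_toGL_x_inv_mul_of_ne hik _ _ hik.symm] at hgij'
  have hrs : r * s - e (r * s) = (r - e r) * (s - e s) + (r - e r) * e s + e r * (s - e s) := by
    rw [map_mul]
    ring
  rw [hrs] at hgik
  exact LocalizedLift.mul_eq_mul_mul D (row_dotProduct_col_inv_same M i)
    (row_dotProduct_col_inv_same M j) (row_dotProduct_col_inv_of_ne M hij)
    (row_dotProduct_col_inv_of_ne M hij.symm) (row_dotProduct_col_inv_of_ne M hik.symm)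
    (row_dotProduct_col_inv_of_ne M hjk.symm) (he r) (he s)
    (localizedLift_transvFun D he hij r M) hgjk' hgik hgjk hgij'

end TransvFun

section TransvHom

variable [Fact (4 ≤ n)]

/-- The homomorphism `x_{ij}(c) ↦ (transvFun S I e i j c, 1 + e(c) e_{ij})`, where the general
linear group acts on functions on itself by left translation. -/
noncomputable def transvHom (D : UniquelyDivisible S I) {e : B →+* B}
    (he : ∀ c, c - e c ∈ I.map (algebraMap A B)) :
    SteinbergGroup n B →*
      (GL (Fin n) B → SteinbergGroup n A) ⋊[mulAutArrow (G := GL (Fin n) B)] GL (Fin n) B :=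
  lift (fun i j _ c => ⟨transvFun S I e i j c, toGL (x i j (e c))⟩)
    (fun i j hij r s => SemidirectProduct.ext (funext (transvFun_add D he hij r s))
      (by rw [SemidirectProduct.mul_right, ← map_mul, ← x_add, map_add]))
    (fun i j h k hij hhk hjh hik r s => SemidirectProduct.ext
      (funext (transvFun_mul_comm D he hij hhk hjh hik r s))
      (by simp only [SemidirectProduct.mul_right, ← map_mul, (commute_x hjh hik _ _).eq]))
    (fun i j k hij hjk hik r s => SemidirectProduct.ext
      (by rw [mul_assoc]; exact funext (transvFun_mul_eq D he hij hjk hik r s))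
      (by simp only [SemidirectProduct.mul_right, ← map_mul, x_mul_x hij hjk hik]))

variable (D : UniquelyDivisible S I) {e : B →+* B}
  (he : ∀ c, c - e c ∈ I.map (algebraMap A B))

theorem transvHom_x {i j : Fin n} (hij : i ≠ j) (c : B) :
    transvHom D he (x i j c) = ⟨transvFun S I e i j c, toGL (x i j (e c))⟩ :=
  lift_x _ _ _ _ hij c

theorem transvHom_x_mul_left {i j : Fin n} (hij : i ≠ j) (c : B) (g : SteinbergGroup n B)
    (M : GL (Fin n) B) :
    (transvHom D he (x i j c * g)).left M =
      transvFun S I e i j c M * (transvHom D he g).left ((toGL (x i j (e c)))⁻¹ * M) := by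
  rw [map_mul, SemidirectProduct.mul_left, Pi.mul_apply, transvHom_x D he hij]
  rfl

theorem transvHom_left_mul_inv_toGL (g : SteinbergGroup n B) (k : SteinbergGroup n A)
    (M : GL (Fin n) B) :
    (transvHom D he g).left (M * (toGL (map (algebraMap A B) k))⁻¹) =
      k * (transvHom D he g).left M * k⁻¹ := by
  induction g using induction_left generalizing M with
  | one => simp
  | x_mul i j hij c g ih =>
    have hconj : transvFun S I e i j c (M * (toGL (map (algebraMap A B) k))⁻¹) =
        k * transvFun S I e i j c M * k⁻¹ := by
      have h := localizedLift_transvFun D he hij c (M * (toGL (map (algebraMap A B) k))⁻¹)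
      rw [col_inv_mul_inv_toGL, row_mul_inv_toGL, ← smul_vecMul, ← map_inv] at h
      exact h.unique D ((localizedLift_transvFun D he hij c M).conj k)
    rw [transvHom_x_mul_left D he hij, transvHom_x_mul_left D he hij, hconj, ← mul_assoc, ih]
    group

variable {ε : A →+* A} (hε : ∀ b, b - ε b ∈ I)
  (hεe : ∀ b, algebraMap A B (ε b) = e (algebraMap A B b))
include D he hε hεe

theorem transvFun_algebraMap_one {i j : Fin n} (hij : i ≠ j) (b : A) :
    transvFun S I e i j (algebraMap A B b) 1 = x i j (b - ε b) := by
  refine (localizedLift_transvFun D he hij (algebraMap A B b) 1).unique D ?_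
  convert LocalizedLift.x (B := B) (S := S) hij (hε b) using 1
  · rw [inv_one, Units.val_one, ← mulVec_single_one, one_mulVec]
  · rw [Units.val_one, ← single_one_vecMul, vecMul_one, ← Pi.single_smul', smul_eq_mul, mul_one,
      map_sub, hεe]

theorem transvHom_map_left_one_mul_map (g : SteinbergGroup n A) :
    (transvHom D he (map (algebraMap A B) g)).left 1 * map ε g = g := by
  induction g using induction_left with
  | one => simp
  | x_mul i j hij b g ih =>
    rw [map_mul, map_x, transvHom_x_mul_left D he hij, transvFun_algebraMap_one D he hε hεe hij,
      mul_one, ← one_mul (toGL _)⁻¹, ← hεe, ← map_x, transvHom_left_mul_inv_toGL, map_mul, map_x]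
    calc x i j (b - ε b) * (x i j (ε b) * (transvHom D he (map (algebraMap A B) g)).left 1
          * (x i j (ε b))⁻¹) * (x i j (ε b) * map ε g)
        = x i j (b - ε b) * x i j (ε b) *
            ((transvHom D he (map (algebraMap A B) g)).left 1 * map ε g) := by group
      _ = x i j b * g := by rw [← x_add, sub_add_cancel, ih]

end TransvHom

section Localization

variable {ε : A →+* A}

theorem sub_map_mem_map (hS : S ≤ S.comap ε) (hεS : ∀ s ∈ S, ε s = s) (hε : ∀ b, b - ε b ∈ I)
    (c : B) : c - IsLocalization.map B ε hS c ∈ I.map (algebraMap A B) := by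
  obtain ⟨⟨b, s⟩, hb⟩ := IsLocalization.surj S c
  have hs : IsUnit (algebraMap A B s) := IsLocalization.map_units B s
  have hεb := congrArg (IsLocalization.map B ε hS) hb
  rw [map_mul, IsLocalization.map_eq, IsLocalization.map_eq, hεS _ s.2] at hεb
  rw [← Ideal.mul_unit_mem_iff_mem _ hs, sub_mul, hb, hεb, ← map_sub]
  exact Ideal.mem_map_of_mem _ (hε b)

theorem eq_one_of_map_algebraMap_eq_one [Fact (4 ≤ n)] (D : UniquelyDivisible S I)
    (hεS : ∀ s ∈ S, ε s = s) (hε : ∀ b, b - ε b ∈ I) {g : SteinbergGroup n A} (hg : map ε g = 1)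
    (hg' : map (algebraMap A B) g = 1) : g = 1 := by
  have hS : S ≤ S.comap ε := fun s hs => by rwa [Submonoid.mem_comap, hεS s hs]
  have h := transvHom_map_left_one_mul_map D (sub_map_mem_map (B := B) hS hεS hε) hε
    (fun b => (IsLocalization.map_eq hS b).symm) g
  rw [hg, hg', map_one] at h
  exact h.symm

end Localization

end Lifting

/-! ### Direct limits and scaling -/

open Polynomial

section DirectLimit

variable {n : ℕ} {ι : Type} [Preorder ι] [IsDirectedOrder ι] [Nonempty ι] {F : ι → Type}
  [∀ k, CommRing (F k)] (f : ∀ k l, k ≤ l → F k →+* F l) [DirectedSystem F (f · · ·)]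

instance : DirectedSystem (fun k => SteinbergGroup n (F k)) fun k l h => map (f k l h) where
  map_self k g := by
    convert map_id g
    exact RingHom.ext fun a => DirectedSystem.map_self' f a
  map_map m l k hkl hlm g := by
    rw [map_map]
    congr 1
    exact congrArg _ (RingHom.ext fun a => DirectedSystem.map_map' f hkl hlm a)

/-- The comparison homomorphism showing that the Steinberg group commutes with direct limits. -/
noncomputable def toDirectLimit : SteinbergGroup n (DirectLimit F f) →*
    DirectLimit (fun k => SteinbergGroup n (F k)) fun k l h => map (f k l h) :=
  lift (fun i j _ => DirectLimit.map f _ (fun _ => x i j) fun k l h r => map_x (f k l h) i j r)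
    (fun i j _ => DirectLimit.induction₂ f fun k r s => by
      simp only [DirectLimit.add_def, DirectLimit.map_def, DirectLimit.mul_def, x_add])
    (fun i j h l _ _ hjh hil => DirectLimit.induction₂ f fun k r s => by
      simp only [Commute, SemiconjBy, DirectLimit.map_def, DirectLimit.mul_def,
        (commute_x hjh hil r s).eq])
    (fun i j l hij hjl hil => DirectLimit.induction₂ f fun k r s => by
      simp only [DirectLimit.map_def, DirectLimit.mul_def, x_mul_x hij hjl hil r s])

theorem toDirectLimit_map_of (k : ι) (g : SteinbergGroup n (F k)) :
    toDirectLimit f (map (DirectLimit.Ring.of F f k) g) = ⟦⟨k, g⟩⟧ := by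
  induction g using induction_left with
  | one => rw [map_one, map_one, DirectLimit.one_def k]
  | x_mul i j hij r g ih =>
    rw [map_mul, map_mul, ih, map_x, toDirectLimit, lift_x _ _ _ _ hij,
      DirectLimit.Ring.of_apply, DirectLimit.map_def, DirectLimit.mul_def]

theorem exists_map_eq_map_of_map_of_eq {k : ι} {g h : SteinbergGroup n (F k)}
    (hgh : map (DirectLimit.Ring.of F f k) g = map (DirectLimit.Ring.of F f k) h) :
    ∃ l, ∃ hkl : k ≤ l, map (f k l hkl) g = map (f k l hkl) h := by
  have hlim := congrArg (toDirectLimit f) hgh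
  rw [toDirectLimit_map_of, toDirectLimit_map_of] at hlim
  obtain ⟨l, hkl, _, hl⟩ := Quotient.eq.mp hlim
  exact ⟨l, hkl, hl⟩

end DirectLimit

section ScaleHom

variable {A : Type} [CommRing A]

/-- The endomorphism `p(Z) ↦ p(aZ)` of `A[Z]`. -/
noncomputable def scaleHom (a : A) : A[X] →+* A[X] :=
  compRingHom (C a * X)

theorem coeff_scaleHom (a : A) (p : A[X]) (m : ℕ) : (scaleHom a p).coeff m = p.coeff m * a ^ m :=
  comp_C_mul_X_coeff

theorem scaleHom_C (a b : A) : scaleHom a (C b) = C b :=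
  C_comp

theorem scaleHom_X (a : A) : scaleHom a X = C a * X :=
  X_comp

theorem scaleHom_one (p : A[X]) : scaleHom 1 p = p := by
  ext m
  rw [coeff_scaleHom, one_pow, mul_one]

theorem scaleHom_scaleHom (a b : A) (p : A[X]) :
    scaleHom a (scaleHom b p) = scaleHom (a * b) p := by
  ext m
  simp only [coeff_scaleHom, mul_pow]
  ring

theorem C_mul_X_mul_scaleHom_divX {p : A[X]} (hp : p.coeff 0 = 0) (a : A) :
    C a * (X * scaleHom a p.divX) = scaleHom a p := by
  conv_rhs => rw [← X_mul_divX_add p, hp, C_0, add_zero, map_mul, scaleHom_X]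
  rw [mul_assoc]

theorem scaleHom_eq_zero {a : A} {p : A[X]} (hp : p.coeff 0 = 0) (h : C a * p = 0) :
    scaleHom a p = 0 := by
  rw [← C_mul_X_mul_scaleHom_divX hp, mul_left_comm, ← scaleHom_C a a, ← map_mul, ← divX_C_mul, h,
    divX_zero, map_zero, mul_zero]

end ScaleHom

section ScaleLimit

variable {A : Type} [CommRing A] {P : Submonoid A}

instance isDirectedOrder_multiset (α : Type*) : IsDirectedOrder (Multiset α) :=
  ⟨fun s t => ⟨s + t, Multiset.le_add_right s t, Multiset.le_add_left t s⟩⟩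

open Classical in
/-- The transition map `Z ↦ (∏ (l - k)) Z` of the directed system of copies of `A[Z]` indexed by the
finite multisets of elements of `P`. -/
noncomputable def scaleTransition (k l : Multiset P) (_ : k ≤ l) : A[X] →+* A[X] :=
  scaleHom ((l - k).prod : P)

open Classical in
instance : DirectedSystem (fun _ : Multiset P => A[X]) fun k l h => scaleTransition k l h where
  map_self k p := by
    rw [scaleTransition, tsub_self, Multiset.prod_zero, Submonoid.coe_one, scaleHom_one]
  map_map m l k hkl hlm p := by
    rw [scaleTransition, scaleTransition, scaleTransition, scaleHom_scaleHom, ← Submonoid.coe_mul,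
      ← Multiset.prod_add, tsub_add_tsub_cancel hlm hkl]

theorem scaleTransition_C {k l : Multiset P} (h : k ≤ l) (a : A) :
    scaleTransition k l h (C a) = C a :=
  scaleHom_C _ a

open Classical in
theorem scaleTransition_zero (l : Multiset P) (h : 0 ≤ l) :
    scaleTransition 0 l h = scaleHom (l.prod : A) := by
  rw [scaleTransition, tsub_zero]

open Classical in
theorem scaleTransition_add_singleton (k : Multiset P) (a : P) (h : k ≤ k + {a}) :
    scaleTransition k (k + {a}) h = scaleHom (a : A) := by
  rw [scaleTransition, add_tsub_cancel_left, Multiset.prod_singleton]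

variable (P) in
/-- The direct limit of copies of `A[Z]` along the maps `Z ↦ aZ` for `a ∈ P`, that is, the ring
`A ⊕ Z A_P[Z]` of polynomials over `A_P` with constant term in `A`. -/
abbrev ScaleLimit : Type :=
  DirectLimit (fun _ : Multiset P => A[X]) scaleTransition

namespace ScaleLimit

/-- The canonical map from the `k`-th copy of `A[Z]` to the limit. -/
noncomputable abbrev of (k : Multiset P) : A[X] →+* ScaleLimit P :=
  DirectLimit.Ring.of _ scaleTransition k

theorem of_scaleTransition {k l : Multiset P} (h : k ≤ l) (p : A[X]) :
    of l (scaleTransition k l h p) = of k p :=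
  DirectLimit.Ring.of_f (G := fun _ : Multiset P => A[X]) (f := scaleTransition) h p

theorem of_add_singleton (k : Multiset P) (a : P) (p : A[X]) :
    of (k + {a}) (scaleHom (a : A) p) = of k p := by
  rw [← scaleTransition_add_singleton k a (Multiset.le_add_right k _), of_scaleTransition]

theorem of_C (k l : Multiset P) (a : A) : of k (C a) = of l (C a) := by
  have h (k : Multiset P) : of 0 (C a) = of k (C a) := by
    rw [← of_scaleTransition (Multiset.zero_le k), scaleTransition_C]
  rw [← h k, h l]

theorem of_eq_zero {k : Multiset P} {p : A[X]} :
    of k p = 0 ↔ ∃ l, ∃ h : k ≤ l, scaleTransition k l h p = 0 :=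
  DirectLimit.exists_eq_zero _

variable (P) in
/-- The constant polynomials in `ScaleLimit P`. -/
noncomputable def const : A →+* ScaleLimit P :=
  (of 0).comp C

theorem const_eq_of (k : Multiset P) (a : A) : const P a = of k (C a) :=
  of_C 0 k a

variable (P) in
/-- The endomorphism `p ↦ p(0)` of `ScaleLimit P`. -/
noncomputable def evalZero : ScaleLimit P →+* ScaleLimit P :=
  DirectLimit.Ring.lift _ _ _ (fun _ => (const P).comp constantCoeff) fun k l h p => by
    rw [RingHom.comp_apply, RingHom.comp_apply, constantCoeff_apply, scaleTransition,
      coeff_scaleHom, pow_zero, mul_one, constantCoeff_apply]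

theorem evalZero_of (k : Multiset P) (p : A[X]) : evalZero P (of k p) = const P (p.coeff 0) :=
  DirectLimit.Ring.lift_of ..

theorem evalZero_const (a : A) : evalZero P (const P a) = const P a := by
  rw [const, RingHom.comp_apply, evalZero_of, coeff_C_zero]
  rfl

theorem sub_evalZero_mem_ker (b : ScaleLimit P) : b - evalZero P b ∈ RingHom.ker (evalZero P) := by
  induction b using DirectLimit.induction with | _ k p
  change of k p - evalZero P (of k p) ∈ _
  rw [RingHom.mem_ker, map_sub, evalZero_of, evalZero_const, sub_self]

theorem of_mem_ker_evalZero {k : Multiset P} {p : A[X]} :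
    of k p ∈ RingHom.ker (evalZero P) ↔ p.coeff 0 = 0 := by
  rw [RingHom.mem_ker, evalZero_of, const_eq_of k, of_eq_zero]
  simp only [scaleTransition_C, C_eq_zero, exists_prop]
  exact ⟨fun ⟨_, _, h⟩ => h, fun h => ⟨k, le_rfl, h⟩⟩

variable (P) in
theorem uniquelyDivisible : UniquelyDivisible (P.map (const P)) (RingHom.ker (evalZero P)) where
  exists_mul_eq := by
    rintro _ ⟨a, ha, rfl⟩ b hb
    induction b using DirectLimit.induction with | _ k p
    have hp : p.coeff 0 = 0 := of_mem_ker_evalZero.mp hb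
    refine ⟨of (k + {⟨a, ha⟩}) (X * scaleHom a p.divX),
      of_mem_ker_evalZero.mpr (coeff_X_mul_zero _), ?_⟩
    rw [const_eq_of (k + {⟨a, ha⟩}), ← map_mul, C_mul_X_mul_scaleHom_divX hp]
    exact of_add_singleton k ⟨a, ha⟩ p
  eq_zero_of_mul_eq_zero := by
    rintro _ ⟨a, ha, rfl⟩ b hb hab
    induction b using DirectLimit.induction with | _ k p
    have hp : p.coeff 0 = 0 := of_mem_ker_evalZero.mp hb
    change const P a * of k p = 0 at hab
    rw [const_eq_of k, ← map_mul, of_eq_zero] at hab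
    obtain ⟨l, hkl, hl⟩ := hab
    rw [map_mul, scaleTransition_C] at hl
    have hq : (scaleTransition k l hkl p).coeff 0 = 0 := by
      rw [scaleTransition, coeff_scaleHom, hp, zero_mul]
    calc of k p = of l (scaleTransition k l hkl p) := (of_scaleTransition hkl p).symm
      _ = of (l + {⟨a, ha⟩}) (scaleHom a (scaleTransition k l hkl p)) :=
        (of_add_singleton l ⟨a, ha⟩ _).symm
      _ = 0 := by rw [scaleHom_eq_zero hq hl, map_zero]

end ScaleLimit

end ScaleLimit

/-! ### Quillen's ideal -/

section Shift

variable {R : Type} [CommRing R] {n : ℕ}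

/-- The homomorphism `p(X) ↦ p(X + aZ)` from `R[X]` to `R[X][Z]`. -/
noncomputable def shiftHom (a : R) : R[X] →+* R[X][X] :=
  eval₂RingHom (C.comp C) (C X + C (C a) * X)

theorem shiftHom_C (a r : R) : shiftHom a (C r) = C (C r) :=
  eval₂_C _ _

theorem shiftHom_X (a : R) : shiftHom a X = C X + C (C a) * X :=
  eval₂_X _ _

theorem coeff_zero_shiftHom (a : R) (p : R[X]) : (shiftHom a p).coeff 0 = p := by
  have : constantCoeff.comp (shiftHom a) = RingHom.id R[X] :=
    ringHom_ext (fun r => by simp [shiftHom_C]) (by simp [shiftHom_X])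
  exact DFunLike.congr_fun this p

theorem scaleHom_comp_shiftHom (c a : R) :
    (scaleHom (C c)).comp (shiftHom a) = shiftHom (c * a) :=
  ringHom_ext (fun r => by simp [shiftHom_C, scaleHom_C])
    (by simp [shiftHom_X, scaleHom_C, scaleHom_X]; ring)

theorem eval₂RingHom_shiftHom_comp_shiftHom (a b : R) :
    (eval₂RingHom (shiftHom b) X).comp (shiftHom a) = shiftHom (a + b) :=
  ringHom_ext (fun r => by simp [shiftHom_C]) (by simp [shiftHom_X, shiftHom_C]; ring)

/-- Quillen's ideal of `g(X) ∈ St(n, R[X])`: the `a ∈ R` with `g(X + aZ) = g(X)` in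
`St(n, R[X][Z])`. -/
noncomputable def quillenIdeal (g : SteinbergGroup n R[X]) : Ideal R where
  carrier := {a | map (shiftHom a) g = map (shiftHom 0) g}
  zero_mem' := rfl
  add_mem' {a b} ha hb :=
    calc map (shiftHom (a + b)) g
        = map (eval₂RingHom (shiftHom b) X) (map (shiftHom a) g) := by
          rw [map_map, eval₂RingHom_shiftHom_comp_shiftHom]
      _ = map (eval₂RingHom (shiftHom b) X) (map (shiftHom 0) g) := congrArg _ ha
      _ = map (shiftHom b) g := by rw [map_map, eval₂RingHom_shiftHom_comp_shiftHom, zero_add]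
      _ = map (shiftHom 0) g := hb
  smul_mem' c a ha :=
    calc map (shiftHom (c * a)) g
        = map (scaleHom (C c)) (map (shiftHom a) g) := by rw [map_map, scaleHom_comp_shiftHom]
      _ = map (scaleHom (C c)) (map (shiftHom 0) g) := congrArg _ ha
      _ = map (shiftHom 0) g := by rw [map_map, scaleHom_comp_shiftHom, mul_zero]

theorem mem_quillenIdeal {g : SteinbergGroup n R[X]} {a : R} :
    a ∈ quillenIdeal g ↔ map (shiftHom a) g = map (shiftHom 0) g :=
  Iff.rfl

theorem eq_map_C_of_one_mem_quillenIdeal {g : SteinbergGroup n R[X]} (h : 1 ∈ quillenIdeal g) :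
    g = map C (map (evalRingHom 0) g) := by
  let τ : R[X][X] →+* R[X] := eval₂RingHom (C.comp (evalRingHom 0)) X
  have hτ_one : τ.comp (shiftHom 1) = RingHom.id R[X] :=
    ringHom_ext (fun r => by simp [shiftHom_C, τ]) (by simp [shiftHom_X, τ])
  have hτ_zero : τ.comp (shiftHom 0) = C.comp (evalRingHom (0 : R)) :=
    ringHom_ext (fun r => by simp [shiftHom_C, τ]) (by simp [shiftHom_X, τ])
  calc g = map τ (map (shiftHom 1) g) := by rw [map_map, hτ_one, map_id]
    _ = map τ (map (shiftHom 0) g) := congrArg _ (mem_quillenIdeal.mp h)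
    _ = map C (map (evalRingHom 0) g) := by rw [map_map, hτ_zero, map_map]

end Shift

section LocalGlobal

variable {R : Type} [CommRing R] {n : ℕ} {P : Submonoid R}

theorem map_algebraMap_map_eq_one {A : Type} [CommRing A] {S : Submonoid A} (ι : R →+* A)
    (hι : P ≤ S.comap ι) (f : R[X] →+* A) (hf : ∀ r, f (C r) = ι r) {g : SteinbergGroup n R[X]}
    (hg : map (mapRingHom (algebraMap R (Localization P))) g = 1) :
    map (algebraMap A (Localization S)) (map f g) = 1 := by
  let θ : Localization P →+* Localization S := IsLocalization.map (Localization S) ι hι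
  have hθ : (algebraMap A (Localization S)).comp f =
      (eval₂RingHom θ (algebraMap A (Localization S) (f X))).comp
        (mapRingHom (algebraMap R (Localization P))) :=
    ringHom_ext (fun r => by simp [θ, hf]) (by simp)
  rw [map_map, hθ, ← map_map, hg, map_one]

theorem map_of_shiftHom_eq [Fact (4 ≤ n)] {g : SteinbergGroup n R[X]}
    (hg : map (mapRingHom (algebraMap R (Localization P))) g = 1) (a b : R) :
    map (ScaleLimit.of (P := P.map C) 0) (map (shiftHom a) g) =
      map (ScaleLimit.of 0) (map (shiftHom b) g) := by
  let S : Submonoid (ScaleLimit (P.map (C : R →+* R[X]))) := (P.map C).map (ScaleLimit.const _)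
  have hloc (a : R) : map (algebraMap _ (Localization S))
      (map ((ScaleLimit.of 0).comp (shiftHom a)) g) = 1 :=
    map_algebraMap_map_eq_one (S := S) ((ScaleLimit.const (P.map C)).comp C)
      (fun r hr => ⟨C r, ⟨r, hr, rfl⟩, rfl⟩) _
      (fun r => by simp only [RingHom.comp_apply, shiftHom_C, ScaleLimit.const_eq_of 0]) hg
  have hzero : (ScaleLimit.evalZero (P.map C)).comp ((ScaleLimit.of 0).comp (shiftHom a)) =
      (ScaleLimit.evalZero (P.map C)).comp ((ScaleLimit.of 0).comp (shiftHom b)) :=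
    RingHom.ext fun p => by
      simp only [RingHom.comp_apply, ScaleLimit.evalZero_of, coeff_zero_shiftHom]
  rw [map_map, map_map, ← mul_inv_eq_one]
  refine eq_one_of_map_algebraMap_eq_one (B := Localization S)
    (ScaleLimit.uniquelyDivisible (P.map C)) ?_ ScaleLimit.sub_evalZero_mem_ker ?_ ?_
  · rintro _ ⟨c, -, rfl⟩
    exact ScaleLimit.evalZero_const c
  · rw [map_mul, map_inv, map_map, map_map, hzero, mul_inv_cancel]
  · rw [map_mul, map_inv, hloc, hloc, mul_inv_cancel]

theorem exists_mem_quillenIdeal [Fact (4 ≤ n)] {g : SteinbergGroup n R[X]}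
    (hg : map (mapRingHom (algebraMap R (Localization P))) g = 1) :
    ∃ a ∈ P, a ∈ quillenIdeal g := by
  obtain ⟨l, hl, h⟩ := exists_map_eq_map_of_map_of_eq scaleTransition (map_of_shiftHom_eq hg 1 0)
  obtain ⟨a, ha, hal⟩ := l.prod.2
  rw [scaleTransition_zero, ← hal, map_map, map_map] at h
  change map ((scaleHom (C a)).comp _) g = map ((scaleHom (C a)).comp _) g at h
  rw [scaleHom_comp_shiftHom, scaleHom_comp_shiftHom, mul_one, mul_zero] at h
  exact ⟨a, ha, h⟩

theorem quillenIdeal_eq_top [Fact (4 ≤ n)] {g : SteinbergGroup n R[X]}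
    (hg : ∀ (M : Ideal R) [M.IsMaximal],
      map (mapRingHom (algebraMap R (Localization.AtPrime M))) g = 1) : quillenIdeal g = ⊤ := by
  by_contra hne
  obtain ⟨M, hM, hle⟩ := Ideal.exists_le_maximal _ hne
  obtain ⟨a, haM, ha⟩ := exists_mem_quillenIdeal (hg M)
  exact haM (hle ha)

theorem eq_one_of_forall_map_localization_eq_one [Fact (4 ≤ n)] {g : SteinbergGroup n R[X]}
    (hg₀ : map (evalRingHom 0) g = 1)
    (hg : ∀ (M : Ideal R) [M.IsMaximal],
      map (mapRingHom (algebraMap R (Localization.AtPrime M))) g = 1) : g = 1 := by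
  have hone : 1 ∈ quillenIdeal g := quillenIdeal_eq_top hg ▸ Submodule.mem_top
  rw [eq_map_C_of_one_mem_quillenIdeal hone, hg₀, map_one]

end LocalGlobal

end SteinbergGroup

theorem stmt1 (n : ℕ) (hn : 4 ≤ n) (R : Type) [CommRing R]
    (g : SteinbergGroup n (Polynomial R))
    (ev0 : SteinbergGroup n (Polynomial R) →* SteinbergGroup n R)
    (hev0 : ∀ (i j : Fin n) (hij : i ≠ j) (p : Polynomial R),
      ev0 (stx n (Polynomial R) i j hij p) = stx n R i j hij (Polynomial.eval 0 p))
    (hg : ev0 g = 1) :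
    g = 1 ↔
      ∀ (M : Ideal R) [M.IsMaximal]
        (lM : SteinbergGroup n (Polynomial R) →*
          SteinbergGroup n (Polynomial (Localization.AtPrime M))),
        (∀ (i j : Fin n) (hij : i ≠ j) (p : Polynomial R),
          lM (stx n (Polynomial R) i j hij p) =
            stx n (Polynomial (Localization.AtPrime M)) i j hij
              (p.map (algebraMap R (Localization.AtPrime M)))) →
        lM g = 1 := by
  have : Fact (4 ≤ n) := ⟨hn⟩
  refine ⟨by rintro rfl M _ lM -; exact map_one lM, fun h => ?_⟩
  refine SteinbergGroup.eq_one_of_forall_map_localization_eq_one ?_ fun M _ => h M _ ?_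
  · have hmap : SteinbergGroup.map (Polynomial.evalRingHom 0) = ev0 :=
      SteinbergGroup.hom_ext fun i j hij p => by
        rw [SteinbergGroup.map_x, SteinbergGroup.x_of_ne hij, SteinbergGroup.x_of_ne hij, hev0,
          Polynomial.coe_evalRingHom]
    rw [hmap, hg]
  · intro i j hij p
    rw [← SteinbergGroup.x_of_ne hij, ← SteinbergGroup.x_of_ne hij, SteinbergGroup.map_x,
      Polynomial.coe_mapRingHom]
end
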